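/- Let X be a reflexive rearrangement invariant space on [0,1] which has the weak Banach-Saks property, and let K : [0,1]×[0,1] → [0,∞] be a measurable kernel such that T_K(χ_{[0,1]}) ∈ X. Then the Banach function space [T_K,X] := {f ∈ L⁰[0,1] : T_K(|f|) ∈ X}, with norm ‖f‖_{[T_K,X]} := ‖T_K(|f|)‖_X, has both the subsequence splitting property and the weak Banach-Saks property. -/

import Mathlib

open MeasureTheory Filter Topology
open scoped ENNReal

noncomputable section

namespace Paper

variable {Ω : Type*} [MeasurableSpace Ω]
variable {X : Type*} [NormedAddCommGroup X] [NormedSpace ℝ X]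

/-- The signed measure `x* ∘ m` for a functional `x*` and vector measure `m`. -/
def dualApply (m : VectorMeasure Ω X) (x : X →L[ℝ] ℝ) : SignedMeasure Ω :=
  m.mapRange x.toLinearMap.toAddMonoidHom x.continuous

/-- The semivariation `‖m‖(A)` of a vector measure. -/
def semivar (m : VectorMeasure Ω X) (A : Set Ω) : ℝ≥0∞ :=
  ⨆ x : {x : X →L[ℝ] ℝ // ‖x‖ ≤ 1}, (dualApply m x.1).totalVariation A

/-- `P` holds `‖m‖`-almost everywhere. -/
def MAE (m : VectorMeasure Ω X) (P : Ω → Prop) : Prop :=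
  ∃ N : Set Ω, MeasurableSet N ∧ semivar m N = 0 ∧ ∀ ω ∉ N, P ω

/-- The integral `∫_A f ds` of a real function with respect to a signed measure. -/
def sIntegral (s : SignedMeasure Ω) (f : Ω → ℝ) (A : Set Ω) : ℝ :=
  (∫ ω in A, f ω ∂s.toJordanDecomposition.posPart) -
    ∫ ω in A, f ω ∂s.toJordanDecomposition.negPart

/-- `f` is integrable with respect to the vector measure `m` (Bartle-Dunford-Schwartz). -/
def MIntegrable (m : VectorMeasure Ω X) (f : Ω → ℝ) : Prop :=
  Measurable f ∧
  (∀ x : X →L[ℝ] ℝ, Integrable f ((dualApply m x).totalVariation)) ∧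
  (∀ A : Set Ω, MeasurableSet A →
    ∃ v : X, ∀ x : X →L[ℝ] ℝ, x v = sIntegral (dualApply m x) f A)

open Classical in
/-- The vector integral `∫_A f dm ∈ X`. -/
def mIntegral (m : VectorMeasure Ω X) (f : Ω → ℝ) (A : Set Ω) : X :=
  if h : ∃ v : X, ∀ x : X →L[ℝ] ℝ, x v = sIntegral (dualApply m x) f A then h.choose
  else 0

/-- The norm of `L¹(m)`: `‖f‖ = sup_{‖x*‖ ≤ 1} ∫ |f| d|x*m|`. -/
def mNorm (m : VectorMeasure Ω X) (f : Ω → ℝ) : ℝ :=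
  ⨆ x : {x : X →L[ℝ] ℝ // ‖x‖ ≤ 1}, ∫ ω, |f ω| ∂(dualApply m x.1).totalVariation

/-- The vector measure `m` is separable: the pseudometric space `(Σ, d_m)`,
`d_m(A,B) = ‖m‖(A △ B)`, is separable. -/
def SeparableVM (m : VectorMeasure Ω X) : Prop :=
  ∃ D : Set (Set Ω), D.Countable ∧ (∀ B ∈ D, MeasurableSet B) ∧
    ∀ A : Set Ω, MeasurableSet A → ∀ ε : ℝ, 0 < ε →
      ∃ B ∈ D, semivar m (symmDiff A B) < ENNReal.ofReal ε

section FunctionSpace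

variable {S : Type*} [MeasurableSpace S]

/-- `T` is a bounded linear functional on the function space determined by the
membership predicate `mem` and the norm `nrm`. -/
def IsBddLinFunctional (mem : (S → ℝ) → Prop) (nrm : (S → ℝ) → ℝ)
    (T : (S → ℝ) → ℝ) : Prop :=
  (∀ f g, mem f → mem g → T (f + g) = T f + T g) ∧
  (∀ (c : ℝ) (f), mem f → T (c • f) = c * T f) ∧
  (∃ C : ℝ, ∀ f, mem f → |T f| ≤ C * nrm f)

/-- `f` is a weakly null sequence in the function space `(mem, nrm)`. -/
def WeaklyNullSeq (mem : (S → ℝ) → Prop) (nrm : (S → ℝ) → ℝ) (f : ℕ → S → ℝ) : Prop :=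
  ∀ T : (S → ℝ) → ℝ, IsBddLinFunctional mem nrm T →
    Tendsto (fun n => T (f n)) atTop (nhds 0)

/-- The set `K` has uniformly absolutely continuous norm in the function space with
norm `nrm` over the measure `μ`. -/
def UnifACNorm (μ : Measure S) (nrm : (S → ℝ) → ℝ) (K : Set (S → ℝ)) : Prop :=
  ∀ ε : ℝ, 0 < ε → ∃ δ : ℝ, 0 < δ ∧ ∀ A : Set S, MeasurableSet A →
    μ A < ENNReal.ofReal δ → ∀ f ∈ K, nrm (A.indicator f) ≤ ε

/-- The subsequence splitting property for the function space `(mem, nrm)` over `μ`. -/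
def HasSSP (μ : Measure S) (mem : (S → ℝ) → Prop) (nrm : (S → ℝ) → ℝ) : Prop :=
  ∀ f : ℕ → S → ℝ, (∀ n, mem (f n)) → (∃ C : ℝ, ∀ n, nrm (f n) ≤ C) →
    ∃ σ : ℕ → ℕ, StrictMono σ ∧
      ∃ g h : ℕ → S → ℝ,
        (∀ n, mem (g n)) ∧ (∀ n, mem (h n)) ∧
        (∀ n, f (σ n) = g n + h n) ∧
        (∀ n, (fun s => g n s * h n s) =ᵐ[μ] 0) ∧
        UnifACNorm μ nrm (Set.range g) ∧
        (∀ i j, i ≠ j → (fun s => h i s * h j s) =ᵐ[μ] 0)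

/-- The weak Banach-Saks property for the function space `(mem, nrm)`. -/
def HasWBS (mem : (S → ℝ) → Prop) (nrm : (S → ℝ) → ℝ) : Prop :=
  ∀ f : ℕ → S → ℝ, (∀ n, mem (f n)) → WeaklyNullSeq mem nrm f →
    ∃ σ : ℕ → ℕ, StrictMono σ ∧
      Tendsto (fun n : ℕ => nrm ((n : ℝ)⁻¹ • ∑ k ∈ Finset.range n, f (σ k))) atTop (nhds 0)

end FunctionSpace

/-- A Banach function space over `(S, μ)`: an (abstract) normed space `X` together with
a linear embedding `J` into measurable functions on `S`, separating points modulo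
`μ`-null sets and satisfying the ideal property. -/
structure BFS (S : Type*) [MeasurableSpace S] (μ : Measure S)
    (X : Type*) [NormedAddCommGroup X] [NormedSpace ℝ X] where
  J : X →ₗ[ℝ] (S → ℝ)
  aemeasurable : ∀ x : X, AEMeasurable (J x) μ
  eq_zero : ∀ x : X, J x =ᵐ[μ] 0 → x = 0
  ideal : ∀ (x : X) (g : S → ℝ), AEMeasurable g μ →
    (∀ᵐ s ∂μ, |g s| ≤ |J x s|) → ∃ y : X, J y =ᵐ[μ] g ∧ ‖y‖ ≤ ‖x‖

variable {S : Type*} [MeasurableSpace S] {μ : Measure S}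

/-- The set `K ⊆ X` has uniformly absolutely continuous norm in the B.f.s. `X`. -/
def BFS.UnifAC (B : BFS S μ X) (K : Set X) : Prop :=
  ∀ ε : ℝ, 0 < ε → ∃ δ : ℝ, 0 < δ ∧ ∀ A : Set S, MeasurableSet A →
    μ A < ENNReal.ofReal δ → ∀ x ∈ K, ∀ y : X, B.J y =ᵐ[μ] A.indicator (B.J x) → ‖y‖ ≤ ε

/-- The B.f.s. `X` has absolutely continuous norm. -/
def BFS.ACNorm (B : BFS S μ X) : Prop :=
  ∀ x : X, ∀ ε : ℝ, 0 < ε → ∃ δ : ℝ, 0 < δ ∧ ∀ A : Set S, MeasurableSet A →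
    μ A < ENNReal.ofReal δ → ∀ y : X, B.J y =ᵐ[μ] A.indicator (B.J x) → ‖y‖ ≤ ε

/-- The subsequence splitting property for the B.f.s. `X`. -/
def BFS.SSP (B : BFS S μ X) : Prop :=
  ∀ f : ℕ → X, (∃ C : ℝ, ∀ n, ‖f n‖ ≤ C) →
    ∃ σ : ℕ → ℕ, StrictMono σ ∧
      ∃ g h : ℕ → X,
        (∀ n, f (σ n) = g n + h n) ∧
        (∀ n, (fun s => B.J (g n) s * B.J (h n) s) =ᵐ[μ] 0) ∧
        B.UnifAC (Set.range g) ∧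
        (∀ i j, i ≠ j → (fun s => B.J (h i) s * B.J (h j) s) =ᵐ[μ] 0)

/-- The weak Banach-Saks property for a normed space `Z`: every weakly null sequence has a
subsequence whose arithmetic means converge to zero in norm. -/
def WeakBanachSaks (Z : Type*) [NormedAddCommGroup Z] [NormedSpace ℝ Z] : Prop :=
  ∀ z : ℕ → Z, (∀ φ : Z →L[ℝ] ℝ, Tendsto (fun n => φ (z n)) atTop (nhds 0)) →
    ∃ σ : ℕ → ℕ, StrictMono σ ∧
      Tendsto (fun n : ℕ => ‖(n : ℝ)⁻¹ • ∑ k ∈ Finset.range n, z (σ k)‖) atTop (nhds 0)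


/-- Lebesgue measure on `[0,1]`. -/
def mu01 : Measure ℝ := volume.restrict (Set.Icc (0 : ℝ) 1)

/-- The B.f.s. `X` on `[0,1]` is rearrangement invariant: if the distribution function of a
measurable `g` is dominated by that of (the function representing) `x ∈ X` (equivalently,
`g* ≤ (J x)*`), then `g` represents an element `y ∈ X` with `‖y‖ ≤ ‖x‖`. -/
def BFS.RI {X : Type*} [NormedAddCommGroup X] [NormedSpace ℝ X]
    (B : BFS ℝ mu01 X) : Prop :=
  ∀ (x : X) (g : ℝ → ℝ), AEMeasurable g mu01 →
    (∀ τ : ℝ, 0 < τ → mu01 {s | τ < |g s|} ≤ mu01 {s | τ < |B.J x s|}) →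
    ∃ y : X, B.J y =ᵐ[mu01] g ∧ ‖y‖ ≤ ‖x‖

/-- The kernel operator `T_K` applied to `|f|`: `T_K(|f|)(s) = ∫₀¹ K(s,y) |f(y)| dy`. -/
def TKabs (K : ℝ → ℝ → ℝ≥0∞) (f : ℝ → ℝ) (s : ℝ) : ℝ≥0∞ :=
  ∫⁻ y in Set.Icc (0 : ℝ) 1, K s y * ENNReal.ofReal |f y|

/-- Membership in the optimal domain `[T_K, X] = {f : T_K(|f|) ∈ X}`. -/
def memTK {X : Type*} [NormedAddCommGroup X] [NormedSpace ℝ X]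
    (B : BFS ℝ mu01 X) (K : ℝ → ℝ → ℝ≥0∞) (f : ℝ → ℝ) : Prop :=
  AEMeasurable f mu01 ∧
    ∃ x : X, ∀ᵐ s ∂mu01, TKabs K f s ≠ ⊤ ∧ (TKabs K f s).toReal = B.J x s

/-- The norm `‖f‖_{[T_K,X]} = ‖T_K(|f|)‖_X` on the optimal domain. -/
def nrmTK {X : Type*} [NormedAddCommGroup X] [NormedSpace ℝ X]
    (B : BFS ℝ mu01 X) (K : ℝ → ℝ → ℝ≥0∞) (f : ℝ → ℝ) : ℝ :=
  sInf {r : ℝ | ∃ x : X,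
    (∀ᵐ s ∂mu01, TKabs K f s ≠ ⊤ ∧ (TKabs K f s).toReal = B.J x s) ∧ r = ‖x‖}

/-!
The norm of a reflexive Banach function space extends to a function norm on `[0, ∞]`-valued
functions that has the Levi property and is order continuous, and `u ↦ ‖T_K u‖` inherits both.

*Splitting.* If a bounded sequence has no splitting subsequence, then some subsequence `uₙ` has, for
one `ε > 0` and arbitrarily many disjoint ranges of values, slabs `uₙ χ_{a < uₙ ≤ b}` of norm at
least `ε`. In a rearrangement invariant space this is impossible because along a further subsequence
the distribution functions of `uₙ` converge to that of a single function in the space, whose slabs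
become small. In `[T_K, X]` it is impossible because the images of the slabs under `T_K` are
nonnegative with sum at most `T_K uₙ`; by the splitting property of `X` they are dominated by a
sequence with uniformly absolutely continuous norm up to sets of small measure, where each of them
is at most a multiple of `T_K 1`.

*Weak Banach-Saks property.* A weakly null sequence splits as `fₙ = gₙ + hₙ`. Truncations of the
equi-integrable part `gₙ` are bounded in `L²`, where Cesàro means of a subsequence converge. The
positive and negative parts of the disjoint `hₙ` are restrictions of `fₙ`, up to a small error to a
set not depending on `n`, so `|hₙ|` is weakly null. On nonnegative functions `T_K` preserves the
norm, hence the Cesàro means of `|hₙ|` inherit convergence to `0` from those of `T_K |hₙ|` in `X`.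
So the Cesàro means of `fₙ` are Cauchy and weakly null, hence null.
-/

/-! ### Monotone sequences in reflexive Banach function spaces -/

section Reflexive

theorem exists_tendsto_ultrafilter_of_reflexive
    (hrefl : Function.Surjective (NormedSpace.inclusionInDoubleDual ℝ X))
    {ι : Type*} (U : Ultrafilter ι) (x : ι → X) (C : ℝ) (hC : ∀ i, ‖x i‖ ≤ C) :
    ∃ y : X, ∀ φ : StrongDual ℝ X, Tendsto (fun i => φ (x i)) U (𝓝 (φ y)) := by
  let ξ : ι → WeakDual ℝ (StrongDual ℝ X) := fun i =>
    StrongDual.toWeakDual (NormedSpace.inclusionInDoubleDual ℝ X (x i))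
  have hmem : ∀ i, ξ i ∈
      WeakDual.toStrongDual ⁻¹' Metric.closedBall (0 : StrongDual ℝ (StrongDual ℝ X)) C := fun i =>
    (mem_closedBall_zero_iff (E := StrongDual ℝ (StrongDual ℝ X))).2
      ((NormedSpace.double_dual_bound ℝ X (x i)).trans (hC i))
  obtain ⟨Λ, -, hΛ⟩ := (WeakDual.isCompact_closedBall (𝕜 := ℝ) (E := StrongDual ℝ X) 0 C)
    |>.ultrafilter_le_nhds (U.map ξ) (le_principal_iff.2 (mem_map.2 (univ_mem' hmem)))
  obtain ⟨y, hy⟩ := hrefl (WeakDual.toStrongDual Λ)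
  refine ⟨y, fun φ => ?_⟩
  have hΛφ : Λ φ = φ y := by
    rw [← NormedSpace.dual_def, hy]
    rfl
  exact hΛφ ▸ ((WeakDual.eval_continuous φ).tendsto Λ).comp hΛ

theorem exists_forall_mem_closure_convexHull_tail
    (hrefl : Function.Surjective (NormedSpace.inclusionInDoubleDual ℝ X))
    (x : ℕ → X) (C : ℝ) (hC : ∀ n, ‖x n‖ ≤ C) :
    ∃ y : X, ∀ m, y ∈ closure (convexHull ℝ (x '' Set.Ici m)) := by
  obtain ⟨y, hy⟩ := exists_tendsto_ultrafilter_of_reflexive hrefl (Ultrafilter.of atTop) x C hC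
  refine ⟨y, fun m => ?_⟩
  by_contra hn
  obtain ⟨φ, u, hlt, hu⟩ := geometric_hahn_banach_closed_point
    (convex_convexHull ℝ (x '' Set.Ici m)).closure isClosed_closure hn
  have hle : ∀ᶠ n in (Ultrafilter.of (atTop : Filter ℕ) : Filter ℕ), φ (x n) ≤ u :=
    Ultrafilter.of_le _ <| by
      filter_upwards [eventually_ge_atTop m] with n hmn
      exact (hlt _ (subset_closure (subset_convexHull ℝ _ ⟨n, hmn, rfl⟩))).le
  exact hu.not_ge (le_of_tendsto (hy φ) hle)

end Reflexive

namespace BFS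

theorem ext_ae (B : BFS S μ X) {x y : X} (h : B.J x =ᵐ[μ] B.J y) : x = y := by
  refine sub_eq_zero.1 (B.eq_zero _ ?_)
  filter_upwards [h] with s hs
  simp [hs]

theorem norm_le_norm (B : BFS S μ X) {x y : X} (h : ∀ᵐ s ∂μ, |B.J x s| ≤ |B.J y s|) :
    ‖x‖ ≤ ‖y‖ := by
  obtain ⟨z, hz, hzy⟩ := B.ideal y (B.J x) (B.aemeasurable x) h
  exact B.ext_ae hz ▸ hzy

theorem convex_setOf_ge (B : BFS S μ X) (f : S → ℝ) : Convex ℝ {z | f ≤ᵐ[μ] B.J z} := by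
  intro a ha b hb p q hp hq hpq
  rw [Set.mem_ofPred_eq] at ha hb ⊢
  filter_upwards [ha, hb] with s h₁ h₂
  simpa only [map_add, map_smul, Pi.add_apply, Pi.smul_apply] using!
    (convex_Ici (f s)) h₁ h₂ hp hq hpq

theorem convex_setOf_le (B : BFS S μ X) (f : S → ℝ) : Convex ℝ {z | B.J z ≤ᵐ[μ] f} := by
  intro a ha b hb p q hp hq hpq
  rw [Set.mem_ofPred_eq] at ha hb ⊢
  filter_upwards [ha, hb] with s h₁ h₂
  simpa only [map_add, map_smul, Pi.add_apply, Pi.smul_apply] using!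
    (convex_Iic (f s)) h₁ h₂ hp hq hpq

theorem le_of_tendsto (B : BFS S μ X) {x z : X} {y : ℕ → X} (hxy : ∀ n, B.J x ≤ᵐ[μ] B.J (y n))
    (hy : Tendsto y atTop (𝓝 z)) : B.J x ≤ᵐ[μ] B.J z := by
  obtain ⟨w, hw, -⟩ := B.ideal (x - z) (fun s => max (B.J (x - z) s) 0)
    ((B.aemeasurable _).max aemeasurable_const) (ae_of_all _ fun s => by
      rw [abs_of_nonneg (le_max_right _ _)]
      exact max_le (le_abs_self _) (abs_nonneg _))
  have hw_le : ∀ n, ‖w‖ ≤ ‖y n - z‖ := fun n => by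
    refine B.norm_le_norm ?_
    filter_upwards [hw, hxy n] with s hs hn
    rw [hs, abs_of_nonneg (le_max_right _ _)]
    refine max_le (le_trans ?_ (le_abs_self _)) (abs_nonneg _)
    simpa only [map_sub, Pi.sub_apply, sub_le_sub_iff_right] using hn
  have hw0 : w = 0 := norm_le_zero_iff.1 <|
    ge_of_tendsto' (tendsto_iff_norm_sub_tendsto_zero.1 hy) hw_le
  filter_upwards [hw] with s hs
  simp only [hw0, map_zero, Pi.zero_apply, map_sub, Pi.sub_apply] at hs
  linarith [le_max_left (B.J x s - B.J z s) 0]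

/-- Mazur's theorem turns a weak cluster point into a norm limit of convex combinations, and each
of these is dominated by a later term of the sequence. -/
theorem exists_tendsto_of_monotone (B : BFS S μ X)
    (hrefl : Function.Surjective (NormedSpace.inclusionInDoubleDual ℝ X))
    (x : ℕ → X) (C : ℝ) (hC : ∀ n, ‖x n‖ ≤ C) (hmono : ∀ m n, m ≤ n → B.J (x m) ≤ᵐ[μ] B.J (x n)) :
    ∃ y, Tendsto x atTop (𝓝 y) ∧ ∀ n, B.J (x n) ≤ᵐ[μ] B.J y := by
  obtain ⟨y, hy⟩ := exists_forall_mem_closure_convexHull_tail hrefl x C hC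
  have hle : ∀ n, B.J (x n) ≤ᵐ[μ] B.J y := by
    intro n
    obtain ⟨c, hc, hcy⟩ := mem_closure_iff_seq_limit.1 (hy n)
    refine B.le_of_tendsto (fun k => ?_) hcy
    have htail : x '' Set.Ici n ⊆ {z | B.J (x n) ≤ᵐ[μ] B.J z} :=
      Set.image_subset_iff.2 fun k hk => hmono n k hk
    exact convexHull_min htail (B.convex_setOf_ge _) (hc k)
  have hdom : convexHull ℝ (x '' Set.Ici 0) ⊆ {z | ∃ N, B.J z ≤ᵐ[μ] B.J (x N)} := by
    refine convexHull_min (Set.image_subset_iff.2 fun k _ => ⟨k, EventuallyLE.refl _ _⟩) ?_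
    rintro a ⟨N, hN⟩ b ⟨M, hM⟩ p q hp hq hpq
    exact ⟨max N M, B.convex_setOf_le _ (hN.trans (hmono _ _ (le_max_left N M)))
      (hM.trans (hmono _ _ (le_max_right N M))) hp hq hpq⟩
  refine ⟨y, Metric.tendsto_atTop.2 fun ε hε => ?_, hle⟩
  obtain ⟨c, hc, hcy⟩ := Metric.mem_closure_iff.1 (hy 0) ε hε
  obtain ⟨N, hN⟩ := hdom hc
  refine ⟨N, fun n hn => ?_⟩
  rw [dist_comm, dist_eq_norm]
  rw [dist_eq_norm] at hcy
  refine (B.norm_le_norm ?_).trans_lt hcy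
  filter_upwards [hN, hmono _ _ hn, hle n] with s hcN hNn hny
  simp only [map_sub, Pi.sub_apply]
  rw [abs_of_nonneg (by linarith), abs_of_nonneg (by linarith)]
  linarith

end BFS

/-! ### Function norms on extended nonnegative functions -/

/-- A function norm with the Levi property `iSup_le` and order continuity `tendsto_zero`, on the
cone of a.e. measurable functions with values in `[0, ∞]`; the value `⊤` marks the functions outside
the space. It need not separate points, so that it covers the norm of `[T_K, X]` for a kernel that
vanishes on a set of positive measure. -/
structure IsFunctionNorm (μ : Measure S) (Q : (S → ℝ≥0∞) → ℝ≥0∞) : Prop where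
  mono : ∀ {u v : S → ℝ≥0∞}, AEMeasurable u μ → AEMeasurable v μ → u ≤ᵐ[μ] v → Q u ≤ Q v
  add_le : ∀ {u v : S → ℝ≥0∞}, AEMeasurable u μ → AEMeasurable v μ → Q (u + v) ≤ Q u + Q v
  smul_le : ∀ {c : ℝ≥0∞} {u : S → ℝ≥0∞}, c ≠ ⊤ → AEMeasurable u μ → Q (c • u) ≤ c * Q u
  iSup_le : ∀ {u : ℕ → S → ℝ≥0∞} {C : ℝ≥0∞}, (∀ n, AEMeasurable (u n) μ) → Monotone u →
    (∀ n, Q (u n) ≤ C) → Q (⨆ n, u n) ≤ C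
  tendsto_zero : ∀ {u : ℕ → S → ℝ≥0∞}, (∀ n, AEMeasurable (u n) μ) → Antitone u → Q (u 0) ≠ ⊤ →
    (∀ᵐ s ∂μ, Tendsto (fun n => u n s) atTop (𝓝 0)) → Tendsto (fun n => Q (u n)) atTop (𝓝 0)

theorem aemeasurable_iSup {u : ℕ → S → ℝ≥0∞} (hu : ∀ n, AEMeasurable (u n) μ) :
    AEMeasurable (⨆ n, u n) μ :=
  (AEMeasurable.iSup hu).congr (ae_of_all _ fun _ => iSup_apply.symm)

/-- The absolute value of a real function, as a `[0, ∞]`-valued function. -/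
def eabs {α : Type*} (f : α → ℝ) (s : α) : ℝ≥0∞ := ENNReal.ofReal |f s|

theorem aemeasurable_eabs {f : S → ℝ} (hf : AEMeasurable f μ) : AEMeasurable (eabs f) μ :=
  hf.abs.ennreal_ofReal

theorem eabs_congr_ae {f g : S → ℝ} (h : f =ᵐ[μ] g) : eabs f =ᵐ[μ] eabs g :=
  h.fun_comp fun r => ENNReal.ofReal |r|

namespace BFS

/-- The element `x` of the Banach function space represents the `[0, ∞]`-valued function `u`. -/
def Represents (B : BFS S μ X) (u : S → ℝ≥0∞) (x : X) : Prop :=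
  ∀ᵐ s ∂μ, u s ≠ ⊤ ∧ (u s).toReal = B.J x s

/-- The norm of a Banach function space, extended by `⊤` to all `[0, ∞]`-valued functions. -/
def extNorm (B : BFS S μ X) (u : S → ℝ≥0∞) : ℝ≥0∞ :=
  ⨅ (x : X) (_ : B.Represents u x), ‖x‖ₑ

variable {B : BFS S μ X} {u v : S → ℝ≥0∞} {x y : X}

namespace Represents

theorem unique (hx : B.Represents u x) (hy : B.Represents u y) : x = y := by
  refine B.ext_ae ?_
  filter_upwards [hx, hy] with s hs hs'
  rw [← hs.2, hs'.2]

theorem extNorm_eq (hx : B.Represents u x) : B.extNorm u = ‖x‖ₑ :=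
  le_antisymm (iInf₂_le x hx) (le_iInf₂ fun _ hy => (hx.unique hy ▸ le_rfl))

theorem aemeasurable (hx : B.Represents u x) : AEMeasurable u μ := by
  refine (B.aemeasurable x).ennreal_ofReal.congr ?_
  filter_upwards [hx] with s hs
  rw [← hs.2, ENNReal.ofReal_toReal hs.1]

theorem congr (hx : B.Represents u x) (huv : u =ᵐ[μ] v) : B.Represents v x := by
  filter_upwards [hx, huv] with s hs huv
  rwa [← huv]

theorem nonneg (hx : B.Represents u x) : 0 ≤ᵐ[μ] B.J x := by
  filter_upwards [hx] with s hs
  exact hs.2 ▸ ENNReal.toReal_nonneg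

theorem le (hx : B.Represents u x) (hy : B.Represents v y) (huv : u ≤ᵐ[μ] v) :
    B.J x ≤ᵐ[μ] B.J y := by
  filter_upwards [hx, hy, huv] with s hs hs' huv
  exact hs.2 ▸ hs'.2 ▸ ENNReal.toReal_mono hs'.1 huv

theorem add (hx : B.Represents u x) (hy : B.Represents v y) : B.Represents (u + v) (x + y) := by
  filter_upwards [hx, hy] with s hs hs'
  refine ⟨ENNReal.add_ne_top.2 ⟨hs.1, hs'.1⟩, ?_⟩
  simp [ENNReal.toReal_add hs.1 hs'.1, hs.2, hs'.2]

theorem smul (hx : B.Represents u x) {c : ℝ≥0∞} (hc : c ≠ ⊤) :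
    B.Represents (c • u) (c.toReal • x) := by
  filter_upwards [hx] with s hs
  exact ⟨ENNReal.mul_ne_top hc hs.1, by simp [hs.2]⟩

theorem sub (hx : B.Represents u x) (hy : B.Represents v y) (hvu : v ≤ᵐ[μ] u) :
    B.Represents (u - v) (x - y) := by
  filter_upwards [hx, hy, hvu] with s hs hs' hle
  exact ⟨ne_top_of_le_ne_top hs.1 tsub_le_self,
    by simp [ENNReal.toReal_sub_of_le hle hs.1, hs.2, hs'.2]⟩

end Represents

theorem exists_represents (h : B.extNorm u ≠ ⊤) : ∃ x, B.Represents u x := by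
  by_contra! hn
  exact h (by simp [extNorm, hn])

theorem ae_ne_top_of_extNorm_ne_top (h : B.extNorm u ≠ ⊤) : ∀ᵐ s ∂μ, u s ≠ ⊤ := by
  obtain ⟨x, hx⟩ := exists_represents h
  exact hx.mono fun s hs => hs.1

theorem exists_represents_eabs (B : BFS S μ X) (x : X) :
    ∃ y, B.Represents (eabs (B.J x)) y ∧ ‖y‖ = ‖x‖ := by
  obtain ⟨y, hy, hyx⟩ := B.ideal x (fun s => |B.J x s|) (B.aemeasurable x).abs
    (ae_of_all _ fun s => (abs_abs _).le)
  refine ⟨y, ?_, hyx.antisymm (B.norm_le_norm ?_)⟩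
  · filter_upwards [hy] with s hs
    exact ⟨ENNReal.ofReal_ne_top, by simp [eabs, hs]⟩
  · filter_upwards [hy] with s hs
    rw [hs, abs_abs]

theorem extNorm_eabs (B : BFS S μ X) (x : X) :
    B.extNorm (eabs (B.J x)) = ‖x‖ₑ := by
  obtain ⟨y, hy, hyx⟩ := B.exists_represents_eabs x
  rw [hy.extNorm_eq, ← ofReal_norm, hyx, ofReal_norm]

theorem exists_indicator (B : BFS S μ X) (x : X) {A : Set S} (hA : MeasurableSet A) :
    ∃ y, B.J y =ᵐ[μ] A.indicator (B.J x) := by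
  obtain ⟨y, hy, -⟩ := B.ideal x (A.indicator (B.J x)) ((B.aemeasurable x).indicator hA)
    (ae_of_all _ fun s => by by_cases hs : s ∈ A <;> simp [hs])
  exact ⟨y, hy⟩

theorem ae_eq_zero_of_extNorm_eq_zero (h : B.extNorm u = 0) : u =ᵐ[μ] 0 := by
  obtain ⟨x, hx⟩ := exists_represents (h ▸ ENNReal.zero_ne_top)
  have hx0 : x = 0 := by simpa only [hx.extNorm_eq, enorm_eq_zero] using h
  filter_upwards [hx] with s hs
  simpa [hx0, ENNReal.toReal_eq_zero_iff, hs.1] using hs.2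

theorem Represents.exists_of_le (hy : B.Represents v y) (hu : AEMeasurable u μ)
    (huv : u ≤ᵐ[μ] v) : ∃ x, B.Represents u x ∧ ‖x‖ ≤ ‖y‖ := by
  obtain ⟨x, hx, hxy⟩ := B.ideal y (fun s => (u s).toReal) hu.ennreal_toReal (by
    filter_upwards [huv, hy] with s hle hs
    rw [← hs.2, ENNReal.abs_toReal, ENNReal.abs_toReal]
    exact ENNReal.toReal_mono hs.1 hle)
  refine ⟨x, ?_, hxy⟩
  filter_upwards [huv, hy, hx] with s hle hs hxs
  exact ⟨ne_top_of_le_ne_top hs.1 hle, hxs.symm⟩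

theorem extNorm_mono (hu : AEMeasurable u μ) (huv : u ≤ᵐ[μ] v) : B.extNorm u ≤ B.extNorm v := by
  refine le_iInf₂ fun y hy => ?_
  obtain ⟨x, hx, hxy⟩ := hy.exists_of_le hu huv
  rwa [hx.extNorm_eq, enorm_le_iff_norm_le]

theorem extNorm_add_le : B.extNorm (u + v) ≤ B.extNorm u + B.extNorm v := by
  by_cases hfin : B.extNorm u = ⊤ ∨ B.extNorm v = ⊤
  · rcases hfin with h | h <;> simp [h]
  push Not at hfin
  obtain ⟨x, hx⟩ := exists_represents hfin.1
  obtain ⟨y, hy⟩ := exists_represents hfin.2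
  rw [(hx.add hy).extNorm_eq, hx.extNorm_eq, hy.extNorm_eq]
  exact enorm_add_le x y

theorem extNorm_zero (B : BFS S μ X) : B.extNorm 0 = 0 := by
  have h0 : B.Represents 0 0 := ae_of_all _ fun s => by simp
  simpa using h0.extNorm_eq

theorem extNorm_smul_le {c : ℝ≥0∞} (hc : c ≠ ⊤) : B.extNorm (c • u) ≤ c * B.extNorm u := by
  rcases eq_or_ne c 0 with rfl | hc0
  · simp [extNorm_zero]
  by_cases hu : B.extNorm u = ⊤
  · simp [hu, ENNReal.mul_top hc0]
  obtain ⟨x, hx⟩ := exists_represents hu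
  rw [(hx.smul hc).extNorm_eq, hx.extNorm_eq, enorm_smul,
    Real.enorm_of_nonneg ENNReal.toReal_nonneg, ENNReal.ofReal_toReal hc]

theorem exists_tendsto_represents_iSup
    (hrefl : Function.Surjective (NormedSpace.inclusionInDoubleDual ℝ X))
    {u : ℕ → S → ℝ≥0∞} {x : ℕ → X} (hx : ∀ n, B.Represents (u n) (x n)) (C : ℝ)
    (hC : ∀ n, ‖x n‖ ≤ C) (hmono : Monotone u) :
    ∃ y, Tendsto x atTop (𝓝 y) ∧ B.Represents (⨆ n, u n) y := by
  obtain ⟨y, hxy, hle⟩ := B.exists_tendsto_of_monotone hrefl x C hC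
    fun m n hmn => (hx m).le (hx n) (ae_of_all _ (hmono hmn))
  refine ⟨y, hxy, ?_⟩
  have hsup_le : ∀ᵐ s ∂μ, (⨆ n, u n) s ≤ ENNReal.ofReal (B.J y s) := by
    filter_upwards [ae_all_iff.2 hx, ae_all_iff.2 hle] with s hs hle
    rw [iSup_apply]
    refine iSup_le fun n => ?_
    rw [← ENNReal.ofReal_toReal (hs n).1, (hs n).2]
    exact ENNReal.ofReal_le_ofReal (hle n)
  have hy0 : 0 ≤ᵐ[μ] B.J y := (hx 0).nonneg.trans (hle 0)
  have hy : B.Represents (fun s => ENNReal.ofReal (B.J y s)) y := by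
    filter_upwards [hy0] with s hs
    exact ⟨ENNReal.ofReal_ne_top, ENNReal.toReal_ofReal hs⟩
  obtain ⟨z, hz, -⟩ := hy.exists_of_le (aemeasurable_iSup fun n => (hx n).aemeasurable) hsup_le
  have hyz : B.J y ≤ᵐ[μ] B.J z := by
    have h := B.le_of_tendsto (x := 0) (y := fun n => z - x n) (fun n => ?_)
      (tendsto_const_nhds.sub hxy)
    · filter_upwards [h] with s hs
      simpa using hs
    · filter_upwards [(hx n).le hz (ae_of_all _ (le_iSup u n))] with s hs
      simpa using hs
  exact B.ext_ae (hyz.antisymm (hz.le hy hsup_le)) ▸ hz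

theorem extNorm_iSup_le (hrefl : Function.Surjective (NormedSpace.inclusionInDoubleDual ℝ X))
    {u : ℕ → S → ℝ≥0∞} {C : ℝ≥0∞} (hmono : Monotone u) (hC : ∀ n, B.extNorm (u n) ≤ C) :
    B.extNorm (⨆ n, u n) ≤ C := by
  rcases eq_or_ne C ⊤ with rfl | hCtop
  · exact le_top
  choose x hx using fun n => exists_represents (ne_top_of_le_ne_top hCtop (hC n))
  have hxC : ∀ n, ‖x n‖ₑ ≤ C := fun n => (hx n).extNorm_eq ▸ hC n
  obtain ⟨y, hxy, hy⟩ := exists_tendsto_represents_iSup hrefl hx C.toReal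
    (fun n => by simpa using ENNReal.toReal_mono hCtop (hxC n)) hmono
  exact hy.extNorm_eq ▸ _root_.le_of_tendsto' hxy.enorm hxC

theorem tendsto_extNorm_zero
    (hrefl : Function.Surjective (NormedSpace.inclusionInDoubleDual ℝ X))
    {u : ℕ → S → ℝ≥0∞} (hu : ∀ n, AEMeasurable (u n) μ) (hanti : Antitone u)
    (h0 : B.extNorm (u 0) ≠ ⊤) (hlim : ∀ᵐ s ∂μ, Tendsto (fun n => u n s) atTop (𝓝 0)) :
    Tendsto (fun n => B.extNorm (u n)) atTop (𝓝 0) := by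
  obtain ⟨x₀, hx₀⟩ := exists_represents h0
  choose x hx hxx₀ using fun n => hx₀.exists_of_le (hu n) (ae_of_all _ (hanti (Nat.zero_le n)))
  have hsub := fun n => hx₀.sub (hx n) (ae_of_all _ (hanti (Nat.zero_le n)))
  obtain ⟨y, hxy, hy⟩ := exists_tendsto_represents_iSup hrefl hsub (‖x₀‖ + ‖x₀‖)
    (fun n => (norm_sub_le _ _).trans (by gcongr; exact hxx₀ n))
    fun m n hmn => tsub_le_tsub_left (hanti hmn) _
  have hsup : (⨆ n, u 0 - u n) =ᵐ[μ] u 0 := by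
    filter_upwards [hx₀, hlim] with s hs hlim
    rw [iSup_apply]
    refine tendsto_nhds_unique
      (tendsto_atTop_iSup fun m n hmn => tsub_le_tsub_left (hanti hmn s) _) ?_
    simpa using ENNReal.Tendsto.sub tendsto_const_nhds hlim (Or.inl hs.1)
  obtain rfl : y = x₀ := (hy.congr hsup).unique hx₀
  have hx_lim : Tendsto x atTop (𝓝 0) := by
    simpa using (tendsto_const_nhds (x := y)).sub hxy
  simpa [(hx _).extNorm_eq] using hx_lim.enorm

theorem isFunctionNorm_extNorm (B : BFS S μ X)
    (hrefl : Function.Surjective (NormedSpace.inclusionInDoubleDual ℝ X)) :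
    IsFunctionNorm μ B.extNorm where
  mono hu _ huv := extNorm_mono hu huv
  add_le _ _ := extNorm_add_le
  smul_le hc _ := extNorm_smul_le hc
  iSup_le _ hmono hC := extNorm_iSup_le hrefl hmono hC
  tendsto_zero hu hanti h0 hlim := tendsto_extNorm_zero hrefl hu hanti h0 hlim

end BFS

theorem antitone_iUnion_tail {α : Type*} (A : ℕ → Set α) : Antitone fun n => ⋃ k, A (k + n) :=
  fun m n hmn =>
  Set.iUnion_subset fun k => by
    simpa [show k + (n - m) + m = k + n by omega] using
      Set.subset_iUnion (fun k => A (k + m)) (k + (n - m))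

theorem limsup_eq_iInter_iUnion_tail {α : Type*} (A : ℕ → Set α) :
    limsup A atTop = ⋂ n, ⋃ k, A (k + n) := by
  simp only [limsup_eq_iInf_iSup_of_nat', Set.iInf_eq_iInter, Set.iSup_eq_iUnion]

theorem le_measure_limsup_of_forall_le [IsFiniteMeasure μ] {A : ℕ → Set S}
    (hA : ∀ n, MeasurableSet (A n)) {δ : ℝ≥0∞} (hδ : ∀ n, δ ≤ μ (A n)) :
    δ ≤ μ (limsup A atTop) := by
  rw [limsup_eq_iInter_iUnion_tail]
  refine ge_of_tendsto' (tendsto_measure_iInter_atTop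
    (fun n => (MeasurableSet.iUnion fun k => hA (k + n)).nullMeasurableSet)
    (antitone_iUnion_tail A) ⟨0, measure_ne_top μ _⟩) fun n => (hδ n).trans (measure_mono ?_)
  simpa using Set.subset_iUnion (fun k => A (k + n)) 0

theorem aemeasurable_indicator_one {A : Set S} (hA : MeasurableSet A) :
    AEMeasurable (A.indicator (1 : S → ℝ≥0∞)) μ :=
  aemeasurable_const.indicator hA

namespace IsFunctionNorm

variable {Q : (S → ℝ≥0∞) → ℝ≥0∞} {u v w : S → ℝ≥0∞} {A : Set S}

theorem zero (hQ : IsFunctionNorm μ Q) : Q 0 = 0 := by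
  simpa using hQ.smul_le ENNReal.zero_ne_top (u := 0) aemeasurable_const

theorem congr (hQ : IsFunctionNorm μ Q) (hu : AEMeasurable u μ) (huv : u =ᵐ[μ] v) : Q u = Q v :=
  (hQ.mono hu (hu.congr huv) huv.le).antisymm (hQ.mono (hu.congr huv) hu huv.symm.le)

theorem smul_eq (hQ : IsFunctionNorm μ Q) {c : ℝ≥0∞} (hc : c ≠ ⊤) (hu : AEMeasurable u μ) :
    Q (c • u) = c * Q u := by
  rcases eq_or_ne c 0 with rfl | hc0
  · simp [hQ.zero]
  refine (hQ.smul_le hc hu).antisymm ?_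
  calc c * Q u = c * Q (c⁻¹ • c • u) := by
        rw [smul_smul, ENNReal.inv_mul_cancel hc0 hc, one_smul]
    _ ≤ c * (c⁻¹ * Q (c • u)) := by
        gcongr
        exact hQ.smul_le (ENNReal.inv_ne_top.2 hc0) (hu.const_smul c)
    _ = Q (c • u) := by rw [← mul_assoc, ENNReal.mul_inv_cancel hc0 hc, one_mul]

theorem sum_le (hQ : IsFunctionNorm μ Q) {ι : Type*} {u : ι → S → ℝ≥0∞}
    (hu : ∀ i, AEMeasurable (u i) μ) (t : Finset ι) : Q (∑ i ∈ t, u i) ≤ ∑ i ∈ t, Q (u i) := by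
  classical
  induction t using Finset.induction_on with
  | empty => simp [hQ.zero]
  | insert a t ha ih =>
    simp only [Finset.sum_insert ha]
    exact (hQ.add_le (hu a) (Finset.aemeasurable_sum _ fun i _ => hu i)).trans (by gcongr)

theorem indicator_le (hQ : IsFunctionNorm μ Q) (hu : AEMeasurable u μ) (hA : MeasurableSet A) :
    Q (A.indicator u) ≤ Q u :=
  hQ.mono (hu.indicator hA) hu (ae_of_all _ (Set.indicator_le_self _ _))

theorem le_indicator_add_indicator_compl (hQ : IsFunctionNorm μ Q) (hu : AEMeasurable u μ)
    (hA : MeasurableSet A) : Q u ≤ Q (A.indicator u) + Q (Aᶜ.indicator u) := by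
  simpa using hQ.add_le (hu.indicator hA) (hu.indicator hA.compl)

theorem indicator_iUnion_le (hQ : IsFunctionNorm μ Q) (hu : AEMeasurable u μ) {A : ℕ → Set S}
    (hA : ∀ n, MeasurableSet (A n)) :
    Q ((⋃ n, A n).indicator u) ≤ ∑' n, Q ((A n).indicator u) := by
  have hmeas : ∀ n, AEMeasurable ((A n).indicator u) μ := fun n => hu.indicator (hA n)
  have hpartial : ∀ n, AEMeasurable (∑ i ∈ Finset.range n, (A i).indicator u) μ := fun n =>
    Finset.aemeasurable_sum _ fun i _ => hmeas i
  calc Q ((⋃ n, A n).indicator u)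
      ≤ Q (⨆ n, ∑ i ∈ Finset.range n, (A i).indicator u) := by
        refine hQ.mono (hu.indicator (.iUnion hA)) (aemeasurable_iSup hpartial)
          (ae_of_all _ fun s => Set.indicator_le' (fun s hs => ?_) (fun _ _ => zero_le) s)
        obtain ⟨n, hn⟩ := Set.mem_iUnion.1 hs
        rw [iSup_apply]
        refine le_iSup_of_le (n + 1) ?_
        rw [Finset.sum_apply]
        calc u s = (A n).indicator u s := (Set.indicator_of_mem hn u).symm
          _ ≤ _ := Finset.single_le_sum (f := fun i => (A i).indicator u s)
            (fun _ _ => zero_le) (Finset.self_mem_range_succ n)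
    _ ≤ ∑' n, Q ((A n).indicator u) := by
        refine hQ.iSup_le hpartial (fun m n hmn => Finset.sum_le_sum_of_subset
          (Finset.range_mono hmn)) fun n => ?_
        exact (hQ.sum_le hmeas _).trans (ENNReal.sum_le_tsum _)

theorem indicator_limsup_eq_zero (hQ : IsFunctionNorm μ Q) (hu : AEMeasurable u μ)
    {A : ℕ → Set S} (hA : ∀ n, MeasurableSet (A n)) (hsum : ∑' n, Q ((A n).indicator u) ≠ ⊤) :
    Q ((limsup A atTop).indicator u) = 0 := by
  have hlim : Tendsto (fun n => ∑' k, Q ((A (k + n)).indicator u)) atTop (𝓝 0) :=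
    ENNReal.tendsto_sum_nat_add _ hsum
  refine le_antisymm (ge_of_tendsto' hlim fun n => ?_) zero_le
  refine le_trans (hQ.mono (hu.indicator (.measurableSet_limsup hA))
    (hu.indicator (.iUnion fun k => hA (k + n))) (ae_of_all _ ?_))
    (hQ.indicator_iUnion_le hu fun k => hA (k + n))
  refine Set.indicator_le_indicator_of_subset ?_ fun _ => zero_le
  exact limsup_eq_iInter_iUnion_tail A ▸ Set.iInter_subset _ n

theorem indicator_eq_zero (hQ : IsFunctionNorm μ Q) (hu : AEMeasurable u μ) (hA : MeasurableSet A)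
    (hA0 : Q (A.indicator 1) = 0) : Q (A.indicator u) = 0 := by
  have hmul : ∀ k : ℕ, AEMeasurable ((k : ℝ≥0∞) • A.indicator (1 : S → ℝ≥0∞)) μ :=
    fun k => (aemeasurable_indicator_one hA).const_smul _
  refine le_antisymm ((hQ.mono (hu.indicator hA) (aemeasurable_iSup hmul) (ae_of_all _ fun s => ?_))
    |>.trans (hQ.iSup_le hmul (fun m n hmn s => ?_) fun k => ?_)) zero_le
  · by_cases hs : s ∈ A <;> simp [hs, iSup_apply, ENNReal.iSup_natCast]
  · simp only [Pi.smul_apply, smul_eq_mul]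
    gcongr
  · simp [hQ.smul_eq (ENNReal.natCast_ne_top k) (aemeasurable_indicator_one hA), hA0]

theorem tendsto_indicator_iUnion_tail (hQ : IsFunctionNorm μ Q) (hu : AEMeasurable u μ)
    (hfin : Q u ≠ ⊤) {A : ℕ → Set S} (hA : ∀ n, MeasurableSet (A n))
    (hlimsup : Q ((limsup A atTop).indicator u) = 0) :
    Tendsto (fun n => Q ((⋃ k, A (k + n)).indicator u)) atTop (𝓝 0) := by
  have hL : MeasurableSet (limsup A atTop) := .measurableSet_limsup hA
  have hU : ∀ n, MeasurableSet (⋃ k, A (k + n)) := fun n => .iUnion fun k => hA (k + n)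
  have hpart : ∀ n, AEMeasurable ((limsup A atTop)ᶜ.indicator ((⋃ k, A (k + n)).indicator u)) μ :=
    fun n => (hu.indicator (hU n)).indicator hL.compl
  have hout : Tendsto (fun n => Q ((limsup A atTop)ᶜ.indicator ((⋃ k, A (k + n)).indicator u)))
      atTop (𝓝 0) := by
    refine hQ.tendsto_zero hpart (fun m n hmn s => Set.indicator_le_indicator
      (Set.indicator_le_indicator_of_subset (antitone_iUnion_tail A hmn) (fun _ => zero_le) s)) ?_
      (ae_of_all _ fun s => ?_)
    · exact ne_top_of_le_ne_top hfin ((hQ.indicator_le (hu.indicator (hU 0)) hL.compl).trans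
        (hQ.indicator_le hu (hU 0)))
    · by_cases hs : s ∈ limsup A atTop
      · simp [hs]
      obtain ⟨n, hn⟩ : ∃ n, s ∉ ⋃ k, A (k + n) := by
        simpa only [limsup_eq_iInter_iUnion_tail, Set.mem_iInter, not_forall] using hs
      refine tendsto_const_nhds.congr' ?_
      filter_upwards [eventually_ge_atTop n] with m hm
      rw [Set.indicator_of_mem (Set.mem_compl hs),
        Set.indicator_of_notMem fun h => hn (antitone_iUnion_tail A hm h)]
  refine tendsto_of_tendsto_of_tendsto_of_le_of_le tendsto_const_nhds hout (fun _ => zero_le)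
    fun n => ?_
  calc Q ((⋃ k, A (k + n)).indicator u)
      ≤ Q ((limsup A atTop).indicator ((⋃ k, A (k + n)).indicator u)) +
          Q ((limsup A atTop)ᶜ.indicator ((⋃ k, A (k + n)).indicator u)) :=
        hQ.le_indicator_add_indicator_compl (hu.indicator (hU n)) hL
    _ ≤ Q ((limsup A atTop).indicator u) +
          Q ((limsup A atTop)ᶜ.indicator ((⋃ k, A (k + n)).indicator u)) := by
        gcongr
        exact hQ.mono ((hu.indicator (hU n)).indicator hL) (hu.indicator hL)
          (ae_of_all _ fun s => Set.indicator_le_indicator (Set.indicator_le_self _ _ s))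
    _ = Q ((limsup A atTop)ᶜ.indicator ((⋃ k, A (k + n)).indicator u)) := by
        rw [hlimsup, zero_add]

theorem exists_forall_indicator_le (hQ : IsFunctionNorm μ Q) (hu : AEMeasurable u μ)
    (hfin : Q u ≠ ⊤) {ε : ℝ≥0∞} (hε : 0 < ε) :
    ∃ δ > 0, ∀ A, MeasurableSet A → μ A < δ → Q (A.indicator u) ≤ ε := by
  by_contra! hcon
  obtain ⟨δ, hδ, hδsum⟩ := ENNReal.exists_pos_sum_of_countable' one_ne_zero ℕ
  choose A hA hAδ hAε using fun n => hcon (δ n) (hδ n)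
  have hlimsup : μ (limsup A atTop) = 0 := measure_limsup_atTop_eq_zero <|
    ne_top_of_le_ne_top ENNReal.one_ne_top <| (ENNReal.tsum_le_tsum fun n => (hAδ n).le).trans
      hδsum.le
  have htail := hQ.tendsto_indicator_iUnion_tail hu hfin hA <| by
    rw [hQ.congr (v := 0) (hu.indicator (.measurableSet_limsup hA))
      (indicator_meas_zero hlimsup), hQ.zero]
  obtain ⟨n, hn⟩ := (htail.eventually_lt_const hε).exists
  refine (hAε n).not_ge (le_trans (hQ.mono (hu.indicator (hA n))
    (hu.indicator (.iUnion fun k => hA (k + n))) (ae_of_all _ ?_)) hn.le)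
  exact Set.indicator_le_indicator_of_subset (by
    simpa using Set.subset_iUnion (fun k => A (k + n)) 0) fun _ => zero_le

theorem exists_forall_measure_le [IsFiniteMeasure μ] (hQ : IsFunctionNorm μ Q)
    (hw : AEMeasurable w μ)
    (hdef : ∀ A, MeasurableSet A → Q (A.indicator w) = 0 → A.indicator w =ᵐ[μ] 0)
    {δ : ℝ≥0∞} (hδ : 0 < δ) :
    ∃ η > 0, ∀ A, MeasurableSet A → (∀ s ∈ A, w s ≠ 0) → Q (A.indicator w) ≤ η → μ A ≤ δ := by
  by_contra! hcon
  obtain ⟨η, hη, hηsum⟩ := ENNReal.exists_pos_sum_of_countable' one_ne_zero ℕ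
  choose A hA hAw hAη hAδ using fun n => hcon (η n) (hη n)
  have hnull : μ (limsup A atTop) = 0 := by
    have h0 := hdef _ (.measurableSet_limsup hA) <| hQ.indicator_limsup_eq_zero hw hA <|
      ne_top_of_le_ne_top ENNReal.one_ne_top <| (ENNReal.tsum_le_tsum hAη).trans hηsum.le
    refine measure_mono_null (fun s hs => ?_) (ae_iff.1 h0)
    obtain ⟨n, hn⟩ := (mem_limsup_iff_frequently_mem.1 hs).exists
    simpa [hs] using hAw n s hn
  exact (hδ.trans_le (le_measure_limsup_of_forall_le hA fun n => (hAδ n).le)).ne' hnull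

end IsFunctionNorm

/-! ### Kernel operators -/

section KernelOp

variable {R : Type*} [MeasurableSpace R] {ν : Measure R} {K : S → R → ℝ≥0∞}

/-- The positive kernel operator `T_K u (s) = ∫ K(s, y) u(y) dν(y)` on `[0, ∞]`-valued functions. -/
def kernelOp (ν : Measure R) (K : S → R → ℝ≥0∞) (u : R → ℝ≥0∞) (s : S) : ℝ≥0∞ :=
  ∫⁻ y, K s y * u y ∂ν

theorem kernelOp_mono {α : Type*} {K : α → R → ℝ≥0∞} {u v : R → ℝ≥0∞} (h : u ≤ᵐ[ν] v) :
    kernelOp ν K u ≤ kernelOp ν K v :=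
  fun s => lintegral_mono_ae <| h.mono fun y hy => mul_le_mul_right hy (K s y)

theorem measurable_kernelOp [SFinite ν] (hK : Measurable (Function.uncurry K)) {u : R → ℝ≥0∞}
    (hu : AEMeasurable u ν) : Measurable (kernelOp ν K u) := by
  have hmk : kernelOp ν K u = kernelOp ν K (hu.mk u) :=
    (kernelOp_mono hu.ae_eq_mk.le).antisymm (kernelOp_mono hu.ae_eq_mk.symm.le)
  rw [hmk]
  exact Measurable.lintegral_prod_right (f := fun s y => K s y * hu.mk u y)
    (hK.mul (hu.measurable_mk.comp measurable_snd))

theorem aemeasurable_kernel_mul (hK : Measurable (Function.uncurry K)) {u : R → ℝ≥0∞}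
    (hu : AEMeasurable u ν) (s : S) : AEMeasurable (fun y => K s y * u y) ν :=
  hK.of_uncurry_left.aemeasurable.mul hu

theorem kernelOp_add (hK : Measurable (Function.uncurry K)) {u v : R → ℝ≥0∞}
    (hu : AEMeasurable u ν) : kernelOp ν K (u + v) = kernelOp ν K u + kernelOp ν K v := by
  ext s
  simp only [kernelOp, Pi.add_apply, mul_add]
  exact lintegral_add_left' (aemeasurable_kernel_mul hK hu s) _

theorem kernelOp_sum (hK : Measurable (Function.uncurry K)) {ι : Type*} {u : ι → R → ℝ≥0∞}
    (hu : ∀ i, AEMeasurable (u i) ν) (t : Finset ι) :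
    kernelOp ν K (∑ i ∈ t, u i) = ∑ i ∈ t, kernelOp ν K (u i) := by
  ext s
  simp only [kernelOp, Finset.sum_apply, Finset.mul_sum]
  exact lintegral_finsetSum' _ fun i _ => aemeasurable_kernel_mul hK (hu i) s

theorem kernelOp_smul {α : Type*} {K : α → R → ℝ≥0∞} {c : ℝ≥0∞} (hc : c ≠ ⊤) (u : R → ℝ≥0∞) :
    kernelOp ν K (c • u) = c • kernelOp ν K u := by
  ext s
  simp only [kernelOp, Pi.smul_apply, smul_eq_mul, mul_left_comm (K s _) c]
  exact lintegral_const_mul' c _ hc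

theorem kernelOp_iSup (hK : Measurable (Function.uncurry K)) {u : ℕ → R → ℝ≥0∞}
    (hu : ∀ n, AEMeasurable (u n) ν) (hmono : Monotone u) :
    kernelOp ν K (⨆ n, u n) = ⨆ n, kernelOp ν K (u n) := by
  ext s
  simp only [kernelOp, iSup_apply, ENNReal.mul_iSup]
  exact lintegral_iSup' (fun n => aemeasurable_kernel_mul hK (hu n) s)
    (ae_of_all _ fun y m n hmn => mul_le_mul_right (hmono hmn y) _)

theorem tendsto_kernelOp_zero (hK : Measurable (Function.uncurry K)) {u : ℕ → R → ℝ≥0∞}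
    (hu : ∀ n, AEMeasurable (u n) ν) (hanti : Antitone u)
    (hlim : ∀ᵐ y ∂ν, Tendsto (fun n => u n y) atTop (𝓝 0)) {s : S}
    (hs : kernelOp ν K (u 0) s ≠ ⊤) :
    Tendsto (fun n => kernelOp ν K (u n) s) atTop (𝓝 0) := by
  have hmeas := fun n => aemeasurable_kernel_mul hK (hu n) s
  rw [← lintegral_zero (μ := ν)]
  refine lintegral_tendsto_of_tendsto_of_antitone hmeas
    (ae_of_all _ fun y m n hmn => mul_le_mul_right (hanti hmn y) _) hs ?_
  filter_upwards [hlim, ae_lt_top' (hmeas 0) hs] with y hy htop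
  rcases eq_or_ne (K s y) ⊤ with hKy | hKy
  · have h0 : u 0 y = 0 := by
      by_contra hne
      simp [hKy, ENNReal.top_mul hne] at htop
    have hn : ∀ n, u n y = 0 := fun n => le_antisymm (h0 ▸ hanti (Nat.zero_le n) y) zero_le
    simp [hn]
  · simpa using ENNReal.Tendsto.const_mul hy (Or.inr hKy)

theorem IsFunctionNorm.comp_kernelOp [SFinite ν] {ρ : (S → ℝ≥0∞) → ℝ≥0∞}
    (hρ : IsFunctionNorm μ ρ) (hfin : ∀ u : S → ℝ≥0∞, ρ u ≠ ⊤ → ∀ᵐ s ∂μ, u s ≠ ⊤)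
    (hK : Measurable (Function.uncurry K)) :
    IsFunctionNorm ν fun u => ρ (kernelOp ν K u) where
  mono hu hv huv := hρ.mono (measurable_kernelOp hK hu).aemeasurable
    (measurable_kernelOp hK hv).aemeasurable (ae_of_all _ (kernelOp_mono huv))
  add_le hu hv := kernelOp_add hK hu ▸ hρ.add_le (measurable_kernelOp hK hu).aemeasurable
    (measurable_kernelOp hK hv).aemeasurable
  smul_le hc hu := by
    rw [kernelOp_smul hc]
    exact hρ.smul_le hc (measurable_kernelOp hK hu).aemeasurable
  iSup_le hu hmono hC := kernelOp_iSup hK hu hmono ▸ hρ.iSup_le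
    (fun n => (measurable_kernelOp hK (hu n)).aemeasurable)
    (fun _ _ hmn => kernelOp_mono (ae_of_all _ (hmono hmn))) hC
  tendsto_zero hu hanti h0 hlim := hρ.tendsto_zero
    (fun n => (measurable_kernelOp hK (hu n)).aemeasurable)
    (fun _ _ hmn => kernelOp_mono (ae_of_all _ (hanti hmn))) h0
    ((hfin _ h0).mono fun _ hs => tendsto_kernelOp_zero hK hu hanti hlim hs)

/-- The norm of the optimal domain `[T_K, X]`, on `[0, ∞]`-valued functions. -/
def BFS.kernelNorm (B : BFS S μ X) (ν : Measure R) (K : S → R → ℝ≥0∞) (u : R → ℝ≥0∞) : ℝ≥0∞ :=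
  B.extNorm (kernelOp ν K u)

theorem BFS.isFunctionNorm_kernelNorm [SFinite ν] (B : BFS S μ X)
    (hrefl : Function.Surjective (NormedSpace.inclusionInDoubleDual ℝ X))
    (hK : Measurable (Function.uncurry K)) : IsFunctionNorm ν (B.kernelNorm ν K) :=
  (B.isFunctionNorm_extNorm hrefl).comp_kernelOp (fun _ => BFS.ae_ne_top_of_extNorm_ne_top) hK

end KernelOp

/-! ### Splitting sequences of functions -/

section Splitting

/-- The part of `u` where it exceeds the level `2 ^ j`. -/
def above (j : ℕ) (u : S → ℝ≥0∞) : S → ℝ≥0∞ :=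
  {s | 2 ^ j < u s}.indicator u

/-- The part of `u` where its values lie in `(2 ^ a, 2 ^ b]`. -/
def slab (a b : ℕ) (u : S → ℝ≥0∞) : S → ℝ≥0∞ :=
  {s | 2 ^ a < u s ∧ u s ≤ 2 ^ b}.indicator u

/-- Uniform integrability of a family with respect to a function norm `Q`: the parts above the
levels `2 ^ j` are uniformly small. -/
def EquiIntegrable {ι : Type*} (Q : (S → ℝ≥0∞) → ℝ≥0∞) (u : ι → S → ℝ≥0∞) : Prop :=
  ∀ ε > 0, ∃ j, ∀ i, Q (above j (u i)) ≤ ε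

/-- No subsequence of `u` keeps the norms of a sequence of consecutive slabs away from zero. -/
def NoPersistentSlabs (Q : (S → ℝ≥0∞) → ℝ≥0∞) (u : ℕ → S → ℝ≥0∞) : Prop :=
  ∀ ε > 0, ∀ σ a : ℕ → ℕ, StrictMono σ → StrictMono a →
    ∃ k, ∃ᶠ n in atTop, Q (slab (a k) (a (k + 1)) (u (σ n))) ≤ ε

/-- Uniform absolute continuity of the function norm `Q` on a family of functions. -/
def UnifAbsCont {ι : Type*} (μ : Measure S) (Q : (S → ℝ≥0∞) → ℝ≥0∞) (u : ι → S → ℝ≥0∞) : Prop :=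
  ∀ ε > 0, ∃ δ > 0, ∀ A, MeasurableSet A → μ A < δ → ∀ i, Q (A.indicator (u i)) ≤ ε

/-- The subsequence splitting property of a function norm, the small part of each function being
its restriction to a set `(E n)ᶜ` and the sets `E n` being disjoint. -/
def HasSubseqSplitting (μ : Measure S) (Q : (S → ℝ≥0∞) → ℝ≥0∞) : Prop :=
  ∀ f : ℕ → S → ℝ, (∀ n, AEMeasurable (f n) μ) → (∃ C ≠ ⊤, ∀ n, Q (eabs (f n)) ≤ C) →
    ∃ σ : ℕ → ℕ, StrictMono σ ∧ ∃ E : ℕ → Set S, (∀ n, MeasurableSet (E n)) ∧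
      Pairwise (Function.onFun Disjoint E) ∧
      EquiIntegrable Q fun n => eabs ((E n)ᶜ.indicator (f (σ n)))

variable {Q : (S → ℝ≥0∞) → ℝ≥0∞} {v : S → ℝ≥0∞} {u : ℕ → S → ℝ≥0∞}

theorem eabs_indicator {α : Type*} (A : Set α) (f : α → ℝ) :
    eabs (A.indicator f) = A.indicator (eabs f) := by
  ext s
  by_cases hs : s ∈ A <;> simp [eabs, hs]

theorem aemeasurable_above (hv : AEMeasurable v μ) (j : ℕ) : AEMeasurable (above j v) μ :=
  hv.indicator₀ (nullMeasurableSet_lt aemeasurable_const hv)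

theorem measurable_slab (hv : Measurable v) (a b : ℕ) : Measurable (slab a b v) :=
  hv.indicator ((measurableSet_lt measurable_const hv).inter (measurableSet_le hv measurable_const))

theorem above_anti {α : Type*} (v : α → ℝ≥0∞) : Antitone fun j => above j v := fun i j hij =>
  Set.indicator_le_indicator_of_subset (fun s (hs : 2 ^ j < v s) =>
    show 2 ^ i < v s from (pow_le_pow_right₀ one_le_two hij).trans_lt hs) fun _ => zero_le

theorem above_indicator_compl {α : Type*} (j n : ℕ) (v : α → ℝ≥0∞) :
    above j ({s | 2 ^ n < v s}ᶜ.indicator v) = slab j n v := by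
  ext s
  by_cases hn : 2 ^ n < v s <;> by_cases hj : 2 ^ j < v s <;>
    simp [above, slab, Set.indicator, hn, hj, not_le.2, not_lt.1]

theorem slab_eq_zero {α : Type*} {a b : ℕ} (hba : b ≤ a) (v : α → ℝ≥0∞) : slab a b v = 0 :=
  Set.indicator_eq_zero'.2 <| Set.disjoint_left.2 fun _ _ hs =>
    (hs.1.trans_le hs.2).not_ge (pow_le_pow_right₀ one_le_two hba)

theorem exists_strictMono_forall_succ {P : ℕ → ℕ → ℕ → Prop}
    (hP : ∀ n m, ∀ᶠ k in atTop, P n m k) :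
    ∃ τ : ℕ → ℕ, StrictMono τ ∧ ∀ n, P n (τ n) (τ (n + 1)) := by
  choose next hnext using fun n m => ((hP n m).and (eventually_gt_atTop m)).exists
  exact ⟨fun n => n.rec 0 next, strictMono_nat_of_lt_succ fun n => (hnext n _).2,
    fun n => (hnext n _).1⟩

theorem UnifAbsCont.exists_real {ι : Type*} {u : ι → S → ℝ≥0∞} (h : UnifAbsCont μ Q u) {ε : ℝ}
    (hε : 0 < ε) : ∃ δ : ℝ, 0 < δ ∧ ∀ A, MeasurableSet A → μ A < ENNReal.ofReal δ →
      ∀ i, Q (A.indicator (u i)) ≤ ENNReal.ofReal ε := by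
  obtain ⟨δ, hδ, hA⟩ := h (ENNReal.ofReal ε) (ENNReal.ofReal_pos.2 hε)
  obtain ⟨r, hr, hrδ⟩ := ENNReal.lt_iff_exists_nnreal_btwn.1 hδ
  exact ⟨r, mod_cast hr, fun A hAm hAr => hA A hAm (hAr.trans (by simpa using hrδ))⟩

theorem EquiIntegrable.congr {ι : Type*} {u v : ι → S → ℝ≥0∞}
    (h : EquiIntegrable Q u) (hQ : IsFunctionNorm μ Q) (hu : ∀ i, AEMeasurable (u i) μ)
    (huv : ∀ i, u i =ᵐ[μ] v i) : EquiIntegrable Q v := fun ε hε => by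
  obtain ⟨j, hj⟩ := h ε hε
  refine ⟨j, fun i => (hQ.congr (aemeasurable_above (hu i) j) ?_).symm.le.trans (hj i)⟩
  filter_upwards [huv i] with s hs
  simp [above, Set.indicator, hs]

namespace IsFunctionNorm

theorem indicator_gt_one_le (hQ : IsFunctionNorm μ Q) (hv : Measurable v) (n : ℕ) :
    Q ({s | 2 ^ n < v s}.indicator 1) ≤ 2⁻¹ ^ n * Q v := by
  have hE : MeasurableSet {s | 2 ^ n < v s} := measurableSet_lt measurable_const hv
  have hle : (2 : ℝ≥0∞) ^ n * Q ({s | 2 ^ n < v s}.indicator 1) ≤ Q v := by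
    rw [← hQ.smul_eq (ENNReal.pow_ne_top ENNReal.ofNat_ne_top) (aemeasurable_indicator_one hE)]
    refine hQ.mono ((aemeasurable_indicator_one hE).const_smul _) hv.aemeasurable
      (ae_of_all _ fun s => ?_)
    by_cases hs : 2 ^ n < v s
    · simpa [hs] using hs.le
    · simp [hs]
  calc Q ({s | 2 ^ n < v s}.indicator 1)
      = 2⁻¹ ^ n * (2 ^ n * Q ({s | 2 ^ n < v s}.indicator 1)) := by
        rw [← mul_assoc, ← mul_pow, ENNReal.inv_mul_cancel two_ne_zero ENNReal.ofNat_ne_top,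
          one_pow, one_mul]
    _ ≤ 2⁻¹ ^ n * Q v := by gcongr

theorem tendsto_above (hQ : IsFunctionNorm μ Q) (hv : Measurable v) (hfin : Q v ≠ ⊤)
    (htop : ∀ s, v s ≠ ⊤) : Tendsto (fun j => Q (above j v)) atTop (𝓝 0) := by
  refine hQ.tendsto_zero (fun j => aemeasurable_above hv.aemeasurable j) (above_anti v)
    (ne_top_of_le_ne_top hfin (hQ.indicator_le hv.aemeasurable
      (measurableSet_lt measurable_const hv))) (ae_of_all _ fun s => ?_)
  obtain ⟨n, hn⟩ := ENNReal.exists_nat_gt (htop s)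
  refine tendsto_const_nhds.congr' ?_
  filter_upwards [eventually_ge_atTop n] with j hj
  have hle : v s ≤ 2 ^ j := hn.le.trans (mod_cast (hj.trans_lt Nat.lt_two_pow_self).le)
  rw [above, Set.indicator_of_notMem (by simpa using hle)]

theorem equiIntegrable_of_eventually (hQ : IsFunctionNorm μ Q) (hu : ∀ n, Measurable (u n))
    (hfin : ∀ n, Q (u n) ≠ ⊤) (htop : ∀ n s, u n s ≠ ⊤)
    (h : ∀ ε > 0, ∃ j, ∀ᶠ n in atTop, Q (above j (u n)) ≤ ε) : EquiIntegrable Q u := by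
  intro ε hε
  obtain ⟨j, hj⟩ := h ε hε
  obtain ⟨N, hN⟩ := eventually_atTop.1 hj
  have hsmall : ∀ᶠ i in atTop, ∀ n ∈ Finset.range N, Q (above i (u n)) ≤ ε :=
    (eventually_all_finset _).2 fun n _ =>
      ((hQ.tendsto_above (hu n) (hfin n) (htop n)).eventually_le_const hε)
  obtain ⟨i, hi, hji⟩ := (hsmall.and (eventually_ge_atTop j)).exists
  refine ⟨i, fun n => ?_⟩
  rcases lt_or_ge n N with hn | hn
  · exact hi n (Finset.mem_range.2 hn)
  · exact (hQ.mono (aemeasurable_above (hu n).aemeasurable i)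
      (aemeasurable_above (hu n).aemeasurable j) (ae_of_all _ (above_anti _ hji))).trans (hN n hn)

theorem unifAbsCont_of_equiIntegrable (hQ : IsFunctionNorm μ Q) (hone : Q 1 ≠ ⊤) {ι : Type*}
    {u : ι → S → ℝ≥0∞} (hu : ∀ i, AEMeasurable (u i) μ) (h : EquiIntegrable Q u) :
    UnifAbsCont μ Q u := by
  intro ε hε
  obtain ⟨j, hj⟩ := h (ε / 2) (ENNReal.half_pos hε.ne')
  have hpow : (2 : ℝ≥0∞) ^ j ≠ ⊤ := by simp
  obtain ⟨δ, hδ, hA⟩ := hQ.exists_forall_indicator_le (aemeasurable_const (b := 1)) hone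
    (ε := ε / 2 / 2 ^ j) (ENNReal.div_pos (ENNReal.half_pos hε.ne').ne' hpow)
  refine ⟨δ, hδ, fun A hAm hAδ i => ?_⟩
  have hAone := aemeasurable_indicator_one (μ := μ) hAm
  calc Q (A.indicator (u i)) ≤ Q (above j (u i) + (2 : ℝ≥0∞) ^ j • A.indicator 1) := by
        refine hQ.mono ((hu i).indicator hAm)
          ((aemeasurable_above (hu i) j).add (hAone.const_smul _))
          (ae_of_all _ fun s => ?_)
        by_cases hsA : s ∈ A <;> by_cases hs : 2 ^ j < u i s <;>
          simp [above, hsA, hs, not_lt.1]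
    _ ≤ ε / 2 + 2 ^ j * (ε / 2 / 2 ^ j) := by
        refine (hQ.add_le (aemeasurable_above (hu i) j) (hAone.const_smul _)).trans ?_
        rw [hQ.smul_eq hpow hAone]
        gcongr
        exacts [hj i, hA A hAm hAδ]
    _ = ε := by rw [ENNReal.mul_div_cancel (by positivity) hpow, ENNReal.add_halves]

/-- A non-small slab above every level could be iterated to a sequence of consecutive slabs. -/
theorem exists_subseq_slab_le (hQ : IsFunctionNorm μ Q) (hslab : NoPersistentSlabs Q u) :
    ∃ σ : ℕ → ℕ, StrictMono σ ∧
      ∀ ε > 0, ∃ j, ∀ b, ∀ᶠ n in atTop, Q (slab j b (u (σ n))) ≤ ε := by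
  obtain ⟨L, σ, hσ, hL⟩ := CompactSpace.tendsto_subseq fun n (p : ℕ × ℕ) => Q (slab p.1 p.2 (u n))
  have hL' : ∀ a b, Tendsto (fun n => Q (slab a b (u (σ n)))) atTop (𝓝 (L (a, b))) := fun a b =>
    (tendsto_pi_nhds.1 hL) (a, b)
  refine ⟨σ, hσ, fun ε hε => ?_⟩
  by_contra! hcon
  choose b hb using hcon
  obtain ⟨ε', hε', hlt⟩ := exists_between hε
  have hev : ∀ j, ∀ᶠ n in atTop, ε' < Q (slab j (b j) (u (σ n))) := fun j =>
    (hL' j (b j)).eventually_const_lt (hlt.trans_le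
      (ge_of_tendsto_of_frequently (hL' j (b j)) ((hb j).mono fun _ h => le_of_lt h)))
  have hjb : ∀ j, j < b j := fun j => by
    by_contra! hle
    obtain ⟨n, hn⟩ := (hev j).exists
    simp [slab_eq_zero hle, hQ.zero] at hn
  obtain ⟨k, hk⟩ := hslab ε' hε' σ (fun k => b^[k] 0) hσ (strictMono_nat_of_lt_succ fun k => by
    rw [Function.iterate_succ_apply']
    exact hjb _)
  obtain ⟨n, hle, hgt⟩ := (hk.and_eventually (hev (b^[k] 0))).exists
  rw [Function.iterate_succ_apply'] at hle
  exact hgt.not_ge hle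

theorem exists_subseq_truncation (hQ : IsFunctionNorm μ Q) (hslab : NoPersistentSlabs Q u) :
    ∃ σ : ℕ → ℕ, StrictMono σ ∧ ∀ ε > 0, ∃ j, ∀ᶠ n in atTop, Q (slab j n (u (σ n))) ≤ ε := by
  obtain ⟨σ, hσ, h⟩ := hQ.exists_subseq_slab_le hslab
  choose j hj using fun k : ℕ => h (2⁻¹ ^ k) (ENNReal.pow_pos (by simp) k)
  obtain ⟨τ, hτ, hτj⟩ := extraction_forall_of_eventually'
    (P := fun n m => ∀ k ∈ Finset.range (n + 1), Q (slab (j k) n (u (σ m))) ≤ 2⁻¹ ^ k)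
    fun n => eventually_atTop.1 ((eventually_all_finset _).2 fun k _ => hj k n)
  refine ⟨σ ∘ τ, hσ.comp hτ, fun ε hε => ?_⟩
  obtain ⟨k, hk⟩ := ENNReal.exists_inv_two_pow_lt hε.ne'
  refine ⟨j k, ?_⟩
  filter_upwards [eventually_ge_atTop k] with n hn
  exact (hτj n k (Finset.mem_range.2 (by omega))).trans hk.le

theorem exists_subseq_indicator_iUnion_le (hQ : IsFunctionNorm μ Q)
    (hu : ∀ n, AEMeasurable (u n) μ) (hfin : ∀ n, Q (u n) ≠ ⊤) {E : ℕ → Set S}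
    (hE : ∀ n, MeasurableSet (E n)) (hsum : ∑' n, Q ((E n).indicator 1) ≠ ⊤) :
    ∃ τ : ℕ → ℕ, StrictMono τ ∧
      ∀ n, Q ((⋃ k, E (k + τ (n + 1))).indicator (u (τ n))) ≤ 2⁻¹ ^ n := by
  have hlimsup : ∀ n, Q ((limsup E atTop).indicator (u n)) = 0 := fun n =>
    hQ.indicator_eq_zero (hu n) (.measurableSet_limsup hE)
      (hQ.indicator_limsup_eq_zero aemeasurable_const hE hsum)
  exact exists_strictMono_forall_succ
    (P := fun n m k => Q ((⋃ i, E (i + k)).indicator (u m)) ≤ 2⁻¹ ^ n) fun n m =>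
    (hQ.tendsto_indicator_iUnion_tail (hu m) (hfin m) hE (hlimsup m)).eventually_le_const
      (ENNReal.pow_pos (by simp) n)

theorem above_indicator_compl_diff_le (hQ : IsFunctionNorm μ Q) (hv : Measurable v)
    {E U : Set S} (hE : MeasurableSet E) (hU : MeasurableSet U) (j : ℕ) :
    Q (above j ((E \ U)ᶜ.indicator v)) ≤ Q (above j (Eᶜ.indicator v)) + Q (U.indicator v) := by
  have habove := aemeasurable_above (μ := μ) (hv.indicator hE.compl).aemeasurable j
  refine (hQ.mono (aemeasurable_above (hv.indicator (hE.diff hU).compl).aemeasurable j)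
    (habove.add (hv.aemeasurable.indicator hU)) (ae_of_all _ fun s => ?_)).trans
    (hQ.add_le habove (hv.aemeasurable.indicator hU))
  by_cases hsE : s ∈ E <;> by_cases hsU : s ∈ U <;> by_cases hs : 2 ^ j < v s <;>
    simp [above, Set.indicator, hsE, hsU, hs]

theorem tsum_indicator_gt_one_ne_top (hQ : IsFunctionNorm μ Q) (hu : ∀ n, Measurable (u n))
    {C : ℝ≥0∞} (hCtop : C ≠ ⊤) (hC : ∀ n, Q (u n) ≤ C) :
    ∑' n, Q ({s | 2 ^ n < u n s}.indicator 1) ≠ ⊤ := by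
  refine ne_top_of_le_ne_top ?_ (ENNReal.tsum_le_tsum fun n =>
    (hQ.indicator_gt_one_le (hu n) n).trans (mul_le_mul_right (hC _) _))
  rw [ENNReal.tsum_mul_right, ENNReal.tsum_geometric, ENNReal.one_sub_inv_two, inv_inv]
  exact ENNReal.mul_ne_top ENNReal.ofNat_ne_top hCtop

theorem exists_splitting_of_slab_le (hQ : IsFunctionNorm μ Q) (hu : ∀ n, Measurable (u n))
    (htop : ∀ n s, u n s ≠ ⊤) {C : ℝ≥0∞} (hCtop : C ≠ ⊤) (hC : ∀ n, Q (u n) ≤ C)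
    (hslab : ∀ ε > 0, ∃ j, ∀ᶠ n in atTop, Q (slab j n (u n)) ≤ ε) :
    ∃ τ : ℕ → ℕ, StrictMono τ ∧ ∃ E : ℕ → Set S, (∀ n, MeasurableSet (E n)) ∧
      Pairwise (Function.onFun Disjoint E) ∧
      EquiIntegrable Q fun n => (E n)ᶜ.indicator (u (τ n)) := by
  let F : ℕ → Set S := fun n => {s | 2 ^ n < u n s}
  have hF : ∀ n, MeasurableSet (F n) := fun n => measurableSet_lt measurable_const (hu _)
  have hfin : ∀ n, Q (u n) ≠ ⊤ := fun n => ne_top_of_le_ne_top hCtop (hC n)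
  obtain ⟨τ, hτ, hτU⟩ := hQ.exists_subseq_indicator_iUnion_le (fun n => (hu n).aemeasurable) hfin
    hF (hQ.tsum_indicator_gt_one_ne_top hu hCtop hC)
  let U : ℕ → Set S := fun n => ⋃ k, F (k + τ (n + 1))
  have hU : ∀ n, MeasurableSet (U n) := fun n => .iUnion fun k => hF _
  have hE : ∀ n, MeasurableSet (F (τ n) \ U n) := fun n => (hF _).diff (hU n)
  refine ⟨τ, hτ, fun n => F (τ n) \ U n, hE, ?_, ?_⟩
  · refine (pairwise_disjoint_on _).2 fun m n hmn => Set.disjoint_left.2 fun s hsm hsn => hsm.2 ?_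
    have hle : τ (m + 1) ≤ τ n := hτ.monotone hmn
    exact Set.mem_iUnion.2 ⟨τ n - τ (m + 1), by simpa [hle] using hsn.1⟩
  refine hQ.equiIntegrable_of_eventually (fun n => (hu _).indicator (hE n).compl)
    (fun n => ne_top_of_le_ne_top (hfin _) (hQ.indicator_le (hu _).aemeasurable (hE n).compl))
    (fun n s => ne_top_of_le_ne_top (htop _ s) (Set.indicator_le_self _ _ s)) fun ε hε => ?_
  obtain ⟨j, hj⟩ := hslab (ε / 2) (ENNReal.half_pos hε.ne')
  refine ⟨j, ?_⟩
  have hpow := (ENNReal.tendsto_pow_atTop_nhds_zero_of_lt_one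
    (ENNReal.inv_lt_one.2 ENNReal.one_lt_two)).eventually_le_const (ENNReal.half_pos hε.ne')
  filter_upwards [hτ.tendsto_atTop.eventually hj, hpow] with n hjn hpn
  calc Q (above j ((F (τ n) \ U n)ᶜ.indicator (u (τ n))))
      ≤ Q (above j ((F (τ n))ᶜ.indicator (u (τ n)))) + Q ((U n).indicator (u (τ n))) :=
        hQ.above_indicator_compl_diff_le (hu _) (hF _) (hU n) j
    _ ≤ ε / 2 + ε / 2 := by
        rw [above_indicator_compl]
        gcongr
        exact (hτU n).trans hpn
    _ = ε := ENNReal.add_halves ε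

theorem exists_splitting (hQ : IsFunctionNorm μ Q) (hu : ∀ n, Measurable (u n))
    (htop : ∀ n s, u n s ≠ ⊤) {C : ℝ≥0∞} (hCtop : C ≠ ⊤) (hC : ∀ n, Q (u n) ≤ C)
    (hslab : NoPersistentSlabs Q u) :
    ∃ σ : ℕ → ℕ, StrictMono σ ∧ ∃ E : ℕ → Set S, (∀ n, MeasurableSet (E n)) ∧
      Pairwise (Function.onFun Disjoint E) ∧
      EquiIntegrable Q fun n => (E n)ᶜ.indicator (u (σ n)) := by
  obtain ⟨σ, hσ, hσslab⟩ := hQ.exists_subseq_truncation hslab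
  obtain ⟨τ, hτ, E, hE⟩ := hQ.exists_splitting_of_slab_le (fun n => hu (σ n)) (fun n => htop (σ n))
    hCtop (fun n => hC (σ n)) hσslab
  exact ⟨σ ∘ τ, hσ.comp hτ, E, hE⟩

theorem hasSubseqSplitting (hQ : IsFunctionNorm μ Q)
    (hslab : ∀ u : ℕ → S → ℝ≥0∞, (∀ n, Measurable (u n)) → ∀ C ≠ ⊤, (∀ n, Q (u n) ≤ C) →
      NoPersistentSlabs Q u) : HasSubseqSplitting μ Q := by
  rintro f hf ⟨C, hCtop, hC⟩
  let u : ℕ → S → ℝ≥0∞ := fun n => eabs ((hf n).mk (f n))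
  have hu : ∀ n, Measurable (u n) := fun n => (hf n).measurable_mk.abs.ennreal_ofReal
  have hfu : ∀ n, eabs (f n) =ᵐ[μ] u n := fun n => eabs_congr_ae (hf n).ae_eq_mk
  have huC : ∀ n, Q (u n) ≤ C := fun n =>
    (hQ.congr (aemeasurable_eabs (hf n)) (hfu n)).symm.le.trans (hC n)
  obtain ⟨σ, hσ, E, hE, hdisj, hequi⟩ := hQ.exists_splitting hu (fun n s => ENNReal.ofReal_ne_top)
    hCtop huC (hslab u hu C hCtop huC)
  refine ⟨σ, hσ, E, hE, hdisj, hequi.congr hQ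
    (fun n => ((hu _).indicator (hE n).compl).aemeasurable) fun n => ?_⟩
  rw [eabs_indicator]
  filter_upwards [hfu (σ n)] with s hs
  by_cases hsE : s ∈ E n <;> simp [hsE, hs]

end IsFunctionNorm

end Splitting

/-! ### Transferring the splitting to optimal domains -/

section Transfer

theorem mul_le_of_forall_sum_indicator_le {N : ℕ} {D : ℕ → Set S} {E : Set S}
    (hD : ∀ k, MeasurableSet (D k)) {δ θ M : ℝ≥0∞} (hδ : δ ≠ ⊤)
    (hμD : ∀ k < N, δ ≤ μ (D k)) (hμE : μ E ≤ δ / 2)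
    (hsum : ∀ s ∉ E, ∑ k ∈ Finset.range N, (D k).indicator (fun _ => θ) s ≤ M) :
    N * (θ * (δ / 2)) ≤ M * μ Set.univ := by
  have hdiff : ∀ k < N, δ / 2 ≤ μ (D k \ E) := fun k hk =>
    ENNReal.le_of_add_le_add_right (a := δ / 2) (ENNReal.div_ne_top hδ two_ne_zero) <|
      calc δ / 2 + δ / 2 = δ := ENNReal.add_halves δ
        _ ≤ μ (D k) := hμD k hk
        _ ≤ μ (D k ∩ E) + μ (D k \ E) := measure_le_inter_add_sdiff μ (D k) E
        _ ≤ μ (D k \ E) + δ / 2 := by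
          rw [add_comm]
          gcongr
          exact (measure_mono Set.inter_subset_right).trans hμE
  calc N * (θ * (δ / 2)) = ∑ k ∈ Finset.range N, θ * (δ / 2) := by simp
    _ ≤ ∑ k ∈ Finset.range N, θ * μ (D k \ E) := by
        gcongr with k hk
        exact hdiff k (Finset.mem_range.1 hk)
    _ = ∑ k ∈ Finset.range N, ∫⁻ s in Eᶜ, (D k).indicator (fun _ => θ) s ∂μ := by
        simp [hD, Set.sdiff_eq]
    _ = ∫⁻ s in Eᶜ, ∑ k ∈ Finset.range N, (D k).indicator (fun _ => θ) s ∂μ :=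
        (lintegral_finsetSum _ fun k _ => measurable_const.indicator (hD k)).symm
    _ ≤ ∫⁻ _ in Eᶜ, M ∂μ := setLIntegral_mono measurable_const hsum
    _ ≤ M * μ Set.univ := by
        rw [setLIntegral_const]
        gcongr
        exact Set.subset_univ _

theorem sum_indicator_le_of_sum_le {α : Type*} {w G : α → ℝ≥0∞} {p : ℕ → α → ℝ≥0∞} {N : ℕ}
    {θ M : ℝ≥0∞} (hθ : θ ≠ 0) {s : α} (hpG : ∑ k ∈ Finset.range N, p k s ≤ G s)
    (hwp : ∀ k, w s = 0 → p k s = 0) (hs : w s ≠ 0 → G s ≤ M * w s) :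
    ∑ k ∈ Finset.range N, {s | θ * w s < p k s}.indicator (fun _ => θ) s ≤ M := by
  have hdegenerate : (∀ k, ¬θ * w s < p k s) →
      ∑ k ∈ Finset.range N, {s | θ * w s < p k s}.indicator (fun _ => θ) s ≤ M := fun h => by
    simp [h]
  rcases eq_or_ne (w s) 0 with hw0 | hw0
  · exact hdegenerate fun k => by simp [hw0, hwp k hw0]
  rcases eq_or_ne (w s) ⊤ with hwtop | hwtop
  · exact hdegenerate fun k => by simp [hwtop, ENNReal.mul_top hθ]
  refine (ENNReal.mul_le_mul_iff_left hw0 hwtop).1 ?_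
  calc (∑ k ∈ Finset.range N, {s | θ * w s < p k s}.indicator (fun _ => θ) s) * w s
      ≤ ∑ k ∈ Finset.range N, p k s := by
        rw [Finset.sum_mul]
        gcongr with k
        by_cases hk : θ * w s < p k s
        · simpa [hk] using hk.le
        · simp [hk]
    _ ≤ M * w s := hpG.trans (hs hw0)

namespace IsFunctionNorm

variable {ρ : (S → ℝ≥0∞) → ℝ≥0∞} {w : S → ℝ≥0∞}

theorem le_measure_setOf_lt (hρ : IsFunctionNorm μ ρ) (hw : Measurable w) {G p : S → ℝ≥0∞}
    (hG : Measurable G) (hp : Measurable p) (hpG : p ≤ G) {ε θ δ : ℝ≥0∞} (hθ : θ ≠ ⊤)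
    (hθw : θ * ρ w ≤ ε)
    (hδ : ∀ A, MeasurableSet A → μ A < δ → ρ (A.indicator G) ≤ ε) (hεp : ε + ε < ρ p) :
    δ ≤ μ {s | θ * w s < p s} := by
  have hD : MeasurableSet {s | θ * w s < p s} := measurableSet_lt (hw.const_mul θ) hp
  by_contra! hlt
  refine hεp.not_ge ?_
  have hθw' : AEMeasurable (θ • w) μ := (hw.const_smul θ).aemeasurable
  have hGD := hG.aemeasurable.indicator (μ := μ) hD
  calc ρ p ≤ ρ (θ • w + {s | θ * w s < p s}.indicator G) := by
        refine hρ.mono hp.aemeasurable (hθw'.add hGD) (ae_of_all _ fun s => ?_)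
        by_cases hs : θ * w s < p s
        · simpa [hs] using le_add_left (hpG s)
        · simpa [hs] using not_lt.1 hs
    _ ≤ ρ (θ • w) + ρ ({s | θ * w s < p s}.indicator G) := hρ.add_le hθw' hGD
    _ ≤ ε + ε := add_le_add ((hρ.smul_le hθ hw.aemeasurable).trans hθw) (hδ _ hD hlt)

theorem mul_indicator_le (hρ : IsFunctionNorm μ ρ) (hw : AEMeasurable w μ) {G : S → ℝ≥0∞}
    (hG : AEMeasurable G μ) {c : ℝ≥0∞} (hc : c ≠ ⊤) {A : Set S} (hA : MeasurableSet A)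
    (hAG : ∀ s ∈ A, c * w s ≤ G s) : c * ρ (A.indicator w) ≤ ρ G := by
  rw [← hρ.smul_eq hc (hw.indicator hA)]
  refine hρ.mono ((hw.indicator hA).const_smul c) hG (ae_of_all _ fun s => ?_)
  by_cases hs : s ∈ A
  · simpa [hs] using hAG s hs
  · simp [hs]

/-- If all `p k` were large, then so would be the sets `{θ * w < p k}`, hence `∑ k, p k` would
exceed a large multiple of `w` on a set of fixed size, contradicting the bound on `G`. -/
theorem exists_forall_exists_le [IsFiniteMeasure μ] (hρ : IsFunctionNorm μ ρ) (hw : Measurable w)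
    (hwfin : ρ w ≠ ⊤)
    (hdef : ∀ A, MeasurableSet A → ρ (A.indicator w) = 0 → A.indicator w =ᵐ[μ] 0)
    {ι : Type*} {G : ι → S → ℝ≥0∞} (hG : ∀ i, Measurable (G i)) (hGac : UnifAbsCont μ ρ G)
    {C : ℝ≥0∞} (hCtop : C ≠ ⊤) (hC : ∀ i, ρ (G i) ≤ C) {ε : ℝ≥0∞} (hε : 0 < ε) :
    ∃ N : ℕ, ∀ i (p : ℕ → S → ℝ≥0∞), (∀ k, Measurable (p k)) →
      (∀ s, ∑ k ∈ Finset.range N, p k s ≤ G i s) → (∀ k s, w s = 0 → p k s = 0) →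
      ∃ k < N, ρ (p k) ≤ ε := by
  have hε2 : 0 < ε / 2 := ENNReal.half_pos hε.ne'
  obtain ⟨δ', hδ', hGδ⟩ := hGac (ε / 2) hε2
  let δ := min δ' 1
  have hδ : 0 < δ := lt_min hδ' one_pos
  have hδtop : δ ≠ ⊤ := ne_top_of_le_ne_top ENNReal.one_ne_top (min_le_right _ _)
  let θ := min (ε / 2 / ρ w) 1
  have hθ : 0 < θ := lt_min (ENNReal.div_pos hε2.ne' hwfin) one_pos
  have hθtop : θ ≠ ⊤ := ne_top_of_le_ne_top ENNReal.one_ne_top (min_le_right _ _)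
  obtain ⟨η, hη, hηδ⟩ := hρ.exists_forall_measure_le hw.aemeasurable hdef (ENNReal.half_pos hδ.ne')
  obtain ⟨M, hM⟩ := ENNReal.exists_nat_mul_gt hη.ne' hCtop
  obtain ⟨N, hN⟩ := ENNReal.exists_nat_mul_gt (a := θ * (δ / 2)) (b := M * μ Set.univ)
    (mul_ne_zero hθ.ne' (ENNReal.half_pos hδ.ne').ne') (by finiteness)
  refine ⟨N, fun i p hp hpG hwp => ?_⟩
  by_contra! hlarge
  let E : Set S := {s | w s ≠ 0} ∩ {s | M * w s < G i s}
  have hE : MeasurableSet E := (measurableSet_eq_fun hw measurable_const).compl.inter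
    (measurableSet_lt (hw.const_mul _) (hG i))
  have hμE : μ E ≤ δ / 2 := by
    refine hηδ E hE (fun s hs => hs.1) (not_lt.1 fun hlt => hM.not_ge ?_)
    calc M * η ≤ M * ρ (E.indicator w) := by gcongr
      _ ≤ C := (hρ.mul_indicator_le hw.aemeasurable (hG i).aemeasurable
          (ENNReal.natCast_ne_top M) hE fun s hs => hs.2.le).trans (hC i)
  refine hN.not_ge (mul_le_of_forall_sum_indicator_le
    (D := fun k => {s | θ * w s < p k s}) (fun k => measurableSet_lt (hw.const_mul θ) (hp k))
    hδtop (fun k hk => ?_) hμE fun s hs => ?_)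
  · refine hρ.le_measure_setOf_lt hw (hG i) (hp k) (fun s => ?_) hθtop
      (ENNReal.mul_le_of_le_div (min_le_left _ _))
      (fun A hA hAδ => hGδ A hA (hAδ.trans_le (min_le_left _ _)) i)
      (by simpa using hlarge k hk)
    exact (Finset.single_le_sum (f := fun k => p k s) (fun _ _ => zero_le)
      (Finset.mem_range.2 hk)).trans (hpG s)
  · exact sum_indicator_le_of_sum_le hθ.ne' (hpG s) (fun k => hwp k s) fun hw0 =>
      not_lt.1 fun hlt => hs ⟨hw0, hlt⟩

end IsFunctionNorm

theorem tendsto_measure_zero_of_aedisjoint [IsFiniteMeasure μ] {A : ℕ → Set S}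
    (hA : ∀ n, MeasurableSet (A n)) (hdisj : Pairwise (Function.onFun (AEDisjoint μ) A)) :
    Tendsto (fun n => μ (A n)) atTop (𝓝 0) :=
  ENNReal.tendsto_atTop_zero_of_tsum_ne_top <| ne_top_of_le_ne_top (measure_ne_top μ _) <|
    tsum_meas_le_meas_iUnion_of_disjoint₀ μ (fun n => (hA n).nullMeasurableSet) hdisj

theorem BFS.SSP.exists_unifAbsCont [IsFiniteMeasure μ] {B : BFS S μ X} (hSSP : B.SSP)
    {F : ℕ → S → ℝ≥0∞} {C : ℝ≥0∞} (hCtop : C ≠ ⊤) (hC : ∀ n, B.extNorm (F n) ≤ C) :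
    ∃ σ : ℕ → ℕ, StrictMono σ ∧ ∃ A : ℕ → Set S, (∀ n, MeasurableSet (A n)) ∧
      Tendsto (fun n => μ (A n)) atTop (𝓝 0) ∧
      UnifAbsCont μ B.extNorm fun n => (A n)ᶜ.indicator (F (σ n)) := by
  choose x hx using fun n => BFS.exists_represents (ne_top_of_le_ne_top hCtop (hC n))
  obtain ⟨σ, hσ, g, h, hxgh, -, hg, hh⟩ := hSSP x ⟨C.toReal, fun n => by
    have hxC := (hx n).extNorm_eq ▸ hC n
    exact toReal_enorm (x n) ▸ ENNReal.toReal_mono hCtop hxC⟩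
  let H : ℕ → S → ℝ := fun n => (B.aemeasurable (h n)).mk
  have hH : ∀ n, B.J (h n) =ᵐ[μ] H n := fun n => (B.aemeasurable (h n)).ae_eq_mk
  have hA : ∀ n, MeasurableSet {s | H n s ≠ 0} := fun n =>
    (measurableSet_eq_fun (B.aemeasurable (h n)).measurable_mk measurable_const).compl
  refine ⟨σ, hσ, fun n => {s | H n s ≠ 0}, hA,
    tendsto_measure_zero_of_aedisjoint hA fun i j hij => ?_, fun ε hε => ?_⟩
  · refine measure_eq_zero_iff_ae_notMem.2 ?_
    filter_upwards [hh i j hij, hH i, hH j] with s hs hi hj hmem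
    exact mul_ne_zero hmem.1 hmem.2 (by rw [← hi, ← hj]; exact hs)
  obtain ⟨r, hr, hrε⟩ := ENNReal.lt_iff_exists_nnreal_btwn.1 hε
  obtain ⟨δ, hδ, hgδ⟩ := hg r (mod_cast hr)
  refine ⟨ENNReal.ofReal δ, ENNReal.ofReal_pos.2 hδ, fun A' hA' hμA' n => le_trans ?_ hrε.le⟩
  obtain ⟨y, hy⟩ := B.exists_indicator (g n) hA'
  have hyr : ‖y‖ ≤ r := hgδ A' hA' hμA' _ ⟨n, rfl⟩ y hy
  calc B.extNorm (A'.indicator ({s | H n s ≠ 0}ᶜ.indicator (F (σ n))))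
      ≤ B.extNorm (eabs (B.J y)) := by
        refine BFS.extNorm_mono (((hx _).aemeasurable.indicator (hA n).compl).indicator hA') ?_
        filter_upwards [hx (σ n), hy, hH n] with s hxs hys hHs
        by_cases hsA : s ∈ A' <;> by_cases hs : H n s = 0
        · have hxg : B.J (x (σ n)) s = B.J (g n) s := by
            rw [hxgh n, map_add, Pi.add_apply, hHs, hs, add_zero]
          simp [eabs, hsA, hs, hys, ← hxg, ← hxs.2, hxs.1]
        all_goals simp [hsA, hs]
    _ = ‖y‖ₑ := B.extNorm_eabs y
    _ ≤ r := by rw [← ofReal_norm]; exact ENNReal.ofReal_le_of_le_toReal hyr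

end Transfer

section Kernel

theorem slab_add_slab {α : Type*} {a b c : ℕ} (hab : a ≤ b) (hbc : b ≤ c) (v : α → ℝ≥0∞) :
    slab a b v + slab b c v = slab a c v := by
  ext s
  have hab' : (2 : ℝ≥0∞) ^ a ≤ 2 ^ b := pow_le_pow_right₀ one_le_two hab
  have hbc' : (2 : ℝ≥0∞) ^ b ≤ 2 ^ c := pow_le_pow_right₀ one_le_two hbc
  rcases le_or_gt (v s) (2 ^ b) with hs | hs
  · simp [slab, Set.indicator, hs.not_gt, hs, hs.trans hbc']
  · simp [slab, Set.indicator, hs.not_ge, hs, hab'.trans_lt hs]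

theorem sum_slab {α : Type*} {a : ℕ → ℕ} (ha : Monotone a) (v : α → ℝ≥0∞) (N : ℕ) :
    ∑ k ∈ Finset.range N, slab (a k) (a (k + 1)) v = slab (a 0) (a N) v := by
  induction N with
  | zero => simp [slab_eq_zero le_rfl]
  | succ N ih =>
    rw [Finset.sum_range_succ, ih, slab_add_slab (ha N.zero_le) (ha N.le_succ)]

theorem slab_le_self {α : Type*} (a b : ℕ) (v : α → ℝ≥0∞) : slab a b v ≤ v :=
  Set.indicator_le_self _ _

theorem slab_le_smul_one {α : Type*} (a b : ℕ) (v : α → ℝ≥0∞) : slab a b v ≤ (2 : ℝ≥0∞) ^ b • 1 :=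
  Set.indicator_le fun s hs => by simpa using hs.2

variable {R : Type*} [MeasurableSpace R] {ν : Measure R} {K : S → R → ℝ≥0∞} {v : R → ℝ≥0∞}

theorem kernelOp_slab_le {α : Type*} {K : α → R → ℝ≥0∞} (a b : ℕ) (v : R → ℝ≥0∞) :
    kernelOp ν K (slab a b v) ≤ (2 : ℝ≥0∞) ^ b • kernelOp ν K 1 := by
  rw [← kernelOp_smul (by simp)]
  exact kernelOp_mono (ae_of_all _ (slab_le_smul_one a b v))

theorem sum_kernelOp_slab_le (hK : Measurable (Function.uncurry K)) (hv : Measurable v)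
    {a : ℕ → ℕ} (ha : Monotone a) (N : ℕ) :
    ∑ k ∈ Finset.range N, kernelOp ν K (slab (a k) (a (k + 1)) v) ≤ kernelOp ν K v := by
  rw [← kernelOp_sum hK fun k => (measurable_slab hv _ _).aemeasurable, sum_slab ha]
  exact kernelOp_mono (ae_of_all _ (slab_le_self _ _ _))

theorem IsFunctionNorm.tendsto_indicator_kernelOp_slab [SFinite ν] {ρ : (S → ℝ≥0∞) → ℝ≥0∞}
    (hρ : IsFunctionNorm μ ρ) (hK : Measurable (Function.uncurry K))
    (hone : ρ (kernelOp ν K 1) ≠ ⊤) {v : ℕ → R → ℝ≥0∞} (hv : ∀ n, Measurable (v n))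
    {A : ℕ → Set S} (hA : ∀ n, MeasurableSet (A n)) (hμA : Tendsto (fun n => μ (A n)) atTop (𝓝 0))
    (a b : ℕ) :
    Tendsto (fun n => ρ ((A n).indicator (kernelOp ν K (slab a b (v n))))) atTop (𝓝 0) := by
  have hw := (measurable_kernelOp hK (aemeasurable_const (μ := ν) (b := 1))).aemeasurable (μ := μ)
  have hb : (2 : ℝ≥0∞) ^ b ≠ ⊤ := by simp
  refine ENNReal.tendsto_nhds_zero.2 fun ε hε => ?_
  obtain ⟨δ, hδ, h⟩ := hρ.exists_forall_indicator_le (hw.const_smul ((2 : ℝ≥0∞) ^ b))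
    (ne_top_of_le_ne_top (ENNReal.mul_ne_top hb hone) (hρ.smul_le hb hw)) hε
  filter_upwards [hμA.eventually_lt_const hδ] with n hn
  have hT : Measurable (kernelOp ν K (slab a b (v n))) :=
    measurable_kernelOp hK (measurable_slab (hv n) a b).aemeasurable
  exact (hρ.mono (hT.aemeasurable.indicator (hA n)) ((hw.const_smul _).indicator (hA n))
    (ae_of_all _ fun _ => Set.indicator_le_indicator' fun _ => kernelOp_slab_le a b _ _)).trans
    (h _ (hA n) hn)

theorem IsFunctionNorm.exists_indicator_kernelOp_slab_le [IsFiniteMeasure μ] [SFinite ν]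
    {ρ : (S → ℝ≥0∞) → ℝ≥0∞} (hρ : IsFunctionNorm μ ρ)
    (hdef : ∀ {w : S → ℝ≥0∞}, ρ w = 0 → w =ᵐ[μ] 0) (hK : Measurable (Function.uncurry K))
    (hone : ρ (kernelOp ν K 1) ≠ ⊤) {v : ℕ → R → ℝ≥0∞} (hv : ∀ n, Measurable (v n)) {C : ℝ≥0∞}
    (hCtop : C ≠ ⊤) (hC : ∀ n, ρ (kernelOp ν K (v n)) ≤ C) {A : ℕ → Set S}
    (hA : ∀ n, MeasurableSet (A n))
    (hac : UnifAbsCont μ ρ fun n => (A n).indicator (kernelOp ν K (v n))) {a : ℕ → ℕ}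
    (ha : Monotone a) {ε : ℝ≥0∞} (hε : 0 < ε) :
    ∃ N, ∀ n, ∃ k < N,
      ρ ((A n).indicator (kernelOp ν K (slab (a k) (a (k + 1)) (v n)))) ≤ ε := by
  have hT : ∀ {v}, Measurable v → Measurable (kernelOp ν K v) := fun hv =>
    measurable_kernelOp hK hv.aemeasurable
  obtain ⟨N, hN⟩ := hρ.exists_forall_exists_le (hT measurable_one) hone (fun _ _ => hdef)
    (fun n => (hT (hv n)).indicator (hA n)) hac hCtop
    (fun n => (hρ.indicator_le (hT (hv n)).aemeasurable (hA n)).trans (hC n)) hε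
  refine ⟨N, fun n => hN n
    (fun k => (A n).indicator (kernelOp ν K (slab (a k) (a (k + 1)) (v n))))
    (fun k => (hT (measurable_slab (hv n) _ _)).indicator (hA n)) (fun s => ?_) fun k s hs => ?_⟩
  · by_cases hsA : s ∈ A n
    · simpa [hsA] using sum_kernelOp_slab_le (ν := ν) hK (hv n) ha N s
    · simp [hsA]
  · refine Set.indicator_apply_eq_zero.2 fun _ => le_zero_iff.1 ?_
    simpa [hs] using kernelOp_slab_le (ν := ν) (K := K) (a k) (a (k + 1)) (v n) s

theorem BFS.SSP.noPersistentSlabs_kernelNorm [IsFiniteMeasure μ] [SFinite ν] {B : BFS S μ X}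
    (hSSP : B.SSP) (hρ : IsFunctionNorm μ B.extNorm) (hK : Measurable (Function.uncurry K))
    (hone : B.kernelNorm ν K 1 ≠ ⊤) {u : ℕ → R → ℝ≥0∞} (hu : ∀ n, Measurable (u n))
    {C : ℝ≥0∞} (hCtop : C ≠ ⊤) (hC : ∀ n, B.kernelNorm ν K (u n) ≤ C) :
    NoPersistentSlabs (B.kernelNorm ν K) u := by
  intro ε hε σ a _ ha
  obtain ⟨τ, hτ, A, hA, hμA, hac⟩ := hSSP.exists_unifAbsCont hCtop fun n => hC (σ n)
  obtain ⟨N, hN⟩ := hρ.exists_indicator_kernelOp_slab_le BFS.ae_eq_zero_of_extNorm_eq_zero hK hone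
    (fun n => hu (σ (τ n))) hCtop (fun n => hC _) (fun n => (hA n).compl) hac ha.monotone
    (ENNReal.half_pos hε.ne')
  by_contra! hlarge
  have hlarge' : ∀ᶠ n in atTop, ∀ k ∈ Finset.range N,
      ε < B.extNorm (kernelOp ν K (slab (a k) (a (k + 1)) (u (σ (τ n))))) :=
    (eventually_all_finset _).2 fun k _ =>
      hτ.tendsto_atTop.eventually (hlarge k)
  have hsmall : ∀ᶠ n in atTop, ∀ k ∈ Finset.range N,
      B.extNorm ((A n).indicator (kernelOp ν K (slab (a k) (a (k + 1)) (u (σ (τ n)))))) ≤ ε / 2 :=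
    (eventually_all_finset _).2 fun k _ =>
      (hρ.tendsto_indicator_kernelOp_slab hK hone (fun n => hu (σ (τ n))) hA hμA _
        _).eventually_le_const (ENNReal.half_pos hε.ne')
  obtain ⟨n, hlt, hle⟩ := (hlarge'.and hsmall).exists
  obtain ⟨k, hk, hkε⟩ := hN n
  have hTslab : Measurable (kernelOp ν K (slab (a k) (a (k + 1)) (u (σ (τ n))))) :=
    measurable_kernelOp hK (measurable_slab (hu _) _ _).aemeasurable
  refine (hlt k (Finset.mem_range.2 hk)).not_ge ?_
  calc B.extNorm (kernelOp ν K (slab (a k) (a (k + 1)) (u (σ (τ n)))))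
      ≤ B.extNorm ((A n).indicator _) + B.extNorm ((A n)ᶜ.indicator _) :=
        hρ.le_indicator_add_indicator_compl hTslab.aemeasurable (hA n)
    _ ≤ ε / 2 + ε / 2 := add_le_add (hle k (Finset.mem_range.2 hk)) hkε
    _ = ε := ENNReal.add_halves ε

end Kernel

/-! ### Rearrangement invariant spaces -/

section RearrangementInvariant

/-- The initial interval `[0, t)` of the half-line, for an extended length `t`. -/
def initialInterval (t : ℝ≥0∞) : Set ℝ := {s | 0 ≤ s ∧ ENNReal.ofReal s < t}

theorem measurableSet_initialInterval (t : ℝ≥0∞) : MeasurableSet (initialInterval t) :=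
  (measurableSet_le measurable_const measurable_id).inter
    (measurableSet_lt ENNReal.measurable_ofReal measurable_const)

theorem initialInterval_mono : Monotone initialInterval :=
  fun _ _ hab _ hs => ⟨hs.1, hs.2.trans_le hab⟩

theorem initialInterval_zero : initialInterval 0 = ∅ := by
  simp [initialInterval]

theorem mu01_initialInterval (t : ℝ≥0∞) : mu01 (initialInterval t) = min t 1 := by
  have htop : min t 1 ≠ ⊤ := ne_top_of_le_ne_top ENNReal.one_ne_top (min_le_right t 1)
  rw [mu01, Measure.restrict_apply (measurableSet_initialInterval t)]
  apply le_antisymm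
  · calc volume (initialInterval t ∩ Set.Icc 0 1) ≤ volume (Set.Icc 0 (min t 1).toReal) :=
          measure_mono fun s hs => ⟨hs.1.1, (ENNReal.ofReal_le_iff_le_toReal htop).1
            (le_min hs.1.2.le (ENNReal.ofReal_le_one.2 hs.2.2))⟩
      _ = min t 1 := by simp [htop]
  · calc min t 1 = volume (Set.Ico 0 (min t 1).toReal) := by simp [htop]
      _ ≤ volume (initialInterval t ∩ Set.Icc 0 1) := measure_mono fun s hs => by
          obtain ⟨hst, hs1⟩ := lt_min_iff.1 ((ENNReal.ofReal_lt_iff_lt_toReal hs.1 htop).2 hs.2)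
          exact ⟨⟨hs.1, hst⟩, hs.1, (ENNReal.ofReal_lt_one.1 hs1).le⟩

instance : IsProbabilityMeasure mu01 := ⟨by simp [mu01]⟩

theorem mu01_initialInterval_sdiff_le (t η : ℝ≥0∞) :
    mu01 (initialInterval (t + η) \ initialInterval t) ≤ η := by
  rw [measure_sdiff (initialInterval_mono le_self_add)
    (measurableSet_initialInterval t).nullMeasurableSet (measure_ne_top _ _),
    mu01_initialInterval, mu01_initialInterval, tsub_le_iff_left]
  rcases le_total t 1 with ht | ht
  · rw [min_eq_left ht]
    exact min_le_left _ _
  · rw [min_eq_right ht]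
    exact (min_le_right _ _).trans le_self_add

/-- The decreasing function on `[0, 1]` with dyadic values whose superlevel sets at the levels
`2 ^ i` have the prescribed lengths `t i`. -/
def layers (t : ℕ → ℝ≥0∞) (s : ℝ) : ℝ≥0∞ :=
  ⨆ i, (initialInterval (t i)).indicator (fun _ => 2 ^ i) s

theorem measurable_layers (t : ℕ → ℝ≥0∞) : Measurable (layers t) :=
  .iSup fun _ => measurable_const.indicator (measurableSet_initialInterval _)

theorem layers_mono : Monotone layers := fun _ _ h s =>
  iSup_mono fun i =>
    Set.indicator_le_indicator_of_subset (initialInterval_mono (h i)) (fun _ => zero_le) s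

theorem le_layers {t : ℕ → ℝ≥0∞} {i : ℕ} {s : ℝ} (hs : s ∈ initialInterval (t i)) :
    2 ^ i ≤ layers t s :=
  le_iSup_of_le i (by simp [hs])

theorem layers_le_iff {t : ℕ → ℝ≥0∞} {s : ℝ} {c : ℝ≥0∞} :
    layers t s ≤ c ↔ ∀ i, s ∈ initialInterval (t i) → 2 ^ i ≤ c := by
  refine iSup_le_iff.trans (forall_congr' fun i => ?_)
  by_cases hs : s ∈ initialInterval (t i) <;> simp [hs]

theorem mu01_lt_layers_le {t : ℕ → ℝ≥0∞} {τ c : ℝ≥0∞} (h : ∀ i, τ < 2 ^ i → t i ≤ c) :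
    mu01 {s | τ < layers t s} ≤ c := by
  calc mu01 {s | τ < layers t s} ≤ mu01 (initialInterval c) := by
        refine measure_mono fun s (hs : τ < layers t s) => ?_
        by_contra hsc
        refine hs.not_ge (layers_le_iff.2 fun i hi => not_lt.1 fun hτ => hsc ?_)
        exact initialInterval_mono (h i hτ) hi
    _ ≤ c := (mu01_initialInterval c).trans_le (min_le_left _ _)

variable {B : BFS ℝ mu01 X} {u : ℝ → ℝ≥0∞}

theorem BFS.RI.extNorm_le (hRI : B.RI) {v : ℝ → ℝ≥0∞} (hu : AEMeasurable u mu01)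
    (hutop : ∀ s, u s ≠ ⊤) (h : ∀ τ, mu01 {s | τ < u s} ≤ mu01 {s | τ < v s}) :
    B.extNorm u ≤ B.extNorm v := by
  refine le_iInf₂ fun x hx => ?_
  obtain ⟨y, hy, hyx⟩ := hRI x (fun s => (u s).toReal) hu.ennreal_toReal fun τ hτ => by
    calc mu01 {s | τ < |(u s).toReal|} = mu01 {s | ENNReal.ofReal τ < u s} := by
          simp only [ENNReal.abs_toReal, ENNReal.ofReal_lt_iff_lt_toReal hτ.le (hutop _)]
      _ ≤ mu01 {s | ENNReal.ofReal τ < v s} := h _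
      _ ≤ mu01 {s | τ < |B.J x s|} := by
          refine measure_mono_ae ?_
          filter_upwards [hx] with s hs (hτs : ENNReal.ofReal τ < v s)
          change τ < |B.J x s|
          rw [← hs.2, ENNReal.abs_toReal]
          exact (ENNReal.ofReal_lt_iff_lt_toReal hτ.le hs.1).1 hτs
  have hyu : B.Represents u y := by
    filter_upwards [hy] with s hs
    exact ⟨hutop s, hs.symm⟩
  rwa [hyu.extNorm_eq, enorm_le_iff_norm_le]

theorem BFS.RI.extNorm_indicator_one_le (hRI : B.RI) {A E : Set ℝ} (hA : MeasurableSet A)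
    (hAE : mu01 A ≤ mu01 E) : B.extNorm (A.indicator 1) ≤ B.extNorm (E.indicator 1) := by
  refine hRI.extNorm_le (aemeasurable_indicator_one hA)
    (fun s => ne_top_of_le_ne_top ENNReal.one_ne_top (Set.indicator_le_self _ _ s)) fun τ => ?_
  have hlevel : ∀ D : Set ℝ, {s | τ < D.indicator 1 s} = {s | s ∈ D ∧ τ < 1} := fun D => by
    ext s
    by_cases hs : s ∈ D <;> simp [hs]
  by_cases hτ : τ < 1 <;> simp [hlevel, hτ, hAE]

theorem BFS.RI.extNorm_one_ne_top (hRI : B.RI) {E : Set ℝ} (hE : mu01 E ≠ 0)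
    (hEfin : B.extNorm (E.indicator 1) ≠ ⊤) : B.extNorm 1 ≠ ⊤ := by
  have hfin : ∀ k : ℕ, B.extNorm ((initialInterval (k * mu01 E)).indicator 1) ≠ ⊤ := by
    intro k
    induction k with
    | zero =>
      rw [Nat.cast_zero, zero_mul, initialInterval_zero, Set.indicator_empty']
      exact B.extNorm_zero.trans_ne ENNReal.zero_ne_top
    | succ k ih =>
      have hI := fun t => measurableSet_initialInterval t
      have hsub : initialInterval (k * mu01 E) ⊆ initialInterval (k * mu01 E + mu01 E) :=
        initialInterval_mono le_self_add
      rw [Nat.cast_succ, add_one_mul, ← Set.indicator_self_add_compl (initialInterval (k * mu01 E))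
        ((initialInterval _).indicator 1), Set.indicator_indicator, Set.indicator_indicator,
        Set.inter_eq_left.2 hsub, ← Set.sdiff_eq_compl_inter]
      refine ne_top_of_le_ne_top (ENNReal.add_ne_top.2 ⟨ih, ?_⟩) BFS.extNorm_add_le
      exact ne_top_of_le_ne_top hEfin (hRI.extNorm_indicator_one_le ((hI _).diff (hI _))
        (mu01_initialInterval_sdiff_le _ _))
  obtain ⟨k, hk⟩ := ENNReal.exists_nat_mul_gt hE ENNReal.one_ne_top
  rw [← Set.indicator_univ (1 : ℝ → ℝ≥0∞)]
  refine ne_top_of_le_ne_top (hfin k) (hRI.extNorm_indicator_one_le .univ ?_)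
  rw [mu01_initialInterval, min_eq_right hk.le, measure_univ]

theorem BFS.RI.extNorm_one_ne_top_of_ne_zero (hRI : B.RI) (hρ : IsFunctionNorm mu01 B.extNorm)
    {x : X} (hx : x ≠ 0) : B.extNorm 1 ≠ ⊤ := by
  let v : ℝ → ℝ≥0∞ := eabs ((B.aemeasurable x).mk _)
  have hv : Measurable v := (B.aemeasurable x).measurable_mk.abs.ennreal_ofReal
  have hxv : eabs (B.J x) =ᵐ[mu01] v := eabs_congr_ae (B.aemeasurable x).ae_eq_mk
  have hvx : B.extNorm v = ‖x‖ₑ :=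
    (hρ.congr hv.aemeasurable hxv.symm).trans (B.extNorm_eabs x)
  have hv0 : ¬v =ᵐ[mu01] 0 := fun h => hx <| enorm_eq_zero.1 <| by
    rw [← hvx, hρ.congr hv.aemeasurable h, B.extNorm_zero]
  obtain ⟨n, hn⟩ : ∃ n : ℕ, mu01 {s | (n : ℝ≥0∞)⁻¹ < v s} ≠ 0 := by
    by_contra! hnull
    refine hv0 ?_
    filter_upwards [ae_all_iff.2 fun n => measure_eq_zero_iff_ae_notMem.1 (hnull n)] with s hs
    by_contra h0
    obtain ⟨n, hn⟩ := ENNReal.exists_inv_nat_lt h0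
    exact hs n hn
  refine hRI.extNorm_one_ne_top hn fun htop => ?_
  have hc : (n : ℝ≥0∞)⁻¹ ≠ ⊤ := fun h => hn (by simp [h])
  have hle := hρ.mul_indicator_le (w := 1) aemeasurable_const hv.aemeasurable hc
    (measurableSet_lt measurable_const hv) fun s hs => (mul_one _).trans_le (le_of_lt hs)
  rw [hvx] at hle
  exact (hle.trans_lt enorm_lt_top).ne (by rw [htop, ENNReal.mul_top (by simp)])

theorem BFS.RI.extNorm_layers_le (hRI : B.RI) {t : ℕ → ℝ≥0∞} {N : ℕ} (hN : ∀ i, N < i → t i = 0)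
    (h : ∀ i, t i ≤ mu01 {s | 2 ^ i < u s}) : B.extNorm (layers t) ≤ B.extNorm u := by
  refine hRI.extNorm_le (measurable_layers t).aemeasurable (fun s => ?_) fun τ => ?_
  · refine ne_top_of_le_ne_top (b := 2 ^ N) (by simp) (layers_le_iff.2 fun i hi => ?_)
    refine pow_le_pow_right₀ one_le_two (not_lt.1 fun hNi => ?_)
    simp [initialInterval_zero, hN i hNi] at hi
  · exact mu01_lt_layers_le fun i hi => (h i).trans (measure_mono fun s hs => hi.trans hs)

theorem BFS.RI.extNorm_layers_le_of_tendsto (hRI : B.RI) (hρ : IsFunctionNorm mu01 B.extNorm)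
    {u : ℕ → ℝ → ℝ≥0∞} {C : ℝ≥0∞} (hC : ∀ n, B.extNorm (u n) ≤ C) {L : ℕ → ℝ≥0∞}
    (hL : ∀ i, Tendsto (fun n => mu01 {s | 2 ^ i < u n s}) atTop (𝓝 (L i)))
    (hLtop : ∀ i, L i ≠ ⊤) : B.extNorm (layers L) ≤ C := by
  let t : ℕ → ℕ → ℝ≥0∞ := fun N i => if i ≤ N then L i - (N : ℝ≥0∞)⁻¹ else 0
  have ht : Monotone t := fun M N hMN i => by
    by_cases hi : i ≤ M
    · simp only [t, hi, hi.trans hMN, if_true]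
      gcongr
    · simp [t, hi]
  have hsup : layers L ≤ ⨆ N, layers (t N) := fun s => layers_le_iff.2 fun i hi => by
    have hlim : Tendsto (fun N : ℕ => L i - (N : ℝ≥0∞)⁻¹) atTop (𝓝 (L i)) := by
      simpa using ENNReal.Tendsto.sub (tendsto_const_nhds (x := L i))
        ENNReal.tendsto_inv_nat_nhds_zero (.inl (hLtop i))
    obtain ⟨N, hN, hiN⟩ := ((hlim.eventually_const_lt hi.2).and (eventually_ge_atTop i)).exists
    rw [iSup_apply]
    exact le_iSup_of_le N (le_layers ⟨hi.1, by simpa [t, hiN] using hN⟩)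
  have hmeas := fun N => (measurable_layers (t N)).aemeasurable (μ := mu01)
  refine (hρ.mono (measurable_layers L).aemeasurable (aemeasurable_iSup hmeas)
    (ae_of_all _ hsup)).trans (hρ.iSup_le hmeas (layers_mono.comp ht) fun N => ?_)
  have hev : ∀ᶠ n in atTop, ∀ i ∈ Finset.range (N + 1),
      L i - (N : ℝ≥0∞)⁻¹ ≤ mu01 {s | 2 ^ i < u n s} :=
    (eventually_all_finset _).2 fun i _ =>
      ((ENNReal.tendsto_nhds (hLtop i)).1 (hL i) _ (by simp)).mono fun n hn => hn.1
  obtain ⟨n, hn⟩ := hev.exists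
  refine (hRI.extNorm_layers_le (N := N) (fun i hi => by simp [t, hi.not_ge]) fun i => ?_).trans
    (hC n)
  by_cases hi : i ≤ N
  · simpa [t, hi] using hn i (Finset.mem_range.2 (by omega))
  · simp [t, hi]

theorem exists_dyadic_level {α : Type*} {v : α → ℝ≥0∞} {τ : ℝ≥0∞} {a b : ℕ} {s : α}
    (hs : τ < slab a b v s) :
    ∃ i, a ≤ i ∧ i < b ∧ τ < 2 ^ (i + 1) ∧ ∀ s, τ < slab a b v s → 2 ^ i < v s := by
  have hmem : ∀ {s}, τ < slab a b v s → 2 ^ a < v s ∧ v s ≤ 2 ^ b ∧ τ < v s := fun {s} hs => by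
    have hs' := Set.mem_of_indicator_ne_zero (zero_le.trans_lt hs).ne'
    exact ⟨hs'.1, hs'.2, hs.trans_le (slab_le_self a b v s)⟩
  obtain ⟨has, hsb, hτs⟩ := hmem hs
  have hab : a < b := not_le.1 fun hba =>
    (has.trans_le hsb).not_ge (pow_le_pow_right₀ one_le_two hba)
  have hex : ∃ i, a ≤ i ∧ τ < 2 ^ (i + 1) :=
    ⟨b - 1, by omega, by rw [Nat.sub_add_cancel (by omega)]; exact hτs.trans_le hsb⟩
  classical
  refine ⟨Nat.find hex, (Nat.find_spec hex).1, ?_, (Nat.find_spec hex).2, fun s hs => ?_⟩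
  · refine (Nat.find_min' hex ⟨(by omega : a ≤ b - 1), ?_⟩).trans_lt (by omega)
    rw [Nat.sub_add_cancel (by omega)]
    exact hτs.trans_le hsb
  · rcases (Nat.find_spec hex).1.eq_or_lt with heq | hlt
    · exact heq ▸ (hmem hs).1
    · have hmin := Nat.find_min hex (m := Nat.find hex - 1) (by omega)
      rw [Nat.sub_add_cancel (by omega), not_and, not_lt] at hmin
      exact (hmin (by omega)).trans_lt (hmem hs).2.2

theorem BFS.RI.extNorm_slab_le (hRI : B.RI) (hu : Measurable u) {t : ℕ → ℝ≥0∞} {a b : ℕ}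
    (h : ∀ i, a ≤ i → i < b → mu01 {s | 2 ^ i < u s} ≤ t i) :
    B.extNorm (slab a b u) ≤ B.extNorm ((2 : ℝ≥0∞) • layers t) := by
  refine hRI.extNorm_le (measurable_slab hu a b).aemeasurable
    (fun s => ne_top_of_le_ne_top (by simp) (slab_le_smul_one a b u s)) fun τ => ?_
  rcases Set.eq_empty_or_nonempty {s | τ < slab a b u s} with hempty | ⟨s, hs⟩
  · simp [hempty]
  obtain ⟨i, hai, hib, hτi, hi⟩ := exists_dyadic_level hs
  calc mu01 {s | τ < slab a b u s} ≤ mu01 {s | 2 ^ i < u s} := measure_mono fun s => hi s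
    _ ≤ mu01 (initialInterval (t i)) := by
        rw [mu01_initialInterval]
        exact le_min (h i hai hib) prob_le_one
    _ ≤ mu01 {s | τ < ((2 : ℝ≥0∞) • layers t) s} := measure_mono fun s hs =>
        hτi.trans_le (pow_succ' (2 : ℝ≥0∞) i ▸ mul_le_mul_right (le_layers hs) 2)

theorem layers_le_indicator_add {L t : ℕ → ℝ≥0∞} (hL : Antitone L) {a b : ℕ}
    (ht : ∀ i, i < a ∨ b ≤ i → t i = 0) :
    layers t ≤ (initialInterval (L a)).indicator (layers L) +
      (2 : ℝ≥0∞) ^ b • (⋃ i ∈ Finset.range b,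
        initialInterval (t i) \ initialInterval (L i)).indicator 1 := by
  refine fun s => layers_le_iff.2 fun i hi => ?_
  have hai : a ≤ i ∧ i < b := by
    by_contra! hcon
    simp [ht i (by omega), initialInterval_zero] at hi
  by_cases hs : s ∈ initialInterval (L i)
  · refine le_add_right ?_
    rw [Set.indicator_of_mem (initialInterval_mono (hL hai.1) hs)]
    exact le_layers hs
  · have hmem : s ∈ ⋃ i ∈ Finset.range b, initialInterval (t i) \ initialInterval (L i) :=
      Set.mem_iUnion₂.2 ⟨i, Finset.mem_range.2 hai.2, hi, hs⟩
    refine le_add_left ?_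
    rw [Pi.smul_apply, Set.indicator_of_mem hmem]
    simpa using pow_le_pow_right₀ one_le_two hai.2.le

theorem IsFunctionNorm.tendsto_indicator_initialInterval_layers
    {ρ : (ℝ → ℝ≥0∞) → ℝ≥0∞} (hρ : IsFunctionNorm mu01 ρ) {L : ℕ → ℝ≥0∞} (hL : Antitone L)
    (hfin : ρ (layers L) ≠ ⊤) (htop : ∀ᵐ s ∂mu01, layers L s ≠ ⊤) :
    Tendsto (fun a => ρ ((initialInterval (L a)).indicator (layers L))) atTop (𝓝 0) := by
  have hmeas := (measurable_layers L).aemeasurable (μ := mu01)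
  have hI := fun a => measurableSet_initialInterval (L a)
  refine hρ.tendsto_zero (fun a => hmeas.indicator (hI a))
    (fun a b hab => Set.indicator_le_indicator_of_subset (initialInterval_mono (hL hab))
      fun _ => zero_le) (ne_top_of_le_ne_top hfin (hρ.indicator_le hmeas (hI 0))) ?_
  filter_upwards [htop] with s hs
  obtain ⟨n, hn⟩ := ENNReal.exists_nat_gt hs
  refine tendsto_const_nhds.congr' ?_
  filter_upwards [eventually_ge_atTop n] with a ha
  refine (Set.indicator_of_notMem (fun hmem => hn.not_ge ?_) _).symm
  calc (n : ℝ≥0∞) ≤ 2 ^ a := mod_cast (ha.trans_lt Nat.lt_two_pow_self).le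
    _ ≤ layers L s := le_layers hmem

theorem mu01_biUnion_initialInterval_sdiff_le {L t : ℕ → ℝ≥0∞} {η : ℝ≥0∞}
    (h : ∀ i, t i ≤ L i + η) (b : ℕ) :
    mu01 (⋃ i ∈ Finset.range b, initialInterval (t i) \ initialInterval (L i)) ≤ η * b :=
  calc mu01 (⋃ i ∈ Finset.range b, initialInterval (t i) \ initialInterval (L i))
      ≤ ∑ i ∈ Finset.range b, mu01 (initialInterval (t i) \ initialInterval (L i)) :=
        measure_biUnion_finset_le _ _
    _ ≤ ∑ _i ∈ Finset.range b, η := Finset.sum_le_sum fun i _ =>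
        (measure_mono (Set.sdiff_subset_sdiff_left (initialInterval_mono (h i)))).trans
          (mu01_initialInterval_sdiff_le _ _)
    _ = η * b := by simp [mul_comm]

theorem IsFunctionNorm.exists_layers_le {ρ : (ℝ → ℝ≥0∞) → ℝ≥0∞} (hρ : IsFunctionNorm mu01 ρ)
    (hone : ρ 1 ≠ ⊤) {L : ℕ → ℝ≥0∞} (hL : Antitone L) (a b : ℕ) {ε : ℝ≥0∞} (hε : 0 < ε) :
    ∃ η > 0, ρ (layers fun i => if a ≤ i ∧ i < b then L i + η else 0) ≤
      ρ ((initialInterval (L a)).indicator (layers L)) + ε := by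
  have hpow : (2 : ℝ≥0∞) ^ b ≠ ⊤ := by simp
  obtain ⟨δ, hδ, hsmall⟩ := hρ.exists_forall_indicator_le (aemeasurable_const (b := 1)) hone
    (ENNReal.div_pos hε.ne' hpow)
  obtain ⟨η, hη, hηδ⟩ := ENNReal.exists_nnreal_pos_mul_lt (ENNReal.natCast_ne_top b) hδ.ne'
  refine ⟨η, mod_cast hη, ?_⟩
  set t : ℕ → ℝ≥0∞ := fun i => if a ≤ i ∧ i < b then L i + η else 0
  let D : Set ℝ := ⋃ i ∈ Finset.range b, initialInterval (t i) \ initialInterval (L i)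
  have hI := measurableSet_initialInterval
  have hD : MeasurableSet D := .biUnion (Finset.countable_toSet _) fun _ _ => (hI _).diff (hI _)
  have hDδ : mu01 D < δ := (mu01_biUnion_initialInterval_sdiff_le (η := η) (fun i => by
    dsimp only [t]; split_ifs <;> simp) b).trans_lt hηδ
  have hmeas := (measurable_layers L).aemeasurable.indicator (μ := mu01) (hI (L a))
  have hDone := (aemeasurable_indicator_one (μ := mu01) hD).const_smul ((2 : ℝ≥0∞) ^ b)
  calc ρ (layers t) ≤ _ := hρ.mono (measurable_layers t).aemeasurable
        (hmeas.add hDone) (ae_of_all _ (layers_le_indicator_add hL fun i hi => by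
          simp only [t, ite_eq_right_iff]; omega))
    _ ≤ _ + (2 : ℝ≥0∞) ^ b * ρ (D.indicator 1) := (hρ.add_le hmeas hDone).trans
        (add_le_add_right (hρ.smul_le hpow (aemeasurable_indicator_one hD)) _)
    _ ≤ _ + ε := by
        gcongr
        exact ENNReal.mul_le_of_le_div' (hsmall D hD hDδ)

theorem BFS.RI.eventually_extNorm_slab_le (hRI : B.RI) (hρ : IsFunctionNorm mu01 B.extNorm)
    (hone : B.extNorm 1 ≠ ⊤) {u : ℕ → ℝ → ℝ≥0∞} (hu : ∀ n, Measurable (u n)) {L : ℕ → ℝ≥0∞}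
    (hLanti : Antitone L) (hLtop : ∀ i, L i ≠ ⊤)
    (hL : ∀ i, Tendsto (fun n => mu01 {s | 2 ^ i < u n s}) atTop (𝓝 (L i)))
    (a b : ℕ) {ε : ℝ≥0∞} (hε : 0 < ε) :
    ∀ᶠ n in atTop, B.extNorm (slab a b (u n)) ≤
      2 * (B.extNorm ((initialInterval (L a)).indicator (layers L)) + ε) := by
  obtain ⟨η, hη, hlayers⟩ := hρ.exists_layers_le hone hLanti a b hε
  have hev : ∀ᶠ n in atTop, ∀ i ∈ Finset.range b, mu01 {s | 2 ^ i < u n s} ≤ L i + η :=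
    (eventually_all_finset _).2 fun i _ =>
      ((ENNReal.tendsto_nhds (hLtop i)).1 (hL i) η hη).mono fun n hn => hn.2
  filter_upwards [hev] with n hn
  calc B.extNorm (slab a b (u n))
      ≤ B.extNorm ((2 : ℝ≥0∞) • layers fun i => if a ≤ i ∧ i < b then L i + η else 0) :=
        hRI.extNorm_slab_le (hu n) fun i hai hib => by
          simpa [hai, hib] using hn i (Finset.mem_range.2 hib)
    _ ≤ 2 * B.extNorm (layers fun i => if a ≤ i ∧ i < b then L i + η else 0) :=
        BFS.extNorm_smul_le (by simp)
    _ ≤ _ := by gcongr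

/-- Along a subsequence the dyadic distribution functions of `u n` converge to that of a function
`layers L` in the space, and the slabs of `layers L` become small. -/
theorem BFS.RI.noPersistentSlabs (hRI : B.RI) (hρ : IsFunctionNorm mu01 B.extNorm)
    (hone : B.extNorm 1 ≠ ⊤) {u : ℕ → ℝ → ℝ≥0∞} (hu : ∀ n, Measurable (u n)) {C : ℝ≥0∞}
    (hCtop : C ≠ ⊤) (hC : ∀ n, B.extNorm (u n) ≤ C) : NoPersistentSlabs B.extNorm u := by
  intro ε hε σ a _ ha
  obtain ⟨L, τ, hτ, hL⟩ :=
    CompactSpace.tendsto_subseq fun n (i : ℕ) => mu01 {s | 2 ^ i < u (σ n) s}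
  have hL' : ∀ i, Tendsto (fun n => mu01 {s | 2 ^ i < u (σ (τ n)) s}) atTop (𝓝 (L i)) :=
    tendsto_pi_nhds.1 hL
  have hLtop : ∀ i, L i ≠ ⊤ := fun i =>
    ne_top_of_le_ne_top ENNReal.one_ne_top (le_of_tendsto' (hL' i) fun n => prob_le_one)
  have hLanti : Antitone L := fun i j hij => le_of_tendsto_of_tendsto' (hL' j) (hL' i) fun n =>
    measure_mono fun s (hs : 2 ^ j < _) => show 2 ^ i < u (σ (τ n)) s from
      (pow_le_pow_right₀ one_le_two hij).trans_lt hs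
  have hfin : B.extNorm (layers L) ≠ ⊤ := ne_top_of_le_ne_top hCtop
    (hRI.extNorm_layers_le_of_tendsto hρ (fun n => hC (σ (τ n))) hL' hLtop)
  have hε4 : 0 < ε / 2 / 2 := ENNReal.half_pos (ENNReal.half_pos hε.ne').ne'
  obtain ⟨k, hk⟩ := (((hρ.tendsto_indicator_initialInterval_layers hLanti hfin
    (BFS.ae_ne_top_of_extNorm_ne_top hfin)).comp ha.tendsto_atTop).eventually_le_const hε4).exists
  refine ⟨k, hτ.tendsto_atTop.frequently (Eventually.frequently ?_)⟩
  filter_upwards [hRI.eventually_extNorm_slab_le hρ hone (fun n => hu (σ (τ n))) hLanti hLtop hL'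
    (a k) (a (k + 1)) hε4] with n hn
  calc _ ≤ 2 * (B.extNorm ((initialInterval (L (a k))).indicator (layers L)) + ε / 2 / 2) := hn
    _ ≤ 2 * (ε / 2 / 2 + ε / 2 / 2) := by gcongr; exact hk
    _ = ε := by rw [ENNReal.add_halves, ENNReal.mul_div_cancel two_ne_zero ENNReal.ofNat_ne_top]

end RearrangementInvariant

section SubseqSplitting

variable {Q : (S → ℝ≥0∞) → ℝ≥0∞}

/-- Membership in the function space defined by the function norm `Q`. -/
def HasFiniteNorm (μ : Measure S) (Q : (S → ℝ≥0∞) → ℝ≥0∞) (f : S → ℝ) : Prop :=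
  AEMeasurable f μ ∧ Q (eabs f) ≠ ⊤

/-- The norm of the function space defined by the function norm `Q`; it is `0` where `Q` is
infinite. -/
def realNorm (Q : (S → ℝ≥0∞) → ℝ≥0∞) (f : S → ℝ) : ℝ :=
  (Q (eabs f)).toReal

theorem HasFiniteNorm.indicator {f : S → ℝ} (hf : HasFiniteNorm μ Q f) (hQ : IsFunctionNorm μ Q)
    {A : Set S} (hA : MeasurableSet A) : HasFiniteNorm μ Q (A.indicator f) :=
  ⟨hf.1.indicator hA, eabs_indicator A f ▸
    ne_top_of_le_ne_top hf.2 (hQ.indicator_le (aemeasurable_eabs hf.1) hA)⟩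

theorem mul_indicator_eq_zero_of_disjoint {α : Type*} {A A' : Set α} (h : Disjoint A A')
    (f g : α → ℝ) : (fun s => A.indicator f s * A'.indicator g s) = 0 := by
  ext s
  by_cases hs : s ∈ A
  · simp [Set.disjoint_left.1 h hs]
  · simp [hs]

theorem HasSubseqSplitting.hasSSP (h : HasSubseqSplitting μ Q) (hQ : IsFunctionNorm μ Q)
    (hone : Q 1 ≠ ⊤) : HasSSP μ (HasFiniteNorm μ Q) (realNorm Q) := by
  rintro f hf ⟨C, hC⟩
  obtain ⟨σ, hσ, E, hE, hdisj, hequi⟩ := h f (fun n => (hf n).1)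
    ⟨ENNReal.ofReal C, ENNReal.ofReal_ne_top, fun n =>
      (ENNReal.ofReal_toReal (hf n).2).symm.le.trans (ENNReal.ofReal_le_ofReal (hC n))⟩
  have huac := hQ.unifAbsCont_of_equiIntegrable hone
    (fun n => aemeasurable_eabs ((hf _).1.indicator (hE n).compl)) hequi
  refine ⟨σ, hσ, fun n => (E n)ᶜ.indicator (f (σ n)), fun n => (E n).indicator (f (σ n)),
    fun n => (hf _).indicator hQ (hE n).compl, fun n => (hf _).indicator hQ (hE n),
    fun n => (Set.indicator_compl_add_self _ _).symm,
    fun n => .of_eq (mul_indicator_eq_zero_of_disjoint disjoint_compl_left _ _), fun ε hε => ?_,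
    fun i j hij => .of_eq (mul_indicator_eq_zero_of_disjoint (hdisj hij) _ _)⟩
  obtain ⟨δ, hδ, hA⟩ := huac.exists_real hε
  refine ⟨δ, hδ, fun A hAm hAδ g ⟨n, hn⟩ => ENNReal.toReal_le_of_le_ofReal hε.le ?_⟩
  rw [← hn, eabs_indicator]
  exact hA A hAm hAδ n

variable {B : BFS S μ X}

theorem HasSubseqSplitting.ssp (h : HasSubseqSplitting μ B.extNorm)
    (hρ : IsFunctionNorm μ B.extNorm) (hone : B.extNorm 1 ≠ ⊤) : B.SSP := by
  rintro f ⟨C, hC⟩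
  obtain ⟨σ, hσ, E, hE, hdisj, hequi⟩ := h (fun n => B.J (f n)) (fun n => B.aemeasurable _)
    ⟨ENNReal.ofReal C, ENNReal.ofReal_ne_top, fun n => by
      rw [B.extNorm_eabs, ← ofReal_norm]; exact ENNReal.ofReal_le_ofReal (hC n)⟩
  have huac := hρ.unifAbsCont_of_equiIntegrable hone
    (fun n => aemeasurable_eabs ((B.aemeasurable _).indicator (hE n).compl)) hequi
  choose g hg using fun n => B.exists_indicator (f (σ n)) (hE n).compl
  choose k hk using fun n => B.exists_indicator (f (σ n)) (hE n)
  refine ⟨σ, hσ, g, k, fun n => B.ext_ae ?_,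
    fun n => ((hg n).mul (hk n)).trans
      (.of_eq (mul_indicator_eq_zero_of_disjoint disjoint_compl_left _ _)), fun ε hε => ?_,
    fun i j hij => ((hk i).mul (hk j)).trans
      (.of_eq (mul_indicator_eq_zero_of_disjoint (hdisj hij) _ _))⟩
  · rw [map_add, ← Set.indicator_compl_add_self (E n) (B.J (f (σ n)))]
    exact ((hg n).add (hk n)).symm
  obtain ⟨δ, hδ, hA⟩ := huac.exists_real hε
  refine ⟨δ, hδ, ?_⟩
  rintro A hAm hAδ _ ⟨n, rfl⟩ y hy
  have hyA : eabs (B.J y) =ᵐ[μ] A.indicator (eabs ((E n)ᶜ.indicator (B.J (f (σ n))))) := by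
    rw [← eabs_indicator]
    refine eabs_congr_ae (hy.trans ?_)
    filter_upwards [hg n] with s hs
    by_cases hsA : s ∈ A <;> simp [hsA, hs]
  rw [← ENNReal.ofReal_le_ofReal_iff hε.le, ofReal_norm, ← B.extNorm_eabs,
    hρ.congr (aemeasurable_eabs (B.aemeasurable y)) hyA]
  exact hA A hAm hAδ n

theorem BFS.RI.ssp {B : BFS ℝ mu01 X} (hRI : B.RI)
    (hrefl : Function.Surjective (NormedSpace.inclusionInDoubleDual ℝ X)) : B.SSP := by
  have hρ := B.isFunctionNorm_extNorm hrefl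
  by_cases hX : ∃ x : X, x ≠ 0
  · obtain ⟨x, hx⟩ := hX
    have hone := hRI.extNorm_one_ne_top_of_ne_zero hρ hx
    exact (hρ.hasSubseqSplitting fun u hu C hCtop hC =>
      hRI.noPersistentSlabs hρ hone hu hCtop hC).ssp hρ hone
  · push Not at hX
    exact fun f _ => ⟨id, strictMono_id, 0, 0, fun n => by simp [hX],
      fun n => ae_of_all _ fun s => by simp, fun ε hε => ⟨1, one_pos, fun A _ _ x _ y _ => by
        simpa [hX y] using hε.le⟩, fun i j _ => ae_of_all _ fun s => by simp⟩

end SubseqSplitting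

/-! ### Cesàro means and the Banach–Saks property of Hilbert spaces -/

section Cesaro

/-- The arithmetic mean of the first `N` terms of `x`; it is `0` for `N = 0`. -/
def cesaro {E : Type*} [AddCommGroup E] [Module ℝ E] (x : ℕ → E) (N : ℕ) : E :=
  (N : ℝ)⁻¹ • ∑ k ∈ Finset.range N, x k

theorem cesaro_add {E : Type*} [AddCommGroup E] [Module ℝ E] (x y : ℕ → E) :
    cesaro (x + y) = cesaro x + cesaro y := by
  ext N
  simp only [cesaro, Pi.add_apply, Finset.sum_add_distrib, smul_add]

theorem map_cesaro {E F : Type*} [AddCommGroup E] [Module ℝ E] [AddCommGroup F] [Module ℝ F]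
    (T : E →ₗ[ℝ] F) (x : ℕ → E) (N : ℕ) : T (cesaro x N) = cesaro (fun k => T (x k)) N := by
  simp only [cesaro, map_smul, map_sum]

section Seminormed

variable {E : Type*} [SeminormedAddCommGroup E] [NormedSpace ℝ E]

theorem norm_cesaro_le {x : ℕ → E} {C : ℝ} (hC : ∀ n, ‖x n‖ ≤ C) (N : ℕ) : ‖cesaro x N‖ ≤ C := by
  have hC0 : 0 ≤ C := (norm_nonneg _).trans (hC 0)
  rcases N.eq_zero_or_pos with rfl | hN
  · simpa [cesaro] using hC0
  calc ‖cesaro x N‖ ≤ (N : ℝ)⁻¹ * ∑ k ∈ Finset.range N, ‖x k‖ := by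
        rw [cesaro, norm_smul, norm_inv, Real.norm_natCast]
        gcongr
        exact norm_sum_le _ _
    _ ≤ (N : ℝ)⁻¹ * (N * C) := by
        gcongr
        simpa using Finset.sum_le_card_nsmul (Finset.range N) _ C fun k _ => hC k
    _ = C := inv_mul_cancel_left₀ (by positivity) C

/-- All subsequences of `x` have Cauchy Cesàro means. -/
def CesaroCauchy (x : ℕ → E) : Prop :=
  ∀ τ : ℕ → ℕ, StrictMono τ → CauchySeq (cesaro (x ∘ τ))

theorem CesaroCauchy.smul {x : ℕ → E} (h : CesaroCauchy x) (c : ℝ) :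
    CesaroCauchy fun n => c • x n := fun τ hτ => by
  have hmap : cesaro ((fun n => c • x n) ∘ τ) = fun N => c • cesaro (x ∘ τ) N :=
    funext fun N => (map_cesaro (LinearMap.lsmul ℝ E c) (x ∘ τ) N).symm
  rw [hmap]
  exact (h τ hτ).map (uniformContinuous_const_smul c)

theorem cauchySeq_cesaro_of_approx {x : ℕ → E}
    (h : ∀ ε > 0, ∃ y : ℕ → E, (∀ n, ‖x n - y n‖ ≤ ε) ∧ CauchySeq (cesaro y)) :
    CauchySeq (cesaro x) := by
  refine Metric.cauchySeq_iff.2 fun ε hε => ?_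
  obtain ⟨y, hxy, hy⟩ := h (ε / 3) (by positivity)
  obtain ⟨N, hN⟩ := Metric.cauchySeq_iff.1 hy (ε / 3) (by positivity)
  have hclose (n : ℕ) : dist (cesaro x n) (cesaro y n) ≤ ε / 3 := by
    have hadd : cesaro x = cesaro (x - y) + cesaro y := by rw [← cesaro_add, sub_add_cancel]
    rw [dist_eq_norm, hadd, Pi.add_apply, add_sub_cancel_right]
    exact norm_cesaro_le hxy n
  refine ⟨N, fun m hm n hn => ?_⟩
  calc dist (cesaro x m) (cesaro x n)
      ≤ dist (cesaro x m) (cesaro y m) + dist (cesaro y m) (cesaro y n) +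
          dist (cesaro y n) (cesaro x n) := dist_triangle4 _ _ _ _
    _ < ε / 3 + ε / 3 + ε / 3 := by
        rw [dist_comm (cesaro y n)]
        linarith [hclose m, hclose n, hN m hm n hn]
    _ = ε := by ring

end Seminormed

section Hilbert

variable {H : Type*} [NormedAddCommGroup H] [InnerProductSpace ℝ H]

theorem exists_subseq_forall_tendsto {a : ℕ → ℕ → ℝ} {C : ℝ} (hC : ∀ m n, |a m n| ≤ C) :
    ∃ φ : ℕ → ℕ, StrictMono φ ∧ ∃ l : ℕ → ℝ, (∀ m, |l m| ≤ C) ∧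
      ∀ m, Tendsto (fun n => a m (φ n)) atTop (𝓝 (l m)) := by
  obtain ⟨l, hl, φ, hφ, hlim⟩ :=
    (isCompact_univ_pi fun _ : ℕ => isCompact_closedBall (0 : ℝ) C).tendsto_subseq
      (x := fun n m => a m n) fun n m _ => by simpa using hC m n
  exact ⟨φ, hφ, l, fun m => by simpa using hl m (Set.mem_univ m), tendsto_pi_nhds.1 hlim⟩

/-- The Gram matrix of `x` is constant up to a summable error off the diagonal. -/
def AlmostConstantGram (x : ℕ → H) : Prop :=
  ∃ c D : ℝ, 0 ≤ D ∧
    ∀ i j, |inner ℝ (x i) (x j) - c| ≤ (if i = j then D else 0) + 2⁻¹ ^ i + 2⁻¹ ^ j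

theorem AlmostConstantGram.comp {x : ℕ → H} (h : AlmostConstantGram x) {τ : ℕ → ℕ}
    (hτ : StrictMono τ) : AlmostConstantGram (x ∘ τ) := by
  obtain ⟨c, D, hD, hx⟩ := h
  have hpow (i : ℕ) : (2⁻¹ : ℝ) ^ τ i ≤ 2⁻¹ ^ i :=
    pow_le_pow_of_le_one (by norm_num) (by norm_num) (hτ.id_le i)
  refine ⟨c, D, hD, fun i j => (hx (τ i) (τ j)).trans ?_⟩
  simp only [hτ.injective.eq_iff]
  linarith [hpow i, hpow j]

theorem almostConstantGram_of_forall_lt {x : ℕ → H} {C c : ℝ} (hC : ∀ n, ‖x n‖ ≤ C)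
    (h : ∀ i j, i < j → |inner ℝ (x i) (x j) - c| ≤ 2⁻¹ ^ i) : AlmostConstantGram x := by
  refine ⟨c, C ^ 2 + |c|, by positivity, fun i j => ?_⟩
  have hpos (n : ℕ) : (0 : ℝ) < 2⁻¹ ^ n := by positivity
  rcases lt_trichotomy i j with hij | rfl | hij
  · rw [if_neg hij.ne]
    linarith [h i j hij, hpos j]
  · have hdiag : |inner ℝ (x i) (x i) - c| ≤ C ^ 2 + |c| := by
      refine (abs_sub _ _).trans ?_
      rw [real_inner_self_eq_norm_sq, abs_of_nonneg (by positivity)]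
      gcongr
      exact hC i
    rw [if_pos rfl]
    linarith [hpos i]
  · rw [if_neg hij.ne', real_inner_comm]
    linarith [h j i hij, hpos i]

theorem exists_almostConstantGram {x : ℕ → H} {C : ℝ} (hC : ∀ n, ‖x n‖ ≤ C) :
    ∃ σ : ℕ → ℕ, StrictMono σ ∧ AlmostConstantGram (x ∘ σ) := by
  have hinner (m n : ℕ) : |inner ℝ (x m) (x n)| ≤ C * C :=
    (abs_real_inner_le_norm _ _).trans
      (mul_le_mul (hC m) (hC n) (norm_nonneg _) ((norm_nonneg _).trans (hC m)))
  obtain ⟨φ, hφ, l, hl, hlim⟩ := exists_subseq_forall_tendsto hinner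
  obtain ⟨c, -, ψ, hψ, hc⟩ := (isCompact_closedBall (0 : ℝ) (C * C)).tendsto_subseq
    (x := l ∘ φ) fun n => by simpa using hl (φ n)
  have hrow (m : ℕ) : Tendsto (fun n => inner ℝ (x m) (x (φ (ψ n)))) atTop (𝓝 (l m)) :=
    (hlim m).comp hψ.tendsto_atTop
  obtain ⟨θ, hθ, hcθ⟩ := extraction_forall_of_eventually fun n =>
    Metric.tendsto_nhds.1 hc (2⁻¹ ^ n / 2) (by positivity)
  set y : ℕ → H := fun n => x (φ (ψ (θ n)))
  obtain ⟨τ, hτ, hnext⟩ := exists_strictMono_forall_succ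
    (P := fun n m k => ∀ k' ≥ k, |inner ℝ (y m) (y k') - l (φ (ψ (θ m)))| < 2⁻¹ ^ n / 2)
    fun n m => eventually_forall_ge_atTop.2 <|
      Metric.tendsto_nhds.1 ((hrow _).comp hθ.tendsto_atTop) (2⁻¹ ^ n / 2) (by positivity)
  refine ⟨fun n => φ (ψ (θ (τ n))), hφ.comp (hψ.comp (hθ.comp hτ)),
    almostConstantGram_of_forall_lt (c := c) (fun n => hC _) fun i j hij => ?_⟩
  have hpow : (2⁻¹ : ℝ) ^ τ i ≤ 2⁻¹ ^ i :=
    pow_le_pow_of_le_one (by norm_num) (by norm_num) (hτ.id_le i)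
  have hfar := hnext i (τ j) (hτ.monotone hij)
  have hlimit : |l (φ (ψ (θ (τ i)))) - c| < 2⁻¹ ^ τ i / 2 := hcθ (τ i)
  exact (abs_sub_le _ (l (φ (ψ (θ (τ i))))) _).trans (by linarith! [hfar.le])

theorem sum_range_ite_eq_le {D : ℝ} (hD : 0 ≤ D) (i M : ℕ) :
    ∑ j ∈ Finset.range M, (if i = j then D else 0) ≤ D := by
  rw [Finset.sum_ite_eq]
  split_ifs <;> simp [hD]

theorem sum_inv_two_pow_le (s : Finset ℕ) : ∑ i ∈ s, (2⁻¹ : ℝ) ^ i ≤ 2 := by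
  have h := summable_geometric_two.sum_le_tsum s fun i _ => by positivity
  rw [tsum_geometric_two] at h
  simpa using h

theorem abs_inner_cesaro_sub_le {x : ℕ → H} {c D : ℝ}
    (hx : ∀ i j, |inner ℝ (x i) (x j) - c| ≤ (if i = j then D else 0) + 2⁻¹ ^ i + 2⁻¹ ^ j)
    (hD : 0 ≤ D) {N M : ℕ} (hN : 0 < N) (hM : 0 < M) :
    |inner ℝ (cesaro x N) (cesaro x M) - c| ≤ (D + 2) * ((N : ℝ)⁻¹ + (M : ℝ)⁻¹) := by
  have hexpand : inner ℝ (cesaro x N) (cesaro x M) - c = (N : ℝ)⁻¹ * (M : ℝ)⁻¹ *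
      ∑ i ∈ Finset.range N, ∑ j ∈ Finset.range M, (inner ℝ (x i) (x j) - c) := by
    simp only [cesaro, real_inner_smul_left, real_inner_smul_right, sum_inner, inner_sum,
      Finset.sum_sub_distrib, Finset.sum_const, Finset.card_range, nsmul_eq_mul,
      ← Finset.mul_sum]
    rw [Finset.sum_comm]
    field_simp
  have hrow (i : ℕ) : ∑ j ∈ Finset.range M, |inner ℝ (x i) (x j) - c| ≤ D + M * 2⁻¹ ^ i + 2 := by
    refine (Finset.sum_le_sum fun j _ => hx i j).trans ?_
    rw [Finset.sum_add_distrib, Finset.sum_add_distrib, Finset.sum_const, Finset.card_range,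
      nsmul_eq_mul]
    linarith [sum_range_ite_eq_le hD i M, sum_inv_two_pow_le (Finset.range M)]
  have hsum : |∑ i ∈ Finset.range N, ∑ j ∈ Finset.range M, (inner ℝ (x i) (x j) - c)| ≤
      (D + 2) * (N + M) := by
    calc |∑ i ∈ Finset.range N, ∑ j ∈ Finset.range M, (inner ℝ (x i) (x j) - c)|
        ≤ ∑ i ∈ Finset.range N, (D + M * 2⁻¹ ^ i + 2) :=
          (Finset.abs_sum_le_sum_abs _ _).trans <| Finset.sum_le_sum fun i _ =>
            (Finset.abs_sum_le_sum_abs _ _).trans (hrow i)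
      _ = (D + 2) * N + M * ∑ i ∈ Finset.range N, (2⁻¹ : ℝ) ^ i := by
          simp only [Finset.sum_add_distrib, Finset.sum_const, Finset.card_range, nsmul_eq_mul,
            Finset.mul_sum]
          ring
      _ ≤ (D + 2) * (N + M) := by nlinarith [sum_inv_two_pow_le (Finset.range N)]
  rw [hexpand, abs_mul, abs_of_pos (by positivity)]
  calc (N : ℝ)⁻¹ * (M : ℝ)⁻¹ * _ ≤ (N : ℝ)⁻¹ * (M : ℝ)⁻¹ * ((D + 2) * (N + M)) := by gcongr
    _ = (D + 2) * ((N : ℝ)⁻¹ + (M : ℝ)⁻¹) := by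
        field_simp
        ring

theorem AlmostConstantGram.cauchySeq_cesaro {x : ℕ → H} (h : AlmostConstantGram x) :
    CauchySeq (cesaro x) := by
  obtain ⟨c, D, hD, hx⟩ := h
  have hdist {N M : ℕ} (hN : 0 < N) (hM : 0 < M) :
      dist (cesaro x N) (cesaro x M) ^ 2 ≤ 4 * (D + 2) * ((N : ℝ)⁻¹ + (M : ℝ)⁻¹) := by
    have hNN := abs_le.1 (abs_inner_cesaro_sub_le hx hD hN hN)
    have hMM := abs_le.1 (abs_inner_cesaro_sub_le hx hD hM hM)
    have hNM := abs_le.1 (abs_inner_cesaro_sub_le hx hD hN hM)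
    rw [dist_eq_norm, ← real_inner_self_eq_norm_sq, real_inner_sub_sub_self]
    linarith [hNN.2, hMM.2, hNM.1]
  have hlim : Tendsto (fun p : ℕ × ℕ => 4 * (D + 2) * ((p.1 : ℝ)⁻¹ + (p.2 : ℝ)⁻¹)) atTop
      (𝓝 0) := by
    rw [← prod_atTop_atTop_eq]
    simpa using ((tendsto_inv_atTop_nhds_zero_nat (𝕜 := ℝ)).comp tendsto_fst |>.add
      ((tendsto_inv_atTop_nhds_zero_nat (𝕜 := ℝ)).comp tendsto_snd)).const_mul (4 * (D + 2))
  have hsq : Tendsto (fun p : ℕ × ℕ => dist (cesaro x p.1) (cesaro x p.2) ^ 2) atTop (𝓝 0) :=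
    squeeze_zero' (Eventually.of_forall fun _ => by positivity)
      ((eventually_ge_atTop (1, 1)).mono fun p hp => hdist hp.1 hp.2) hlim
  refine cauchySeq_iff_tendsto_dist_atTop_0.2 ?_
  simpa [Real.sqrt_sq dist_nonneg] using hsq.sqrt

theorem exists_cesaroCauchy {x : ℕ → H} {C : ℝ} (hC : ∀ n, ‖x n‖ ≤ C) :
    ∃ σ : ℕ → ℕ, StrictMono σ ∧ CesaroCauchy (x ∘ σ) :=
  let ⟨σ, hσ, hx⟩ := exists_almostConstantGram hC
  ⟨σ, hσ, fun _ hτ => (hx.comp hτ).cauchySeq_cesaro⟩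

/-- A weighted `ℓ²` sum of copies of `H` treats all the sequences `x t` at once. -/
theorem exists_forall_cesaroCauchy {x : ℕ → ℕ → H} {C : ℕ → ℝ} (hC : ∀ t n, ‖x t n‖ ≤ C t) :
    ∃ σ : ℕ → ℕ, StrictMono σ ∧ ∀ t, CesaroCauchy (x t ∘ σ) := by
  have hC0 (t : ℕ) : 0 ≤ C t := (norm_nonneg _).trans (hC t 0)
  set w : ℕ → ℝ := fun t => 2⁻¹ ^ t / (C t + 1)
  have hw (t : ℕ) : 0 < w t := div_pos (by positivity) (by linarith [hC0 t])
  have hnorm (t n : ℕ) : ‖w t • x t n‖ ^ (2 : ℝ≥0∞).toReal ≤ 2⁻¹ ^ t := by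
    have hone : (2⁻¹ : ℝ) ^ t ≤ 1 := pow_le_one₀ (by norm_num) (by norm_num)
    have hle : ‖w t • x t n‖ ≤ 2⁻¹ ^ t := by
      rw [norm_smul, Real.norm_of_nonneg (hw t).le, div_mul_eq_mul_div,
        div_le_iff₀ (by linarith [hC0 t])]
      gcongr
      linarith [hC t n]
    rw [ENNReal.toReal_ofNat, Real.rpow_ofNat]
    nlinarith [norm_nonneg (w t • x t n)]
  have hsum (n : ℕ) (s : Finset ℕ) : ∑ t ∈ s, ‖w t • x t n‖ ^ (2 : ℝ≥0∞).toReal ≤ 2 :=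
    (Finset.sum_le_sum fun t _ => hnorm t n).trans (sum_inv_two_pow_le s)
  let y : ℕ → lp (fun _ : ℕ => H) 2 := fun n => ⟨fun t => w t • x t n, memℓp_gen' (hsum n)⟩
  have hy (n : ℕ) : ‖y n‖ ≤ 2 :=
    lp.norm_le_of_forall_sum_le (by simp) (by simp) fun s => (hsum n s).trans (by norm_num)
  obtain ⟨σ, hσ, hcauchy⟩ := exists_cesaroCauchy hy
  have heval (t : ℕ) : CesaroCauchy fun n => w t • x t (σ n) := fun τ hτ => by
    have hmap : cesaro ((fun n => w t • x t (σ n)) ∘ τ) = fun N => cesaro ((y ∘ σ) ∘ τ) N t := by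
      ext N
      simp only [cesaro, lp.coeFn_smul, lp.coeFn_sum, Pi.smul_apply, Finset.sum_apply]
      rfl
    rw [hmap]
    exact (hcauchy τ hτ).map (lp.lipschitzWith_one_eval 2 t).uniformContinuous
  refine ⟨σ, hσ, fun t => ?_⟩
  simpa [Function.comp_def, smul_smul, inv_mul_cancel₀ (hw t).ne'] using (heval t).smul (w t)⁻¹

end Hilbert

end Cesaro

/-! ### Weakly null sequences -/

section WeaklyNull

variable {E F : Type*} [SeminormedAddCommGroup E] [NormedSpace ℝ E] [SeminormedAddCommGroup F]
  [NormedSpace ℝ F] {x y : ℕ → E}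

/-- The sequence `x` converges weakly to zero. -/
def WeaklyNull (x : ℕ → E) : Prop :=
  ∀ φ : E →L[ℝ] ℝ, Tendsto (fun n => φ (x n)) atTop (𝓝 0)

namespace WeaklyNull

theorem comp (hx : WeaklyNull x) {σ : ℕ → ℕ} (hσ : StrictMono σ) : WeaklyNull (x ∘ σ) :=
  fun φ => (hx φ).comp hσ.tendsto_atTop

theorem map (hx : WeaklyNull x) (T : E →L[ℝ] F) : WeaklyNull fun n => T (x n) :=
  fun φ => hx (φ.comp T)

theorem sub (hx : WeaklyNull x) (hy : WeaklyNull y) : WeaklyNull fun n => x n - y n :=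
  fun φ => by simpa using (hx φ).sub (hy φ)

theorem cesaro (hx : WeaklyNull x) : WeaklyNull (cesaro x) := fun φ =>
  (hx φ).cesaro.congr fun N => (map_cesaro (φ : E →ₗ[ℝ] ℝ) x N).symm

theorem of_approx
    (h : ∀ ε > 0, ∃ y : ℕ → E, WeaklyNull y ∧ ∀ᶠ n in atTop, ‖x n - y n‖ ≤ ε) :
    WeaklyNull x := fun φ => by
  refine Metric.tendsto_nhds.2 fun ε hε => ?_
  obtain ⟨y, hy, hxy⟩ := h (ε / 2 / (‖φ‖ + 1)) (by positivity)
  filter_upwards [hxy, Metric.tendsto_nhds.1 (hy φ) (ε / 2) (by positivity)] with n hn hyn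
  have hφ : ‖φ (x n - y n)‖ ≤ ε / 2 :=
    calc ‖φ (x n - y n)‖ ≤ (‖φ‖ + 1) * ‖x n - y n‖ :=
          φ.le_of_opNorm_le (by linarith) _
      _ ≤ (‖φ‖ + 1) * (ε / 2 / (‖φ‖ + 1)) := by gcongr
      _ = ε / 2 := by field_simp
  rw [dist_zero_right] at hyn ⊢
  calc ‖φ (x n)‖ = ‖φ (x n - y n) + φ (y n)‖ := by rw [map_sub, sub_add_cancel]
    _ < ε := (norm_add_le _ _).trans_lt (by linarith)

theorem exists_norm_le (hx : WeaklyNull x) : ∃ C, ∀ n, ‖x n‖ ≤ C := by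
  obtain ⟨C, hC⟩ := banach_steinhaus (g := fun n => NormedSpace.inclusionInDoubleDual ℝ E (x n))
    fun φ => (hx φ).norm.bddAbove_range.imp fun C hC n => hC ⟨n, rfl⟩
  exact ⟨C, fun n => (NormedSpace.inclusionInDoubleDualLi ℝ).norm_map (x n) ▸ hC n⟩

/-- The limit of `x` exists in the bidual, and it vanishes on every functional. -/
theorem tendsto_norm_zero (hx : WeaklyNull x) (hcauchy : CauchySeq x) :
    Tendsto (fun n => ‖x n‖) atTop (𝓝 0) := by
  set ι := NormedSpace.inclusionInDoubleDualLi ℝ (E := E)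
  obtain ⟨z, hz⟩ := cauchySeq_tendsto_of_complete
    (ι.isometry.uniformContinuous.comp_cauchySeq hcauchy)
  have hz0 : z = 0 := ContinuousLinearMap.ext fun φ =>
    tendsto_nhds_unique ((ContinuousLinearMap.apply ℝ ℝ φ).continuous.tendsto z |>.comp hz) (hx φ)
  have hnorm : Tendsto (fun n => ‖ι (x n)‖) atTop (𝓝 ‖z‖) := (continuous_norm.tendsto z).comp hz
  rw [hz0, ContinuousLinearMap.opNorm_zero] at hnorm
  exact hnorm.congr fun n => ι.norm_map (x n)

end WeaklyNull

end WeaklyNull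

/-! ### The weak Banach–Saks property of function spaces with subsequence splitting -/

section FiniteNormSpace

variable {Q : (S → ℝ≥0∞) → ℝ≥0∞} {f g : S → ℝ}

theorem eabs_le_eabs {α : Type*} {f g : α → ℝ} : eabs f ≤ eabs g ↔ ∀ s, |f s| ≤ |g s| :=
  forall_congr' fun _ => ENNReal.ofReal_le_ofReal_iff (abs_nonneg _)

theorem eabs_add_le {α : Type*} (f g : α → ℝ) : eabs (f + g) ≤ eabs f + eabs g := fun _ =>
  (ENNReal.ofReal_le_ofReal (abs_add_le _ _)).trans
    (ENNReal.ofReal_add (abs_nonneg _) (abs_nonneg _)).le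

theorem eabs_smul {α : Type*} (c : ℝ) (f : α → ℝ) :
    eabs (c • f) = ENNReal.ofReal |c| • eabs f := by
  ext s
  simp [eabs, abs_mul, ENNReal.ofReal_mul]

theorem HasFiniteNorm.of_abs_le (hf : HasFiniteNorm μ Q f) (hQ : IsFunctionNorm μ Q)
    (hg : AEMeasurable g μ) (hgf : ∀ s, |g s| ≤ |f s|) : HasFiniteNorm μ Q g :=
  ⟨hg, ne_top_of_le_ne_top hf.2 <| hQ.mono (aemeasurable_eabs hg) (aemeasurable_eabs hf.1)
    (ae_of_all _ (eabs_le_eabs.2 hgf))⟩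

theorem realNorm_le_realNorm (hQ : IsFunctionNorm μ Q) (hf : AEMeasurable f μ)
    (hg : HasFiniteNorm μ Q g) (hfg : ∀ s, |f s| ≤ |g s|) : realNorm Q f ≤ realNorm Q g :=
  ENNReal.toReal_mono hg.2 <| hQ.mono (aemeasurable_eabs hf) (aemeasurable_eabs hg.1)
    (ae_of_all _ (eabs_le_eabs.2 hfg))

/-- The functions of finite norm form a subspace. -/
def finiteNormSubmodule (hQ : IsFunctionNorm μ Q) : Submodule ℝ (S → ℝ) where
  carrier := {f | HasFiniteNorm μ Q f}
  add_mem' {f g} hf hg := ⟨hf.1.add hg.1, ne_top_of_le_ne_top (ENNReal.add_ne_top.2 ⟨hf.2, hg.2⟩) <|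
    (hQ.mono (aemeasurable_eabs (hf.1.add hg.1))
      ((aemeasurable_eabs hf.1).add (aemeasurable_eabs hg.1)) (ae_of_all _ (eabs_add_le f g))).trans
      (hQ.add_le (aemeasurable_eabs hf.1) (aemeasurable_eabs hg.1))⟩
  zero_mem' := ⟨aemeasurable_const, by
    have hzero : eabs (0 : S → ℝ) = 0 := funext fun s => by simp [eabs]
    simp [hzero, hQ.zero]⟩
  smul_mem' c f hf := ⟨hf.1.const_smul c, by
    rw [eabs_smul, hQ.smul_eq ENNReal.ofReal_ne_top (aemeasurable_eabs hf.1)]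
    exact ENNReal.mul_ne_top ENNReal.ofReal_ne_top hf.2⟩

/-- The function space defined by the function norm `Q`, seminormed by `realNorm Q`. It is a type
of its own because `finiteNormSubmodule hQ` already carries the topology of pointwise
convergence, and it is only seminormed because functions are not identified almost everywhere. -/
def FiniteNormSpace (hQ : IsFunctionNorm μ Q) : Type _ := finiteNormSubmodule hQ

namespace FiniteNormSpace

variable {hQ : IsFunctionNorm μ Q}

instance : AddCommGroup (FiniteNormSpace hQ) :=
  inferInstanceAs (AddCommGroup (finiteNormSubmodule hQ))

instance : Module ℝ (FiniteNormSpace hQ) := inferInstanceAs (Module ℝ (finiteNormSubmodule hQ))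

/-- An element of the function space as a function. -/
def toFun : FiniteNormSpace hQ →ₗ[ℝ] (S → ℝ) := (finiteNormSubmodule hQ).subtype

/-- The element of the function space given by a function of finite norm. -/
def mk (hQ : IsFunctionNorm μ Q) (f : S → ℝ) (hf : HasFiniteNorm μ Q f) : FiniteNormSpace hQ :=
  ⟨f, hf⟩

theorem toFun_mk (hf : HasFiniteNorm μ Q f) : toFun (mk hQ f hf) = f := rfl

theorem toFun_injective : Function.Injective (toFun (hQ := hQ)) := Subtype.val_injective

theorem hasFiniteNorm (x : FiniteNormSpace hQ) : HasFiniteNorm μ Q (toFun x) := x.2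

theorem aemeasurable (x : FiniteNormSpace hQ) : AEMeasurable (toFun x) μ := x.2.1

instance : Norm (FiniteNormSpace hQ) := ⟨fun x => realNorm Q (toFun x)⟩

theorem norm_eq (x : FiniteNormSpace hQ) : ‖x‖ = realNorm Q (toFun x) := rfl

theorem core (hQ : IsFunctionNorm μ Q) : SeminormedSpace.Core ℝ (FiniteNormSpace hQ) where
  norm_nonneg _ := ENNReal.toReal_nonneg
  norm_smul c x := by
    rw [norm_eq, norm_eq, map_smul, realNorm, eabs_smul,
      hQ.smul_eq ENNReal.ofReal_ne_top (aemeasurable_eabs x.aemeasurable), ENNReal.toReal_mul,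
      ENNReal.toReal_ofReal (abs_nonneg c), Real.norm_eq_abs, realNorm]
  norm_triangle x y := by
    have hx := aemeasurable_eabs x.aemeasurable
    have hy := aemeasurable_eabs y.aemeasurable
    rw [norm_eq, norm_eq, norm_eq, map_add, realNorm, realNorm, realNorm,
      ← ENNReal.toReal_add x.hasFiniteNorm.2 y.hasFiniteNorm.2]
    exact ENNReal.toReal_mono (ENNReal.add_ne_top.2 ⟨x.hasFiniteNorm.2, y.hasFiniteNorm.2⟩) <|
      (hQ.mono (aemeasurable_eabs (x.aemeasurable.add y.aemeasurable)) (hx.add hy)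
        (ae_of_all _ (eabs_add_le _ _))).trans (hQ.add_le hx hy)

instance : SeminormedAddCommGroup (FiniteNormSpace hQ) := .ofCore (core hQ)

instance : NormedSpace ℝ (FiniteNormSpace hQ) where
  norm_smul_le c x := ((core hQ).norm_smul c x).le

theorem norm_le_norm {x y : FiniteNormSpace hQ} (h : ∀ s, |toFun x s| ≤ |toFun y s|) :
    ‖x‖ ≤ ‖y‖ :=
  realNorm_le_realNorm hQ x.aemeasurable y.hasFiniteNorm h

theorem norm_le_of_le_ofReal {x : FiniteNormSpace hQ} {ε : ℝ} (hε : 0 ≤ ε)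
    (h : Q (eabs (toFun x)) ≤ ENNReal.ofReal ε) : ‖x‖ ≤ ε :=
  ENNReal.toReal_le_of_le_ofReal hε h

theorem toFun_cesaro (x : ℕ → FiniteNormSpace hQ) (N : ℕ) :
    toFun (cesaro x N) = cesaro (fun n => toFun (x n)) N :=
  map_cesaro toFun x N

theorem weaklyNull_mk {f : ℕ → S → ℝ} (hf : ∀ n, HasFiniteNorm μ Q (f n))
    (hweak : WeaklyNullSeq (HasFiniteNorm μ Q) (realNorm Q) f) :
    WeaklyNull fun n => mk hQ (f n) (hf n) := by
  classical
  intro φ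
  let T : (S → ℝ) → ℝ := fun f => if h : HasFiniteNorm μ Q f then φ (mk hQ f h) else 0
  have hT {f : S → ℝ} (h : HasFiniteNorm μ Q f) : T f = φ (mk hQ f h) := dif_pos h
  refine (hweak T ⟨fun f g hf hg => ?_, fun c f hf => ?_, ‖φ‖, fun f hf => ?_⟩).congr
    fun n => hT (hf n)
  · rw [hT hf, hT hg, hT ((finiteNormSubmodule hQ).add_mem hf hg), ← map_add]
    rfl
  · rw [hT hf, hT ((finiteNormSubmodule hQ).smul_mem c hf), ← smul_eq_mul, ← map_smul]
    rfl
  · rw [hT hf]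
    exact φ.le_opNorm (mk hQ f hf)

/-- Multiplication by an indicator function. -/
def restrictCLM (hQ : IsFunctionNorm μ Q) {A : Set S} (hA : NullMeasurableSet A μ) :
    FiniteNormSpace hQ →L[ℝ] FiniteNormSpace hQ :=
  LinearMap.mkContinuous
    { toFun := fun x => mk hQ (A.indicator (toFun x)) <|
        x.hasFiniteNorm.of_abs_le hQ (x.aemeasurable.indicator₀ hA) fun s => by
          by_cases hs : s ∈ A <;> simp [hs]
      map_add' := fun x y => toFun_injective (Set.indicator_add A (toFun x) (toFun y))
      map_smul' := fun c x => toFun_injective (Set.indicator_const_smul A c (toFun x)) }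
    1 fun x => by
      rw [one_mul]
      exact norm_le_norm fun s => by by_cases hs : s ∈ A <;> simp [toFun_mk, hs]

theorem toFun_restrictCLM {A : Set S} (hA : NullMeasurableSet A μ) (x : FiniteNormSpace hQ) :
    toFun (restrictCLM hQ hA x) = A.indicator (toFun x) := rfl

/-- The absolute value of an element of the function space. -/
def abs (x : FiniteNormSpace hQ) : FiniteNormSpace hQ :=
  mk hQ (fun s => |toFun x s|) <|
    x.hasFiniteNorm.of_abs_le hQ x.aemeasurable.abs fun _ => (abs_abs _).le

theorem toFun_abs (x : FiniteNormSpace hQ) (s : S) : toFun x.abs s = |toFun x s| := rfl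

theorem norm_cesaro_le_norm_cesaro_abs (x : ℕ → FiniteNormSpace hQ) (N : ℕ) :
    ‖cesaro x N‖ ≤ ‖cesaro (fun n => (x n).abs) N‖ := by
  refine norm_le_norm fun s => le_trans ?_ (le_abs_self _)
  rw [toFun_cesaro, toFun_cesaro]
  simp only [cesaro, Pi.smul_apply, Finset.sum_apply, smul_eq_mul, abs_mul, toFun_abs,
    abs_inv, Nat.abs_cast]
  gcongr
  exact Finset.abs_sum_le_sum_abs _ _

end FiniteNormSpace

end FiniteNormSpace

section BanachSaks

variable {Q : (S → ℝ≥0∞) → ℝ≥0∞}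

theorem IsFunctionNorm.tendsto_zero_of_tendstoInMeasure (hQ : IsFunctionNorm μ Q) (hone : Q 1 ≠ ⊤)
    {ι : Type*} {l : Filter ι} {f : ι → S → ℝ} {R : ℝ} (hf : ∀ i, AEMeasurable (f i) μ)
    (hR : ∀ i s, |f i s| ≤ R) (h : TendstoInMeasure μ f l 0) :
    Tendsto (fun i => Q (eabs (f i))) l (𝓝 0) := by
  refine ENNReal.tendsto_nhds_zero.2 fun ε hε => ?_
  have hε2 : 0 < ε / 2 := ENNReal.half_pos hε.ne'
  obtain ⟨η, hη, hηone⟩ := ENNReal.exists_nnreal_pos_mul_lt hone hε2.ne'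
  have hmeas_one : AEMeasurable (1 : S → ℝ≥0∞) μ := aemeasurable_const
  have hη1 := hmeas_one.const_smul (η : ℝ≥0∞)
  have hbdd := hmeas_one.const_smul (ENNReal.ofReal R)
  obtain ⟨δ, hδ, hsmall⟩ := hQ.exists_forall_indicator_le hbdd
    (by rw [hQ.smul_eq ENNReal.ofReal_ne_top hmeas_one]
        exact ENNReal.mul_ne_top ENNReal.ofReal_ne_top hone) hε2
  filter_upwards [(h η (by exact_mod_cast hη)).eventually_lt_const hδ] with i hi
  set A := toMeasurable μ {s | (η : ℝ≥0∞) ≤ edist (f i s) 0}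
  have hA : MeasurableSet A := measurableSet_toMeasurable _ _
  have hsplit : eabs (f i) ≤
      (η : ℝ≥0∞) • (1 : S → ℝ≥0∞) + A.indicator (ENNReal.ofReal R • (1 : S → ℝ≥0∞)) := by
    intro s
    by_cases hs : s ∈ A
    · simpa [hs, eabs] using (ENNReal.ofReal_le_ofReal (hR i s)).trans le_add_self
    · have hlt : edist (f i s) 0 < η := not_le.1 fun hle => hs (subset_toMeasurable _ _ hle)
      simpa [hs, eabs, edist_dist] using hlt.le
  calc Q (eabs (f i))
      ≤ Q ((η : ℝ≥0∞) • (1 : S → ℝ≥0∞)) + Q (A.indicator (ENNReal.ofReal R • (1 : S → ℝ≥0∞))) :=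
        (hQ.mono (aemeasurable_eabs (hf i)) (hη1.add (hbdd.indicator hA))
          (ae_of_all _ hsplit)).trans (hQ.add_le hη1 (hbdd.indicator hA))
    _ ≤ ε / 2 + ε / 2 := by
        gcongr
        · rw [hQ.smul_eq ENNReal.coe_ne_top hmeas_one]
          exact hηone.le
        · exact hsmall A hA ((measure_toMeasurable _).trans_lt hi)
    _ = ε := ENNReal.add_halves ε

theorem coeFn_cesaro {Y : ℕ → Lp ℝ 2 μ} {f : ℕ → S → ℝ} (h : ∀ n, Y n =ᵐ[μ] f n) (N : ℕ) :
    ⇑(cesaro Y N) =ᵐ[μ] cesaro f N := by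
  filter_upwards [Lp.coeFn_smul (N : ℝ)⁻¹ (∑ k ∈ Finset.range N, Y k),
    Lp.coeFn_fun_finsetSum (Finset.range N) Y, ae_all_iff.2 h] with s hsmul hsum hs
  simp only [cesaro, hsmul, Pi.smul_apply, hsum, hs, Finset.sum_apply]

namespace FiniteNormSpace

variable {hQ : IsFunctionNorm μ Q}

theorem cauchySeq_of_cauchySeq_Lp (hone : Q 1 ≠ ⊤) {y : ℕ → FiniteNormSpace hQ} {R : ℝ}
    (hR : ∀ n s, |toFun (y n) s| ≤ R) {Y : ℕ → Lp ℝ 2 μ} (hY : ∀ n, Y n =ᵐ[μ] toFun (y n))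
    (hcauchy : CauchySeq Y) : CauchySeq y := by
  have hLp : Tendsto (fun p : ℕ × ℕ => Y p.1 - Y p.2) atTop (𝓝 0) := by
    rw [tendsto_zero_iff_norm_tendsto_zero]
    simpa only [dist_eq_norm] using cauchySeq_iff_tendsto_dist_atTop_0.1 hcauchy
  have hmeas : TendstoInMeasure μ (fun p : ℕ × ℕ => toFun (y p.1 - y p.2)) atTop 0 :=
    (tendstoInMeasure_of_tendsto_Lp hLp).congr
      (fun p => by simpa using (Lp.coeFn_sub _ _).trans ((hY p.1).sub (hY p.2)))
      (Lp.coeFn_zero ℝ 2 μ)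
  refine cauchySeq_iff_tendsto_dist_atTop_0.2 ?_
  have hlim := hQ.tendsto_zero_of_tendstoInMeasure hone (fun p => aemeasurable _)
    (fun p s => by
      rw [map_sub]
      exact (abs_sub _ _).trans (add_le_add (hR p.1 s) (hR p.2 s))) hmeas
  simpa only [dist_eq_norm, norm_eq, realNorm] using!
    (ENNReal.tendsto_toReal ENNReal.zero_ne_top).comp hlim

/-- The part of `x` where its modulus is at most `2 ^ t`. -/
def below (t : ℕ) (x : FiniteNormSpace hQ) : FiniteNormSpace hQ :=
  restrictCLM hQ (A := {s | eabs (toFun x) s ≤ 2 ^ t})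
    (nullMeasurableSet_le (aemeasurable_eabs x.aemeasurable) aemeasurable_const) x

theorem abs_toFun_below_le (t : ℕ) (x : FiniteNormSpace hQ) (s : S) :
    |toFun (below t x) s| ≤ 2 ^ t := by
  rw [below, toFun_restrictCLM]
  by_cases hs : eabs (toFun x) s ≤ 2 ^ t
  · rw [Set.indicator_of_mem (show s ∈ {s | eabs (toFun x) s ≤ 2 ^ t} from hs)]
    simpa [eabs] using ENNReal.toReal_mono (by simp) hs
  · rw [Set.indicator_of_notMem (show s ∉ {s | eabs (toFun x) s ≤ 2 ^ t} from hs)]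
    simp

theorem eabs_toFun_sub_below (t : ℕ) (x : FiniteNormSpace hQ) :
    eabs (toFun (x - below t x)) = above t (eabs (toFun x)) := by
  rw [map_sub, below, toFun_restrictCLM, ← Set.indicator_compl, eabs_indicator, above]
  congr 1
  ext s
  exact not_le (a := eabs (toFun x) s)

theorem cauchySeq_cesaro_of_abs_le (hone : Q 1 ≠ ⊤) {y : ℕ → FiniteNormSpace hQ} {R : ℝ}
    (hR : ∀ n s, |toFun (y n) s| ≤ R) {Y : ℕ → Lp ℝ 2 μ} (hY : ∀ n, Y n =ᵐ[μ] toFun (y n))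
    (hcauchy : CauchySeq (cesaro Y)) : CauchySeq (cesaro y) := by
  refine cauchySeq_of_cauchySeq_Lp hone (R := R) (fun N s => ?_)
    (fun N => toFun_cesaro y N ▸ coeFn_cesaro hY N) hcauchy
  have heval := map_cesaro (LinearMap.proj s) (fun n => toFun (y n)) N
  rw [toFun_cesaro, ← Real.norm_eq_abs, show cesaro (fun n => toFun (y n)) N s = _ from heval]
  exact norm_cesaro_le (fun n => hR n s) N

/-- Truncating at the levels `2 ^ t` reduces this to the Banach–Saks property of `L²`. -/
theorem exists_cesaroCauchy_of_equiIntegrable [IsFiniteMeasure μ] (hone : Q 1 ≠ ⊤)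
    {x : ℕ → FiniteNormSpace hQ} (h : EquiIntegrable Q fun n => eabs (toFun (x n))) :
    ∃ σ : ℕ → ℕ, StrictMono σ ∧ CesaroCauchy (x ∘ σ) := by
  have hmem (t n : ℕ) : MemLp (toFun (below t (x n))) 2 μ :=
    .of_bound (aemeasurable _).aestronglyMeasurable (2 ^ t)
      (ae_of_all _ (abs_toFun_below_le t (x n)))
  obtain ⟨σ, hσ, hcauchy⟩ := exists_forall_cesaroCauchy (x := fun t n => (hmem t n).toLp)
    fun t n => Lp.norm_le_of_ae_bound (by positivity : (0 : ℝ) ≤ 2 ^ t) <| by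
      filter_upwards [(hmem t n).coeFn_toLp] with s hs
      exact hs ▸ abs_toFun_below_le t (x n) s
  refine ⟨σ, hσ, fun τ hτ => cauchySeq_cesaro_of_approx fun ε hε => ?_⟩
  obtain ⟨t, ht⟩ := h (ENNReal.ofReal ε) (ENNReal.ofReal_pos.2 hε)
  refine ⟨fun n => below t (x (σ (τ n))), fun n => norm_le_of_le_ofReal hε.le ?_,
    cauchySeq_cesaro_of_abs_le hone (fun n => abs_toFun_below_le t _)
      (fun n => (hmem t _).coeFn_toLp) (hcauchy t τ hτ)⟩
  rw [Function.comp_apply, Function.comp_apply, eabs_toFun_sub_below]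
  exact ht (σ (τ n))

end FiniteNormSpace

theorem tendsto_measure_iUnion_tail_of_disjoint [IsFiniteMeasure μ] {E : ℕ → Set S}
    (hE : ∀ n, MeasurableSet (E n)) (hdisj : Pairwise (Function.onFun Disjoint E)) :
    Tendsto (fun m => μ (⋃ k, E (k + m))) atTop (𝓝 0) :=
  tendsto_of_tendsto_of_tendsto_of_le_of_le tendsto_const_nhds
    (ENNReal.tendsto_sum_nat_add (fun n => μ (E n))
      (measure_iUnion hdisj hE ▸ measure_ne_top μ (⋃ n, E n)))
    (fun _ => zero_le) fun _ => measure_iUnion_le _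

namespace FiniteNormSpace

variable {hQ : IsFunctionNorm μ Q} {x : ℕ → FiniteNormSpace hQ}

/-- Up to a small error, the restriction of `x n` to `A n` is its restriction to the fixed set
`⋃ k, A (k + m)` with `m` large, and restriction to a fixed set preserves weak convergence. -/
theorem weaklyNull_restrictCLM_of_disjoint [IsFiniteMeasure μ] (hx : WeaklyNull x) {E : ℕ → Set S}
    (hE : ∀ n, MeasurableSet (E n)) (hdisj : Pairwise (Function.onFun Disjoint E))
    (huac : UnifAbsCont μ Q fun n => eabs ((E n)ᶜ.indicator (toFun (x n)))) {A : ℕ → Set S}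
    (hA : ∀ n, NullMeasurableSet (A n) μ) (hAE : ∀ n, A n ⊆ E n) :
    WeaklyNull fun n => restrictCLM hQ (hA n) (x n) := by
  refine .of_approx fun ε hε => ?_
  obtain ⟨δ, hδ, hsmall⟩ := huac.exists_real hε
  obtain ⟨m, hm⟩ := ((tendsto_measure_iUnion_tail_of_disjoint (μ := μ) hE
    hdisj).eventually_lt_const (ENNReal.ofReal_pos.2 hδ)).exists
  have htail : MeasurableSet (⋃ k, E (k + m)) := .iUnion fun k => hE (k + m)
  refine ⟨fun n => restrictCLM hQ (.iUnion fun k => hA (k + m)) (x n), hx.map _, ?_⟩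
  filter_upwards [eventually_ge_atTop m] with n hn
  refine norm_le_of_le_ofReal hε.le (le_trans ?_ (hsmall _ htail hm n))
  rw [← eabs_indicator]
  refine hQ.mono (aemeasurable_eabs (aemeasurable _))
    (aemeasurable_eabs (((aemeasurable _).indicator (hE n).compl).indicator htail))
    (ae_of_all _ (eabs_le_eabs.2 fun s => ?_))
  rw [map_sub, toFun_restrictCLM, toFun_restrictCLM, Pi.sub_apply]
  by_cases hsn : s ∈ A n
  · have hs : s ∈ ⋃ k, A (k + m) := Set.mem_iUnion.2 ⟨n - m, by rwa [Nat.sub_add_cancel hn]⟩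
    simp [hsn, Set.indicator_of_mem hs]
  by_cases hs : s ∈ ⋃ k, A (k + m)
  · obtain ⟨k, hk⟩ := Set.mem_iUnion.1 hs
    have hne : k + m ≠ n := fun heq => hsn (heq ▸ hk)
    have hsE : s ∉ E n := Set.disjoint_left.1 (hdisj hne) (hAE _ hk)
    simp [hsn, hsE, Set.indicator_of_mem hs,
      Set.indicator_of_mem (Set.mem_iUnion.2 ⟨k, hAE _ hk⟩ : s ∈ ⋃ k, E (k + m))]
  · simp [hsn, Set.indicator_of_notMem hs]

theorem abs_restrictCLM {E : Set S} (hE : NullMeasurableSet E μ) (y : FiniteNormSpace hQ)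
    (hpos : NullMeasurableSet (E ∩ {s | 0 ≤ toFun y s}) μ)
    (hneg : NullMeasurableSet (E ∩ {s | toFun y s < 0}) μ) :
    (restrictCLM hQ hE y).abs = restrictCLM hQ hpos y - restrictCLM hQ hneg y := by
  refine toFun_injective (funext fun s => ?_)
  rw [map_sub, Pi.sub_apply, toFun_abs, toFun_restrictCLM, toFun_restrictCLM, toFun_restrictCLM]
  by_cases hs : s ∈ E
  · rcases le_or_gt 0 (toFun y s) with h | h
    · simp [Set.indicator, hs, h, h.not_gt, abs_of_nonneg]
    · simp [Set.indicator, hs, h, h.not_ge, abs_of_neg]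
  · simp [hs]

theorem weaklyNull_abs_restrictCLM [IsFiniteMeasure μ] (hx : WeaklyNull x) {E : ℕ → Set S}
    (hE : ∀ n, MeasurableSet (E n)) (hdisj : Pairwise (Function.onFun Disjoint E))
    (huac : UnifAbsCont μ Q fun n => eabs ((E n)ᶜ.indicator (toFun (x n)))) :
    WeaklyNull fun n => (restrictCLM hQ (hE n).nullMeasurableSet (x n)).abs := by
  have hpos (n : ℕ) : NullMeasurableSet (E n ∩ {s | 0 ≤ toFun (x n) s}) μ :=
    (hE n).nullMeasurableSet.inter (nullMeasurableSet_le aemeasurable_const (aemeasurable _))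
  have hneg (n : ℕ) : NullMeasurableSet (E n ∩ {s | toFun (x n) s < 0}) μ :=
    (hE n).nullMeasurableSet.inter (nullMeasurableSet_lt (aemeasurable _) aemeasurable_const)
  simp only [fun n => abs_restrictCLM (hE n).nullMeasurableSet (x n) (hpos n) (hneg n)]
  exact (weaklyNull_restrictCLM_of_disjoint hx hE hdisj huac hpos fun n =>
    Set.inter_subset_left).sub
      (weaklyNull_restrictCLM_of_disjoint hx hE hdisj huac hneg fun n => Set.inter_subset_left)

theorem exists_tendsto_norm_cesaro [IsFiniteMeasure μ] (hsplit : HasSubseqSplitting μ Q)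
    (hone : Q 1 ≠ ⊤)
    (hpos : ∀ z : ℕ → FiniteNormSpace hQ, (∀ n s, 0 ≤ toFun (z n) s) → WeaklyNull z →
      ∃ τ : ℕ → ℕ, StrictMono τ ∧ Tendsto (fun N => ‖cesaro (z ∘ τ) N‖) atTop (𝓝 0))
    (hx : WeaklyNull x) :
    ∃ σ : ℕ → ℕ, StrictMono σ ∧ Tendsto (fun N => ‖cesaro (x ∘ σ) N‖) atTop (𝓝 0) := by
  obtain ⟨C, hC⟩ := hx.exists_norm_le
  obtain ⟨σ, hσ, E, hE, hdisj, hequi⟩ := hsplit (fun n => toFun (x n)) (fun n => aemeasurable _)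
    ⟨ENNReal.ofReal C, ENNReal.ofReal_ne_top, fun n =>
      (ENNReal.ofReal_toReal (hasFiniteNorm (x n)).2).symm.le.trans
        (ENNReal.ofReal_le_ofReal (hC n))⟩
  set g : ℕ → FiniteNormSpace hQ := fun n => restrictCLM hQ (hE n).compl.nullMeasurableSet (x (σ n))
  set h : ℕ → FiniteNormSpace hQ := fun n => restrictCLM hQ (hE n).nullMeasurableSet (x (σ n))
  have hsum : x ∘ σ = g + h := funext fun n =>
    toFun_injective (Set.indicator_compl_add_self (E n) (toFun (x (σ n)))).symm
  obtain ⟨ρ, hρ, hg⟩ := exists_cesaroCauchy_of_equiIntegrable hone (x := g) hequi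
  have habs : WeaklyNull fun n => (h n).abs :=
    weaklyNull_abs_restrictCLM (hx.comp hσ) hE hdisj <|
      hQ.unifAbsCont_of_equiIntegrable hone (fun n => aemeasurable_eabs (aemeasurable (g n))) hequi
  obtain ⟨τ, hτ, hlim⟩ := hpos _ (fun n s => abs_nonneg (toFun (h (ρ n)) s)) (habs.comp hρ)
  have hh : Tendsto (cesaro (h ∘ ρ ∘ τ)) atTop (𝓝 0) :=
    squeeze_zero_norm (norm_cesaro_le_norm_cesaro_abs _) hlim
  have hσρτ := hσ.comp (hρ.comp hτ)
  refine ⟨σ ∘ ρ ∘ τ, hσρτ, (hx.comp hσρτ).cesaro.tendsto_norm_zero ?_⟩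
  rw [show x ∘ σ ∘ ρ ∘ τ = g ∘ ρ ∘ τ + h ∘ ρ ∘ τ from
    congrArg (fun y : ℕ → FiniteNormSpace hQ => y ∘ ρ ∘ τ) hsum, cesaro_add]
  exact (hg τ hτ).add hh.cauchySeq

end FiniteNormSpace

open FiniteNormSpace in
theorem HasSubseqSplitting.hasWBS [IsFiniteMeasure μ] (hsplit : HasSubseqSplitting μ Q)
    (hQ : IsFunctionNorm μ Q) (hone : Q 1 ≠ ⊤)
    (hpos : ∀ z : ℕ → FiniteNormSpace hQ, (∀ n s, 0 ≤ toFun (z n) s) → WeaklyNull z →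
      ∃ τ : ℕ → ℕ, StrictMono τ ∧ Tendsto (fun N => ‖cesaro (z ∘ τ) N‖) atTop (𝓝 0)) :
    HasWBS (HasFiniteNorm μ Q) (realNorm Q) := fun f hf hweak => by
  obtain ⟨σ, hσ, hlim⟩ := exists_tendsto_norm_cesaro hsplit hone hpos (weaklyNull_mk hf hweak)
  refine ⟨σ, hσ, hlim.congr fun N => ?_⟩
  rw [norm_eq, toFun_cesaro]
  rfl

end BanachSaks

/-! ### The optimal domain of a kernel operator -/

section SignedKernelOp

variable {R : Type*} [MeasurableSpace R] {ν : Measure R} {K : S → R → ℝ≥0∞} {f g : R → ℝ} {s : S}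

/-- The kernel operator on real functions. The value `⊤` of the kernel is replaced by `0`, which is
harmless where `kernelOp ν K (eabs f)` is finite: there `f` vanishes almost everywhere on
`{y | K s y = ⊤}`. -/
def signedKernelOp (ν : Measure R) (K : S → R → ℝ≥0∞) (f : R → ℝ) (s : S) : ℝ :=
  ∫ y, (K s y).toReal * f y ∂ν

theorem norm_toReal_mul {α β : Type*} (K : α → β → ℝ≥0∞) (f : β → ℝ) (s : α) (y : β) :
    ‖(K s y).toReal * f y‖ = (K s y * eabs f y).toReal := by
  simp [eabs]

theorem integrable_toReal_mul (hK : Measurable (Function.uncurry K)) (hf : AEMeasurable f ν)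
    (hs : kernelOp ν K (eabs f) s ≠ ⊤) : Integrable (fun y => (K s y).toReal * f y) ν :=
  (integrable_toReal_of_lintegral_ne_top (aemeasurable_kernel_mul hK (aemeasurable_eabs hf) s)
    hs).mono' (hK.of_uncurry_left.ennreal_toReal.aemeasurable.mul hf).aestronglyMeasurable
    (ae_of_all _ fun y => (norm_toReal_mul K f s y).le)

theorem integral_toReal_mul_eabs (hK : Measurable (Function.uncurry K)) (hf : AEMeasurable f ν)
    (hs : kernelOp ν K (eabs f) s ≠ ⊤) :
    ∫ y, (K s y * eabs f y).toReal ∂ν = (kernelOp ν K (eabs f) s).toReal :=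
  integral_toReal (aemeasurable_kernel_mul hK (aemeasurable_eabs hf) s)
    (ae_lt_top' (aemeasurable_kernel_mul hK (aemeasurable_eabs hf) s) hs)

theorem abs_signedKernelOp_le (hK : Measurable (Function.uncurry K)) (hf : AEMeasurable f ν)
    (hs : kernelOp ν K (eabs f) s ≠ ⊤) :
    |signedKernelOp ν K f s| ≤ (kernelOp ν K (eabs f) s).toReal := by
  rw [← integral_toReal_mul_eabs hK hf hs]
  simpa only [norm_toReal_mul] using!
    norm_integral_le_integral_norm (μ := ν) fun y => (K s y).toReal * f y

theorem signedKernelOp_of_nonneg (hK : Measurable (Function.uncurry K)) (hf : AEMeasurable f ν)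
    (hs : kernelOp ν K (eabs f) s ≠ ⊤) (hnonneg : ∀ y, 0 ≤ f y) :
    signedKernelOp ν K f s = (kernelOp ν K (eabs f) s).toReal := by
  rw [← integral_toReal_mul_eabs hK hf hs]
  exact integral_congr_ae <| ae_of_all _ fun y => by
    simp [eabs, abs_of_nonneg (hnonneg y), hnonneg y]

theorem signedKernelOp_add (hK : Measurable (Function.uncurry K)) (hf : AEMeasurable f ν)
    (hg : AEMeasurable g ν) (hfs : kernelOp ν K (eabs f) s ≠ ⊤)
    (hgs : kernelOp ν K (eabs g) s ≠ ⊤) :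
    signedKernelOp ν K (f + g) s = signedKernelOp ν K f s + signedKernelOp ν K g s := by
  simp only [signedKernelOp, Pi.add_apply, mul_add]
  exact integral_add (integrable_toReal_mul hK hf hfs) (integrable_toReal_mul hK hg hgs)

theorem signedKernelOp_smul {α : Type*} (K : α → R → ℝ≥0∞) (c : ℝ) (f : R → ℝ) :
    signedKernelOp ν K (c • f) = c • signedKernelOp ν K f := by
  ext s
  simp only [signedKernelOp, Pi.smul_apply, smul_eq_mul, mul_left_comm _ c, integral_const_mul]

theorem measurable_signedKernelOp [SFinite ν] (hK : Measurable (Function.uncurry K))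
    (hf : AEMeasurable f ν) : Measurable (signedKernelOp ν K f) := by
  have hmk : signedKernelOp ν K f = signedKernelOp ν K (hf.mk f) := funext fun s =>
    integral_congr_ae (hf.ae_eq_mk.mono fun y hy => by simp only [hy])
  rw [hmk]
  exact (StronglyMeasurable.integral_prod_right (f := fun s y => (K s y).toReal * hf.mk f y)
    (hK.ennreal_toReal.mul (hf.measurable_mk.comp measurable_snd)).stronglyMeasurable).measurable

end SignedKernelOp

section OptimalDomain

open FiniteNormSpace

variable {R : Type*} [MeasurableSpace R] {ν : Measure R} [SFinite ν] {K : S → R → ℝ≥0∞}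
  {B : BFS S μ X}

theorem exists_ae_eq_signedKernelOp (hK : Measurable (Function.uncurry K)) {f : R → ℝ}
    (hf : HasFiniteNorm ν (B.kernelNorm ν K) f) :
    ∃ z : X, B.J z =ᵐ[μ] signedKernelOp ν K f ∧ ‖z‖ ≤ realNorm (B.kernelNorm ν K) f := by
  obtain ⟨w, hw⟩ := BFS.exists_represents hf.2
  obtain ⟨z, hz, hzw⟩ := B.ideal w _ (measurable_signedKernelOp hK hf.1).aemeasurable <|
    hw.mono fun s hs => (abs_signedKernelOp_le hK hf.1 hs.1).trans (hs.2.le.trans (le_abs_self _))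
  exact ⟨z, hz, by simpa [realNorm, BFS.kernelNorm, hw.extNorm_eq] using hzw⟩

theorem exists_continuousLinearMap_ae_eq_signedKernelOp (hK : Measurable (Function.uncurry K))
    (hQ : IsFunctionNorm ν (B.kernelNorm ν K)) :
    ∃ T : FiniteNormSpace hQ →L[ℝ] X, ∀ x, B.J (T x) =ᵐ[μ] signedKernelOp ν K (toFun x) := by
  choose T hT hTle using fun x : FiniteNormSpace hQ =>
    exists_ae_eq_signedKernelOp hK x.hasFiniteNorm
  have hfin (x : FiniteNormSpace hQ) := BFS.ae_ne_top_of_extNorm_ne_top x.hasFiniteNorm.2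
  refine ⟨LinearMap.mkContinuous
    { toFun := T
      map_add' := fun x y => B.ext_ae ?_
      map_smul' := fun c x => B.ext_ae ?_ } 1 fun x => (hTle x).trans (one_mul _).ge, hT⟩
  · rw [map_add]
    filter_upwards [hT (x + y), hT x, hT y, hfin x, hfin y] with s hxy hx hy hxs hys
    rw [hxy, Pi.add_apply, hx, hy, map_add,
      signedKernelOp_add hK x.aemeasurable y.aemeasurable hxs hys]
  · rw [map_smul]
    filter_upwards [hT (c • x), hT x] with s hcx hx
    rw [hcx, map_smul, signedKernelOp_smul, Pi.smul_apply, RingHom.id_apply, Pi.smul_apply, hx]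

theorem exists_continuousLinearMap_norm_eq (hK : Measurable (Function.uncurry K))
    (hQ : IsFunctionNorm ν (B.kernelNorm ν K)) :
    ∃ T : FiniteNormSpace hQ →L[ℝ] X, ∀ x, (∀ y, 0 ≤ toFun x y) → ‖T x‖ = ‖x‖ := by
  obtain ⟨T, hT⟩ := exists_continuousLinearMap_ae_eq_signedKernelOp hK hQ
  refine ⟨T, fun x hx => ?_⟩
  have hrep : B.Represents (kernelOp ν K (eabs (toFun x))) (T x) := by
    filter_upwards [hT x, BFS.ae_ne_top_of_extNorm_ne_top x.hasFiniteNorm.2] with s hs hfin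
    exact ⟨hfin, (hs.trans (signedKernelOp_of_nonneg hK x.aemeasurable hfin hx)).symm⟩
  rw [norm_eq, realNorm, BFS.kernelNorm, hrep.extNorm_eq, toReal_enorm]

theorem WeakBanachSaks.exists_tendsto_norm_cesaro (hWBS : WeakBanachSaks X)
    (hK : Measurable (Function.uncurry K))
    {hQ : IsFunctionNorm ν (B.kernelNorm ν K)} {z : ℕ → FiniteNormSpace hQ}
    (hnonneg : ∀ n y, 0 ≤ toFun (z n) y) (hz : WeaklyNull z) :
    ∃ τ : ℕ → ℕ, StrictMono τ ∧ Tendsto (fun N => ‖cesaro (z ∘ τ) N‖) atTop (𝓝 0) := by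
  obtain ⟨T, hT⟩ := exists_continuousLinearMap_norm_eq hK hQ
  obtain ⟨τ, hτ, hlim⟩ := hWBS _ (hz.map T)
  refine ⟨τ, hτ, hlim.congr fun N => ?_⟩
  have hmean (y : R) : 0 ≤ toFun (cesaro (z ∘ τ) N) y := by
    rw [toFun_cesaro, cesaro, Pi.smul_apply, Finset.sum_apply]
    exact smul_nonneg (by positivity) (Finset.sum_nonneg fun n _ => hnonneg (τ n) y)
  rw [← hT _ hmean]
  exact congrArg norm (map_cesaro (T : FiniteNormSpace hQ →ₗ[ℝ] X) (z ∘ τ) N).symm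

end OptimalDomain

theorem statement6_general [IsFiniteMeasure μ] {R : Type*} [MeasurableSpace R] {ν : Measure R}
    [IsFiniteMeasure ν] (B : BFS S μ X) (hSSP : B.SSP)
    (hrefl : Function.Surjective (NormedSpace.inclusionInDoubleDual ℝ X))
    (hWBS : WeakBanachSaks X) {K : S → R → ℝ≥0∞} (hK : Measurable (Function.uncurry K))
    (hone : B.kernelNorm ν K 1 ≠ ⊤) :
    HasSSP ν (HasFiniteNorm ν (B.kernelNorm ν K)) (realNorm (B.kernelNorm ν K)) ∧
      HasWBS (HasFiniteNorm ν (B.kernelNorm ν K)) (realNorm (B.kernelNorm ν K)) := by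
  have hρ := B.isFunctionNorm_extNorm hrefl
  have hQ := B.isFunctionNorm_kernelNorm (ν := ν) hrefl hK
  have hsplit := hQ.hasSubseqSplitting fun u hu C hCtop hC =>
    hSSP.noPersistentSlabs_kernelNorm hρ hK hone hu hCtop hC
  exact ⟨hsplit.hasSSP hQ hone, hsplit.hasWBS hQ hone fun z hnonneg hz =>
    hWBS.exists_tendsto_norm_cesaro hK hnonneg hz⟩

section UnitInterval

variable (B : BFS ℝ mu01 X) (K : ℝ → ℝ → ℝ≥0∞)

theorem memTK_eq : memTK B K = HasFiniteNorm mu01 (B.kernelNorm mu01 K) := by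
  ext f
  refine and_congr_right fun _ => ⟨?_, fun h => BFS.exists_represents h⟩
  rintro ⟨x, hx⟩
  have hx : B.Represents (kernelOp mu01 K (eabs f)) x := hx
  exact hx.extNorm_eq.trans_ne enorm_ne_top

theorem nrmTK_eq : nrmTK B K = realNorm (B.kernelNorm mu01 K) := by
  ext f
  change sInf {r : ℝ | ∃ x : X, B.Represents (kernelOp mu01 K (eabs f)) x ∧ r = ‖x‖} = _
  by_cases h : ∃ x : X, B.Represents (kernelOp mu01 K (eabs f)) x
  · obtain ⟨x, hx⟩ := h
    have hset : {r : ℝ | ∃ x : X, B.Represents (kernelOp mu01 K (eabs f)) x ∧ r = ‖x‖} = {‖x‖} := by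
      ext r
      exact ⟨fun ⟨_, hy, hr⟩ => hr.trans (congrArg norm (hy.unique hx)), fun hr => ⟨x, hx, hr⟩⟩
    rw [hset, csInf_singleton, realNorm, BFS.kernelNorm, hx.extNorm_eq, toReal_enorm]
  · have htop : B.extNorm (kernelOp mu01 K (eabs f)) = ⊤ := not_not.1 fun hne =>
      h (BFS.exists_represents hne)
    push Not at h
    simp [h, realNorm, BFS.kernelNorm, htop]

variable {B K}

theorem kernelNorm_one_ne_top (h : memTK B K ((Set.Icc (0 : ℝ) 1).indicator fun _ => 1)) :
    B.kernelNorm mu01 K 1 ≠ ⊤ := by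
  have hae : eabs ((Set.Icc (0 : ℝ) 1).indicator fun _ => 1) =ᵐ[mu01] 1 := by
    filter_upwards [ae_restrict_mem measurableSet_Icc] with s hs
    simp [eabs, hs]
  rw [memTK_eq] at h
  rw [BFS.kernelNorm, ← (kernelOp_mono hae.le).antisymm (kernelOp_mono hae.symm.le)]
  exact h.2

end UnitInterval

/-- if `X` is a reflexive rearrangement invariant space on `[0,1]` with the
weak Banach-Saks property and `K ≥ 0` is a measurable kernel with `T_K(χ_{[0,1]}) ∈ X`,
then the optimal domain `[T_K,X]` has both the subsequence splitting property and the weak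
Banach-Saks property. -/
theorem statement6
    {X : Type*} [NormedAddCommGroup X] [NormedSpace ℝ X] [CompleteSpace X]
    (B : BFS ℝ mu01 X) (hRI : B.RI)
    (hrefl : Function.Surjective (NormedSpace.inclusionInDoubleDual ℝ X))
    (hWBS : WeakBanachSaks X)
    (K : ℝ → ℝ → ℝ≥0∞) (hK : Measurable (Function.uncurry K))
    (hKone : memTK B K ((Set.Icc (0 : ℝ) 1).indicator fun _ => 1)) :
    HasSSP mu01 (memTK B K) (nrmTK B K) ∧ HasWBS (memTK B K) (nrmTK B K) := by
  rw [memTK_eq, nrmTK_eq]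
  exact statement6_general B (hRI.ssp hrefl) hrefl hWBS hK (kernelNorm_one_ne_top hKone)

end Paper
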